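/- arXiv:2210.11081 — 3 statements merged into one kernel-verified Lean document; each statement's English description precedes it below -/
import Mathlib

section
/- Let G be a finite simple graph on n vertices whose complement has at most 5 edges. Then mlt(G) = gcr(G) and gcr(G) ≥ n − 2. -/
/-!
Write `n` for the number of vertices, `H` for the complement of `G` and `d = n - 1 - k`. The stress
matrices of a framework in `ℝ^d` in general position are exactly the matrices `g S gᵀ`, where the
columns of `g` form a basis of the affine dependencies (a Gale dual: one vector in `ℝ^k` per vertex,
with sum zero) and `S` is symmetric of size `k`, such that `g i ⬝ᵥ S *ᵥ g j = 0` for every edge `ij`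
of `H`. The PSD condition on the stress matrix is that on `S`. So the edges of `H` are linear
conditions on a small quadratic form.

By `mlt_eq_and_gcr_eq`, both thresholds equal `D + 1` once `G` is `D`-independent and some generic
framework in `ℝ^(D - 1)` has a nonzero PSD stress. Here `D` is `n - 1` if `H` has no edge, `n - 2`
if `H` is a nonempty star or two disjoint edges, and `n - 3` otherwise.

* Independence. By `isIndepGraph_of_config` a single configuration suffices, and any Gale dual can
  be prescribed (`isIndepGraph_of_rep`). For `k = 2` there are three unknown entries in `S`, and `H`
  contains one of four subgraphs with three edges whose conditions kill them
  (`SimpleGraph.star_or_two_edges_or_three_edges`).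
* PSD stresses, `k = 3`. If two vertices cover `H`, a dependency vanishing on them gives a stress of
  rank one. If `H` is a star and two further edges, or a four-cycle and a further edge, then a
  positive combination of two rank one forms works (`hasPSDStress_of_two_covers`). Otherwise `H`
  lies in a split five-cycle or in a triangle with two further edges
  (`FiveEdges.classification`, `cases_of_card_le_five`). These have explicit orthogonal
  representations in `ℝ³` with sum zero, for which `S = 1` works. Genericity is obtained by
  perturbation: the conditions are transversal, so `S` can be corrected to a nearby positive
  definite matrix (`hasPSDStress_of_rep`).
-/

/-!
Common rigidity-theoretic definitions, following the paper
"Computing maximum likelihood thresholds using graph rigidity".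
-/

open scoped BigOperators

section Defs

variable {V : Type*}

/-- A configuration in `ℝ^d` is *generic* if the collection of all of its coordinates
is algebraically independent over `ℚ`. -/
def Generic {d : ℕ} (p : V → EuclideanSpace ℝ (Fin d)) : Prop :=
  AlgebraicIndependent ℚ (fun vi : V × Fin d => p vi.1 vi.2)

/-- `ω` is an equilibrium stress of the framework `(G, p)`: it is symmetric, supported on
the edges of `G`, and satisfies the equilibrium condition at every vertex. -/
def IsEqStress [Fintype V] (G : SimpleGraph V) {d : ℕ}
    (p : V → EuclideanSpace ℝ (Fin d)) (ω : V → V → ℝ) : Prop :=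
  (∀ i j, ω i j = ω j i) ∧
  (∀ i j, ¬ G.Adj i j → ω i j = 0) ∧
  (∀ i, ∑ j, ω i j • (p j - p i) = 0)

/-- The stress matrix associated to a stress `ω`:  off-diagonal entries are `-ω i j`
(which vanish off the edges of the graph) and the diagonal entry at `i` is `∑ k, ω i k`. -/
def stressMatrix [Fintype V] [DecidableEq V] (ω : V → V → ℝ) : Matrix V V ℝ :=
  fun i j => if i = j then ∑ k, ω i k else - ω i j

/-- The maximum likelihood threshold of `G` (via its rigidity-theoretic characterization):
`d + 1` where `d` is the smallest dimension in which no generic framework `(G, p)` supports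
a nonzero PSD equilibrium stress. -/
noncomputable def mlt [Fintype V] [DecidableEq V] (G : SimpleGraph V) : ℕ :=
  sInf {d : ℕ | ∀ p : V → EuclideanSpace ℝ (Fin d), Generic p →
    ∀ ω : V → V → ℝ, IsEqStress G p ω → (stressMatrix ω).PosSemidef → ω = 0} + 1

/-- The generic completion rank of `G`: `d + 1` where `d` is the smallest dimension in
which no generic framework `(G, p)` supports a nonzero equilibrium stress. -/
noncomputable def gcr [Fintype V] (G : SimpleGraph V) : ℕ :=
  sInf {d : ℕ | ∀ p : V → EuclideanSpace ℝ (Fin d), Generic p →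
    ∀ ω : V → V → ℝ, IsEqStress G p ω → ω = 0} + 1

/-- Two frameworks `(G, p)` and `(G, q)` are equivalent: corresponding edge lengths agree. -/
def FrameworkEquiv {d : ℕ} (G : SimpleGraph V) (p q : V → EuclideanSpace ℝ (Fin d)) : Prop :=
  ∀ ⦃u v⦄, G.Adj u v → dist (p u) (p v) = dist (q u) (q v)

/-- Two configurations are congruent: related by a Euclidean isometry of `ℝ^d`. -/
def FrameworkCongruent {d : ℕ} (p q : V → EuclideanSpace ℝ (Fin d)) : Prop :=
  ∃ T : EuclideanSpace ℝ (Fin d) → EuclideanSpace ℝ (Fin d), Isometry T ∧ q = T ∘ p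

/-- A framework is globally rigid if every equivalent framework is congruent to it. -/
def GloballyRigidFramework {d : ℕ} (G : SimpleGraph V)
    (p : V → EuclideanSpace ℝ (Fin d)) : Prop :=
  ∀ q : V → EuclideanSpace ℝ (Fin d), FrameworkEquiv G p q → FrameworkCongruent p q

/-- A framework is rigid if every equivalent framework in some neighborhood of `p`
is congruent to it. -/
def RigidFramework {d : ℕ} (G : SimpleGraph V)
    (p : V → EuclideanSpace ℝ (Fin d)) : Prop :=
  ∃ U ∈ nhds p, ∀ q ∈ U, FrameworkEquiv G p q → FrameworkCongruent p q

/-- A graph is `d`-rigid if every generic framework in `ℝ^d` is rigid. -/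
def IsRigidGraph (d : ℕ) (G : SimpleGraph V) : Prop :=
  ∀ p : V → EuclideanSpace ℝ (Fin d), Generic p → RigidFramework G p

/-- A graph is globally `d`-rigid if every generic framework in `ℝ^d` is globally rigid. -/
def IsGloballyRigidGraph (d : ℕ) (G : SimpleGraph V) : Prop :=
  ∀ p : V → EuclideanSpace ℝ (Fin d), Generic p → GloballyRigidFramework G p

/-- A graph is `d`-independent if the rows of the rigidity matrix `R(G, p)` are linearly
independent for every generic `p`; equivalently (linear dependencies among the rows of
the rigidity matrix are exactly the equilibrium stresses), no generic framework in `ℝ^d`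
supports a nonzero equilibrium stress. -/
def IsIndepGraph [Fintype V] (d : ℕ) (G : SimpleGraph V) : Prop :=
  ∀ p : V → EuclideanSpace ℝ (Fin d), Generic p →
    ∀ ω : V → V → ℝ, IsEqStress G p ω → ω = 0

/-- A graph is a `d`-circuit if it is not `d`-independent but every proper subgraph is. -/
def IsCircuitGraph [Fintype V] (d : ℕ) (G : SimpleGraph V) : Prop :=
  ¬ IsIndepGraph d G ∧ ∀ H : SimpleGraph V, H < G → IsIndepGraph d H

/-- Vertex connectivity at least `k`: more than `k` vertices, and removing any fewer
than `k` vertices leaves a connected graph. -/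
def IsKConnected [Fintype V] (k : ℕ) (G : SimpleGraph V) : Prop :=
  k < Fintype.card V ∧ ∀ S : Set V, S.ncard < k → (G.induce Sᶜ).Connected

/-- `i(X)`: the number of edges of `G` with both endpoints in `X`. -/
noncomputable def edgesWithin (G : SimpleGraph V) (X : Set V) : ℕ :=
  {e ∈ G.edgeSet | ∀ v ∈ e, v ∈ X}.ncard

/-- `d(X, Y)`: the number of edges of `G` with one endpoint in `X \ Y` and the other
in `Y \ X`. -/
noncomputable def crossEdges (G : SimpleGraph V) (X Y : Set V) : ℕ :=
  {e ∈ G.edgeSet | ∃ u ∈ X \ Y, ∃ v ∈ Y \ X, e = s(u, v)}.ncard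

/-- `G` is `(3,6)`-sparse. -/
def Sparse36 (G : SimpleGraph V) : Prop :=
  ∀ X : Set V, 3 ≤ X.ncard → edgesWithin G X ≤ 3 * X.ncard - 6

/-- `X` is 3-critical in `G`. -/
def ThreeCritical (G : SimpleGraph V) (X : Set V) : Prop :=
  3 ≤ X.ncard ∧ edgesWithin G X = 3 * X.ncard - 6

/-- `G'` (on vertex set `Option V`, with new vertex `none`) is a `d`-dimensional
1-extension of `G`: an edge `xy` of `G` is deleted and the new vertex is joined to
`x`, `y` and `d - 1` further vertices. -/
def IsOneExtension [DecidableEq V] (d : ℕ) (G : SimpleGraph V)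
    (G' : SimpleGraph (Option V)) : Prop :=
  ∃ (x y : V) (D : Finset V), G.Adj x y ∧ x ∉ D ∧ y ∉ D ∧ D.card = d - 1 ∧
    (∀ u v : V, G'.Adj (some u) (some v) ↔
      (G.Adj u v ∧ ¬((u = x ∧ v = y) ∨ (u = y ∧ v = x)))) ∧
    (∀ u : V, G'.Adj (some u) none ↔ (u = x ∨ u = y ∨ u ∈ D))

end Defs

open Matrix

/-! ### Generic configurations -/

/-- A transcendence basis of `ℝ` over `ℚ` is infinite, since otherwise `ℝ` would be countable. -/
theorem exists_algebraicIndependent_real (ι : Type*) [Finite ι] :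
    ∃ t : ι → ℝ, AlgebraicIndependent ℚ t := by
  obtain ⟨κ, x, hx⟩ := exists_isTranscendenceBasis' ℚ ℝ
  have hinf : Infinite κ := by
    by_contra hfin
    rw [not_infinite_iff_finite] at hfin
    have hK : Algebra.IsAlgebraic (Algebra.adjoin ℚ (Set.range x)) ℝ := hx.isAlgebraic
    have h1 := Algebra.IsAlgebraic.cardinalMk_le_max (Algebra.adjoin ℚ (Set.range x)) ℝ
    have h2 : Countable (Algebra.adjoin ℚ (Set.range x)) := by
      have : Countable (MvPolynomial κ ℚ) := by
        have h4 := MvPolynomial.cardinalMk_le_max_lift (σ := κ) (R := ℚ)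
        rw [← Cardinal.mk_le_aleph0_iff]
        refine h4.trans ?_
        simp
      exact hx.1.aevalEquiv.symm.injective.countable
    have h3 : Cardinal.mk ℝ ≤ Cardinal.aleph0 := h1.trans (by simp)
    exact absurd h3 (not_le.mpr (by rw [Cardinal.mk_real]; exact Cardinal.aleph0_lt_continuum))
  obtain ⟨n, ⟨e⟩⟩ := Finite.exists_equiv_fin ι
  exact ⟨x ∘ fun i => Infinite.natEmbedding κ (e i : ℕ), hx.1.comp _ fun i j h =>
    e.injective (Fin.val_injective ((Infinite.natEmbedding κ).injective h))⟩

theorem AlgebraicIndependent.add_rat {ι : Type*} {t : ι → ℝ}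
    (ht : AlgebraicIndependent ℚ t) (s : ι → ℚ) :
    AlgebraicIndependent ℚ (fun i => t i + s i) := by
  rw [algebraicIndependent_iff_injective_aeval] at ht ⊢
  have hcomp : ∀ P : MvPolynomial ι ℚ, MvPolynomial.aeval (fun i => t i + (s i : ℝ)) P =
      MvPolynomial.aeval t
        (MvPolynomial.bind₁ (fun i => MvPolynomial.X i + MvPolynomial.C (s i)) P) := by
    intro P
    rw [MvPolynomial.aeval_bind₁]
    congr 1
    simp
  have hinj : Function.Injective
      (MvPolynomial.bind₁ (fun i => (MvPolynomial.X i + MvPolynomial.C (s i) :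
        MvPolynomial ι ℚ))) := by
    refine Function.LeftInverse.injective
      (g := MvPolynomial.bind₁ (fun i => MvPolynomial.X i - MvPolynomial.C (s i))) ?_
    intro P
    rw [← AlgHom.comp_apply, MvPolynomial.bind₁_comp_bind₁]
    conv_rhs => rw [← AlgHom.id_apply (R := ℚ) P]
    congr 1
    ext i
    simp
  intro P Q hPQ
  simp only [hcomp] at hPQ
  exact hinj (ht hPQ)

/-- Generic configurations are dense: so are the rational translates of a fixed one. -/
theorem exists_generic_mem_of_mem_nhds {V : Type*} [Fintype V] {d : ℕ}
    (p₀ : V → EuclideanSpace ℝ (Fin d)) {U : Set (V → EuclideanSpace ℝ (Fin d))}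
    (hU : U ∈ nhds p₀) : ∃ p ∈ U, Generic p := by
  obtain ⟨t, ht⟩ := exists_algebraicIndependent_real (V × Fin d)
  have hdense : Dense (Set.range fun s : V × Fin d → ℚ => fun v => t v + (s v : ℝ)) := by
    have h1 : DenseRange (fun s : V × Fin d → ℚ => fun v => (s v : ℝ)) :=
      DenseRange.piMap fun _ => Rat.denseRange_cast
    exact (Homeomorph.addLeft t).surjective.denseRange.comp h1 (Homeomorph.addLeft t).continuous
  let Φ : (V × Fin d → ℝ) → (V → EuclideanSpace ℝ (Fin d)) :=
    fun x v => WithLp.toLp 2 fun c => x (v, c)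
  have hΦ : Continuous Φ := by
    refine continuous_pi fun v => ?_
    exact (PiLp.continuous_toLp 2 _).comp (continuous_pi fun c => continuous_apply _)
  have h0 : Φ (fun v => p₀ v.1 v.2) = p₀ := rfl
  have hU' : Φ ⁻¹' U ∈ nhds (fun v : V × Fin d => p₀ v.1 v.2) :=
    hΦ.continuousAt.preimage_mem_nhds (by rwa [h0])
  obtain ⟨_, ⟨s, rfl⟩, hs⟩ := hdense.inter_nhds_nonempty hU'
  exact ⟨_, hs, ht.add_rat s⟩

/-! ### Stresses from affine dependencies -/

theorem isEqStress_balance_iff {V : Type*} [Fintype V] {d : ℕ}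
    (p : V → EuclideanSpace ℝ (Fin d)) (ω : V → V → ℝ) (i : V) :
    ∑ j, ω i j • (p j - p i) = 0 ↔ ∀ c, ∑ j, ω i j * (p j c - p i c) = 0 := by
  constructor
  · intro h c
    have := congrArg (fun x : EuclideanSpace ℝ (Fin d) => x c) h
    simpa using this
  · intro h
    ext c
    simpa using h c

/-- Some generic framework of `G` in `ℝ^d` carries a nonzero PSD equilibrium stress. -/
def HasPSDStress {V : Type*} [Fintype V] [DecidableEq V] (G : SimpleGraph V) (d : ℕ) : Prop :=
  ∃ p : V → EuclideanSpace ℝ (Fin d), Generic p ∧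
    ∃ ω : V → V → ℝ, IsEqStress G p ω ∧ (stressMatrix ω).PosSemidef ∧ ω ≠ 0

/-- `g` records affine dependencies of the configuration `p`: each column `i ↦ g i a` has sum
zero and annihilates the coordinates of `p`. A Gale dual of `p` is such a `g` whose columns form a
basis of all affine dependencies. -/
def IsDependency {V : Type*} [Fintype V] {d k : ℕ} (p : V → EuclideanSpace ℝ (Fin d))
    (g : V → Fin k → ℝ) : Prop :=
  (∀ a, ∑ i, g i a = 0) ∧ ∀ a c, ∑ i, g i a * p i c = 0

section
variable {V : Type*} [Fintype V] [DecidableEq V]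

/-- If `g` is a family of affine dependencies of `p` and `S` is positive semidefinite, then
`Ω = g S gᵀ` is positive semidefinite with the constants and the coordinates of `p` in its kernel.
It is the stress matrix of a stress of `(G, p)` as soon as its entries at non-edges of `G`
vanish. -/
theorem exists_stress_of_dependency {G : SimpleGraph V} {d k : ℕ}
    {p : V → EuclideanSpace ℝ (Fin d)} {g : V → Fin k → ℝ} (hg : IsDependency p g)
    {S : Matrix (Fin k) (Fin k) ℝ} (hS : S.PosSemidef)
    (hz : ∀ i j, Gᶜ.Adj i j → g i ⬝ᵥ S *ᵥ g j = 0) (hne : ∃ i, g i ⬝ᵥ S *ᵥ g i ≠ 0) :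
    ∃ ω : V → V → ℝ, IsEqStress G p ω ∧ (stressMatrix ω).PosSemidef ∧ ω ≠ 0 := by
  obtain ⟨hg1, hg2⟩ := hg
  let B : Matrix V (Fin k) ℝ := Matrix.of g
  let Ω : Matrix V V ℝ := B * S * Bᴴ
  have hΩ : Ω.PosSemidef := hS.mul_mul_conjTranspose_same B
  have hent : ∀ i j, Ω i j = g i ⬝ᵥ S *ᵥ g j := by
    intro i j
    simp only [Ω]
    rw [Matrix.dotProduct_mulVec, Matrix.mul_apply, dotProduct]
    simp [B, Matrix.mul_apply, vecMul, dotProduct]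
  have hsymm : ∀ i j, Ω i j = Ω j i := fun i j => by
    have := hΩ.isHermitian.apply i j
    simpa using this.symm
  have hker : ∀ x : V → ℝ, (∀ a, ∑ i, g i a * x i = 0) → ∀ i, ∑ j, Ω i j * x j = 0 := by
    intro x hx i
    have h1 : Bᴴ *ᵥ x = 0 := by
      ext a
      simpa [B, mulVec, dotProduct] using hx a
    have h2 : Ω *ᵥ x = 0 := by
      simp only [Ω, ← Matrix.mulVec_mulVec, h1, Matrix.mulVec_zero]
    simpa [mulVec, dotProduct] using congrFun h2 i
  have hrow : ∀ i, ∑ j, Ω i j = 0 := by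
    intro i
    simpa using hker (fun _ => 1) (by simpa using hg1) i
  let ω : V → V → ℝ := fun i j => if i = j then 0 else -Ω i j
  have hωrow : ∀ (x : V → ℝ) i, ∑ j, ω i j * x j = Ω i i * x i - ∑ j, Ω i j * x j := by
    intro x i
    rw [← Finset.add_sum_erase _ _ (Finset.mem_univ i),
      ← Finset.add_sum_erase (f := fun j => Ω i j * x j) _ (Finset.mem_univ i)]
    have : ∑ j ∈ Finset.univ.erase i, ω i j * x j =
        -∑ j ∈ Finset.univ.erase i, Ω i j * x j := by
      rw [← Finset.sum_neg_distrib]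
      refine Finset.sum_congr rfl fun j hj => ?_
      simp [ω, (Finset.ne_of_mem_erase hj).symm]
    rw [this]
    simp [ω]
  have hstress : stressMatrix ω = Ω := by
    ext i j
    by_cases hij : i = j
    · subst hij
      have := hωrow (fun _ => 1) i
      simp only [mul_one, hrow, sub_zero] at this
      simp [stressMatrix, this]
    · simp [stressMatrix, hij, ω]
  refine ⟨ω, ⟨?_, ?_, ?_⟩, hstress ▸ hΩ, ?_⟩
  · intro i j
    simp only [ω, hsymm i j, eq_comm]
  · intro i j hij
    by_cases h : i = j
    · simp [ω, h]
    · simp only [ω, if_neg h, hent, hz i j (by simp [h, hij]), neg_zero]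
  · intro i
    rw [isEqStress_balance_iff]
    intro c
    simp only [mul_sub, Finset.sum_sub_distrib, ← Finset.sum_mul]
    rw [hωrow (fun j => p j c) i, hker (fun j => p j c) (fun a => hg2 a c)]
    have := hωrow (fun _ => 1) i
    simp only [mul_one, hrow, sub_zero] at this
    rw [this]
    ring
  · rintro h0
    obtain ⟨i, hi⟩ := hne
    apply hi
    rw [← hent, ← hstress, h0]
    simp [stressMatrix]

omit [DecidableEq V] in
theorem exists_generic {d : ℕ} : ∃ p : V → EuclideanSpace ℝ (Fin d), Generic p := by
  obtain ⟨p, -, hp⟩ := exists_generic_mem_of_mem_nhds (0 : V → EuclideanSpace ℝ (Fin d))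
    Filter.univ_mem
  exact ⟨p, hp⟩

/-- If the non-edges of `G` are covered by a set `C` of vertices small enough for the points
outside `C` to be affinely dependent, then a single dependency `w` of these points gives the rank
one stress matrix `w wᵀ`. -/
theorem hasPSDStress_of_cover {G : SimpleGraph V} {d : ℕ} (C : Finset V)
    (hC : ∀ i j, Gᶜ.Adj i j → i ∈ C ∨ j ∈ C) (hcard : C.card + d + 1 < Fintype.card V) :
    HasPSDStress G d := by
  obtain ⟨p, hp⟩ := exists_generic (V := V) (d := d)
  refine ⟨p, hp, ?_⟩
  let π : V → (V → ℝ) →ₗ[ℝ] ℝ := fun i => LinearMap.proj i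
  let f : (V → ℝ) →ₗ[ℝ] (C → ℝ) × ℝ × (Fin d → ℝ) :=
    (LinearMap.pi fun c : C => π c).prod
      ((∑ i, π i).prod (LinearMap.pi fun c => ∑ i, (p i c) • π i))
  have hker : LinearMap.ker f ≠ ⊥ := by
    apply LinearMap.ker_ne_bot_of_finrank_lt
    simp
    omega
  obtain ⟨w, hw, hw0⟩ := Submodule.exists_mem_ne_zero_of_ne_bot hker
  have hw' : (∀ c ∈ C, w c = 0) ∧ ∑ i, w i = 0 ∧ ∀ c, ∑ i, p i c * w i = 0 := by
    rw [LinearMap.mem_ker] at hw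
    simp only [f, π, LinearMap.prod_apply, Function.prod_apply, Prod.mk_eq_zero] at hw
    refine ⟨fun c hc => ?_, ?_, fun c => ?_⟩
    · simpa using congrFun hw.1 ⟨c, hc⟩
    · simpa using hw.2.1
    · simpa using congrFun hw.2.2 c
  obtain ⟨i₀, hi₀⟩ : ∃ i, w i ≠ 0 := by
    by_contra! h
    exact hw0 (funext h)
  refine exists_stress_of_dependency (k := 1) (g := fun i _ => w i) (S := 1) ⟨fun _ => hw'.2.1,
    fun _ c => by simpa [mul_comm] using hw'.2.2 c⟩ PosSemidef.one ?_ ⟨i₀, ?_⟩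
  · intro i j hij
    rcases hC i j hij with h | h <;> simp [dotProduct, hw'.1 _ h]
  · simpa [dotProduct] using hi₀

/-- Forgetting a coordinate preserves both genericity and the stress. -/
theorem HasPSDStress.pred {G : SimpleGraph V} {d : ℕ} (h : HasPSDStress G (d + 1)) :
    HasPSDStress G d := by
  obtain ⟨p, hp, ω, ⟨h1, h2, h3⟩, hpsd, hne⟩ := h
  refine ⟨fun v => WithLp.toLp 2 fun c => p v c.castSucc, ?_, ω, ⟨h1, h2, fun i => ?_⟩, hpsd, hne⟩
  · exact hp.comp (fun x : V × Fin d => (x.1, x.2.castSucc)) fun x y hxy => by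
      simpa [Prod.ext_iff] using hxy
  · rw [isEqStress_balance_iff]
    intro c
    exact (isEqStress_balance_iff p ω i).1 (h3 i) c.castSucc

theorem HasPSDStress.mono {G : SimpleGraph V} {d e : ℕ} (h : HasPSDStress G e) (hde : d ≤ e) :
    HasPSDStress G d := by
  induction e, hde using Nat.le_induction with
  | base => exact h
  | succ e _ ih => exact ih h.pred

/-- `IsIndepGraph D G` says `D` is large enough for both thresholds; a PSD stress just below
`D` shows it is the smallest such dimension for both. -/
theorem mlt_eq_and_gcr_eq {G : SimpleGraph V} {D : ℕ} (hD : IsIndepGraph D G)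
    (h : ∀ d, D = d + 1 → HasPSDStress G d) : mlt G = D + 1 ∧ gcr G = D + 1 := by
  have hlow : ∀ d < D, HasPSDStress G d := by
    intro d hd
    obtain ⟨e, rfl⟩ : ∃ e, D = e + 1 := ⟨D - 1, by omega⟩
    exact (h e rfl).mono (by omega)
  constructor
  · unfold mlt
    congr 1
    refine IsLeast.csInf_eq ⟨fun p hp ω hω _ => hD p hp ω hω, fun d hd => ?_⟩
    by_contra! hlt
    obtain ⟨p, hp, ω, hω, hpsd, hne⟩ := hlow d hlt
    exact hne (hd p hp ω hω hpsd)
  · unfold gcr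
    congr 1
    refine IsLeast.csInf_eq ⟨hD, fun d hd => ?_⟩
    by_contra! hlt
    obtain ⟨p, hp, ω, hω, hpsd, hne⟩ := hlow d hlt
    exact hne (hd p hp ω hω)
end

/-! ### Configurations with prescribed affine dependencies -/

section
variable {V : Type*} [Fintype V] [DecidableEq V]

omit [DecidableEq V] in
/-- Every `g₀` with zero column sums is a family of affine dependencies of some configuration,
which may be taken centred with orthonormal coordinate vectors. -/
theorem exists_config_of_dependency {d k : ℕ} (hcard : Fintype.card V = d + 1 + k)
    (g₀ : V → Fin k → ℝ) (hsum : ∀ a, ∑ i, g₀ i a = 0) :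
    ∃ p : V → EuclideanSpace ℝ (Fin d), IsDependency p g₀ ∧ (∀ c, ∑ i, p i c = 0) ∧
      ∀ c c', ∑ i, p i c * p i c' = if c = c' then 1 else 0 := by
  let b : Unit ⊕ Fin k → EuclideanSpace ℝ V :=
    Sum.elim (fun _ => WithLp.toLp 2 fun _ => 1) (fun a => WithLp.toLp 2 fun i => g₀ i a)
  let W : Submodule ℝ (EuclideanSpace ℝ V) := Submodule.span ℝ (Set.range b)
  have hW : Module.finrank ℝ W ≤ 1 + k := by
    refine (finrank_range_le_card b).trans ?_
    simp
  have hWo : d ≤ Module.finrank ℝ Wᗮ := by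
    have := Submodule.finrank_add_finrank_orthogonal W
    rw [finrank_euclideanSpace] at this
    omega
  let e := stdOrthonormalBasis ℝ Wᗮ
  let q : Fin d → EuclideanSpace ℝ V := fun c => (e (Fin.castLE hWo c) : EuclideanSpace ℝ V)
  have horth : ∀ x c, inner ℝ (b x) (q c) = 0 := fun x c =>
    (Submodule.mem_orthogonal W _).1 (e (Fin.castLE hWo c)).2 _
      (Submodule.subset_span ⟨x, rfl⟩)
  refine ⟨fun i => WithLp.toLp 2 fun c => q c i, ⟨hsum, fun a c => ?_⟩, fun c => ?_,
    fun c c' => ?_⟩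
  · have := horth (Sum.inr a) c
    simpa [b, PiLp.inner_apply, mul_comm] using this
  · have := horth (Sum.inl ()) c
    simpa [b, PiLp.inner_apply] using this
  · have h1 := orthonormal_iff_ite.1 e.orthonormal (Fin.castLE hWo c) (Fin.castLE hWo c')
    rw [Submodule.coe_inner] at h1
    simp only [PiLp.inner_apply, Fin.castLE_inj] at h1
    simp only [RCLike.inner_apply, conj_trivial] at h1
    rw [← h1]
    exact Finset.sum_congr rfl fun i _ => mul_comm _ _

omit [DecidableEq V] in
/-- A Gale dual depending continuously on the configuration: `g₀` is projected onto the space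
of affine dependencies of `p`, the inverse Gram matrix being replaced by the adjugate so that
the formula makes sense for every `p`. -/
theorem exists_continuous_dependency {d k : ℕ} (hcard : Fintype.card V = d + 1 + k)
    (g₀ : V → Fin k → ℝ) (hsum : ∀ a, ∑ i, g₀ i a = 0) :
    ∃ (p₀ : V → EuclideanSpace ℝ (Fin d))
      (g : (V → EuclideanSpace ℝ (Fin d)) → V → Fin k → ℝ),
      Continuous g ∧ (∀ p, IsDependency p (g p)) ∧ g p₀ = g₀ := by
  obtain ⟨p₀, hdep, hcen, horth⟩ := exists_config_of_dependency hcard g₀ hsum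
  let P : (V → EuclideanSpace ℝ (Fin d)) → Matrix V (Unit ⊕ Fin d) ℝ :=
    fun p => Matrix.of fun i => Sum.elim (fun _ => 1) (fun c => p i c)
  have hP : Continuous P := by
    refine continuous_matrix fun i x => ?_
    rcases x with _ | c
    · exact continuous_const
    · simp only [P, Matrix.of_apply, Sum.elim_inr]
      fun_prop
  let B : Matrix V (Fin k) ℝ := Matrix.of g₀
  let N : (V → EuclideanSpace ℝ (Fin d)) → Matrix (Unit ⊕ Fin d) (Unit ⊕ Fin d) ℝ :=
    fun p => (P p)ᵀ * P p
  have hN : Continuous N := hP.matrix_transpose.matrix_mul hP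
  let g' : (V → EuclideanSpace ℝ (Fin d)) → Matrix V (Fin k) ℝ :=
    fun p => (N p).det • B - P p * ((N p).adjugate * ((P p)ᵀ * B))
  have hg' : Continuous g' :=
    (hN.matrix_det.smul continuous_const).sub (hP.matrix_mul
      (hN.matrix_adjugate.matrix_mul (hP.matrix_transpose.matrix_mul continuous_const)))
  have hPg : ∀ p, (P p)ᵀ * g' p = 0 := by
    intro p
    simp only [g', Matrix.mul_sub, Matrix.mul_smul]
    rw [← Matrix.mul_assoc (P p)ᵀ (P p), ← Matrix.mul_assoc (_ * _) (N p).adjugate]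
    rw [show (P p)ᵀ * P p = N p from rfl, Matrix.mul_adjugate, Matrix.smul_mul, Matrix.one_mul,
      sub_self]
  have hdep' : ∀ p, IsDependency p (Matrix.of.symm (g' p)) := by
    intro p
    refine ⟨fun a => ?_, fun a c => ?_⟩
    · have := congrFun (congrFun (hPg p) (Sum.inl ())) a
      simpa [Matrix.mul_apply, P] using this
    · have := congrFun (congrFun (hPg p) (Sum.inr c)) a
      simpa [Matrix.mul_apply, P, mul_comm] using this
  have hN0 : N p₀ = Matrix.diagonal
      (Sum.elim (fun _ => (Fintype.card V : ℝ)) (fun _ => 1)) := by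
    ext x y
    rcases x with _ | c <;> rcases y with _ | c' <;>
      simp [N, P, Matrix.mul_apply, hcen, horth, Matrix.diagonal_apply]
  have hdet : (N p₀).det ≠ 0 := by
    rw [hN0, Matrix.det_diagonal]
    have : (Fintype.card V : ℝ) ≠ 0 := by
      rw [hcard]; positivity
    simpa using this
  have hPB : (P p₀)ᵀ * B = 0 := by
    ext x a
    rcases x with _ | c
    · simpa [Matrix.mul_apply, P, B] using hdep.1 a
    · simpa [Matrix.mul_apply, P, B, mul_comm] using hdep.2 a c
  refine ⟨p₀, fun p i a => (N p₀).det⁻¹ * g' p i a, ?_, fun p => ⟨fun a => ?_, fun a c => ?_⟩, ?_⟩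
  · refine continuous_pi fun i => continuous_pi fun a => ?_
    exact continuous_const.mul (hg'.matrix_elem i a)
  · rw [← Finset.mul_sum]
    have : ∑ i, g' p i a = 0 := (hdep' p).1 a
    rw [this, mul_zero]
  · simp only [mul_assoc]
    rw [← Finset.mul_sum]
    have : ∑ i, g' p i a * p i c = 0 := (hdep' p).2 a c
    rw [this, mul_zero]
  · funext i a
    simp only [g', hPB, Matrix.mul_zero, sub_zero, Matrix.smul_apply, smul_eq_mul]
    rw [← mul_assoc, inv_mul_cancel₀ hdet, one_mul]
    rfl

omit [DecidableEq V] in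
/-- An open condition on the dependency matrix that holds at `g₀` holds for a dependency matrix
of some generic configuration. -/
theorem exists_generic_dependency {d k : ℕ} (hcard : Fintype.card V = d + 1 + k)
    (g₀ : V → Fin k → ℝ) (hsum : ∀ a, ∑ i, g₀ i a = 0) {Q : (V → Fin k → ℝ) → Prop}
    (hQ : ∀ᶠ g in nhds g₀, Q g) :
    ∃ (p : V → EuclideanSpace ℝ (Fin d)) (g : V → Fin k → ℝ),
      Generic p ∧ IsDependency p g ∧ Q g := by
  obtain ⟨p₀, g, hg, hdep, h0⟩ := exists_continuous_dependency hcard g₀ hsum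
  have : ∀ᶠ p in nhds p₀, Q (g p) := by
    have := hg.continuousAt (x := p₀)
    rw [ContinuousAt, h0] at this
    exact this.eventually hQ
  obtain ⟨p, hp, hgen⟩ := exists_generic_mem_of_mem_nhds p₀ this
  exact ⟨p, g p, hgen, hdep p, hp⟩

/-- Independence of `G` at one configuration of `ℝ^d` implies independence at every generic
one: the Gram determinant of the linear system defining equilibrium stresses is a
polynomial with rational coefficients in the coordinates of the configuration. -/
theorem isIndepGraph_of_config {G : SimpleGraph V} {d : ℕ}
    (p₀ : V → EuclideanSpace ℝ (Fin d))
    (h : ∀ ω : V → V → ℝ, IsEqStress G p₀ ω → ω = 0) : IsIndepGraph d G := by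
  classical
  let R := MvPolynomial (V × Fin d) ℚ
  let X : V × Fin d → R := MvPolynomial.X
  -- the rows express symmetry, vanishing on non-edges, and equilibrium
  let M : Matrix ((V × V) ⊕ (V × V) ⊕ (V × Fin d)) (V × V) R := Matrix.of fun r y =>
    Sum.elim (fun x => (if y = x then 1 else 0) - if y = x.swap then 1 else 0)
      (Sum.elim (fun x => if y = x ∧ ¬ G.Adj x.1 x.2 then 1 else 0)
        (fun x => if y.1 = x.1 then X (y.2, x.2) - X (x.1, x.2) else 0)) r
  let φ : (V → EuclideanSpace ℝ (Fin d)) → R →ₐ[ℚ] ℝ := fun p =>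
    MvPolynomial.aeval fun vi : V × Fin d => p vi.1 vi.2
  let Mp : (V → EuclideanSpace ℝ (Fin d)) → Matrix _ (V × V) ℝ := fun p => M.map (φ p)
  have hM : ∀ p (ω : V → V → ℝ),
      Mp p *ᵥ (fun y => ω y.1 y.2) = 0 ↔ IsEqStress G p ω := by
    intro p ω
    rw [funext_iff, Sum.forall, Sum.forall]
    unfold IsEqStress
    simp only [isEqStress_balance_iff]
    refine and_congr ?_ (and_congr ?_ ?_)
    · rw [Prod.forall]
      refine forall_congr' fun i => forall_congr' fun j => ?_
      simp only [Mp, M, mulVec, dotProduct, Matrix.map_apply, Matrix.of_apply, Sum.elim_inl,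
        map_sub, apply_ite (φ p), map_one, map_zero, sub_mul, ite_mul, one_mul, zero_mul,
        Finset.sum_sub_distrib, Finset.sum_ite_eq', Finset.mem_univ, if_true,
        Pi.zero_apply, Prod.fst_swap, Prod.snd_swap, sub_eq_zero]
    · rw [Prod.forall]
      refine forall_congr' fun i => forall_congr' fun j => ?_
      by_cases hij : G.Adj i j <;>
      simp [Mp, M, mulVec, dotProduct, Matrix.map_apply, hij, apply_ite (φ p)]
    · rw [Prod.forall]
      refine forall_congr' fun i => forall_congr' fun c => ?_
      simp only [Mp, M, mulVec, dotProduct, Matrix.map_apply, Matrix.of_apply, Sum.elim_inr,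
        apply_ite (φ p), map_sub, map_zero, Fintype.sum_prod_type, ite_mul, zero_mul,
        Pi.zero_apply]
      rw [Finset.sum_eq_single i (fun b _ hb => by simp [hb]) (by simp)]
      have hX : ∀ x, φ p (X x) = p x.1 x.2 := fun x => MvPolynomial.aeval_X _ _
      simp only [hX, mul_comm, if_true]
  have hdet : ∀ p, φ p (Mᵀ * M).det = ((Mp p)ᵀ * Mp p).det := by
    intro p
    have := RingHom.map_det (φ p : R →+* ℝ) (Mᵀ * M)
    simp only [RingHom.mapMatrix_apply, Matrix.map_mul] at this
    exact this
  have hinj : ∀ p, ((Mp p)ᵀ * Mp p).det ≠ 0 ↔ ∀ ω : V → V → ℝ, IsEqStress G p ω → ω = 0 := by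
    intro p
    have hk := Matrix.ker_mulVecLin_transpose_mul_self (Mp p)
    have hk' : ∀ x, ((Mp p)ᵀ * Mp p) *ᵥ x = 0 ↔ Mp p *ᵥ x = 0 := fun x => by
      have := SetLike.ext_iff.1 hk x
      rwa [LinearMap.mem_ker, LinearMap.mem_ker, Matrix.mulVecLin_apply,
        Matrix.mulVecLin_apply] at this
    rw [ne_eq, ← Matrix.exists_mulVec_eq_zero_iff]
    simp only [hk']
    push Not
    constructor
    · intro hx ω hω
      by_contra hne
      refine hx (fun y => ω y.1 y.2) (fun h0 => hne ?_) ((hM p ω).2 hω)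
      funext i j
      exact congrFun h0 (i, j)
    · intro hω x hx h0
      refine hx ?_
      have := hω (fun i j => x (i, j)) ((hM p _).1 h0)
      funext y
      exact congrFun (congrFun this y.1) y.2
  have hne : (Mᵀ * M).det ≠ 0 := by
    intro h0
    refine (hinj p₀).2 h ?_
    rw [← hdet, h0, map_zero]
  intro p hp
  refine (hinj p).1 ?_
  rw [← hdet]
  intro h0
  apply hne
  have h2 : Function.Injective (φ p) := algebraicIndependent_iff_injective_aeval.1 hp
  exact h2 (by rw [h0, map_zero])

end

/-! ### Independence from one configuration -/

section
variable {V : Type*} [Fintype V] [DecidableEq V]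

/-- A function in equilibrium with respect to `ω` is in the kernel of the stress matrix. -/
theorem stressMatrix_row {G : SimpleGraph V} {d : ℕ} {p : V → EuclideanSpace ℝ (Fin d)}
    {ω : V → V → ℝ} (hω : IsEqStress G p ω) (x : V → ℝ)
    (hx : ∀ i, ∑ j, ω i j * (x j - x i) = 0) (i : V) : ∑ j, stressMatrix ω i j * x j = 0 := by
  have hd : ω i i = 0 := hω.2.1 i i (by simp)
  have h1 := hx i
  rw [← Finset.add_sum_erase _ _ (Finset.mem_univ i)] at h1 ⊢
  have h2 : ∑ j ∈ Finset.univ.erase i, stressMatrix ω i j * x j =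
      -∑ j ∈ Finset.univ.erase i, ω i j * x j := by
    rw [← Finset.sum_neg_distrib]
    refine Finset.sum_congr rfl fun j hj => ?_
    simp [stressMatrix, (Finset.ne_of_mem_erase hj).symm]
  have h3 : ∑ k, ω i k = ∑ j ∈ Finset.univ.erase i, ω i j := by
    rw [← Finset.add_sum_erase _ _ (Finset.mem_univ i), hd, zero_add]
  rw [h2]
  simp only [stressMatrix, if_true, h3]
  simp only [mul_sub, Finset.sum_sub_distrib, ← Finset.sum_mul] at h1
  linarith

/-- The family `u`, placed at distinct vertices and extended by zero to the others. -/
theorem exists_of_rep {k M : ℕ} (r : Fin M → V) (hr : Function.Injective r)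
    (u : Fin M → Fin k → ℝ) (hsum : ∑ h, u h = 0) :
    ∃ g : V → Fin k → ℝ, (∀ h, g (r h) = u h) ∧ ∀ a, ∑ v, g v a = 0 := by
  refine ⟨fun v => ∑ h, if r h = v then u h else 0, fun h => by simp [hr.eq_iff], fun a => ?_⟩
  rw [← Finset.sum_apply, Finset.sum_comm]
  simp only [Finset.sum_ite_eq, Finset.mem_univ, if_true]
  rw [hsum]
  rfl

/-- A criterion for `d`-independence, dual to the rank condition on the rigidity matrix: the
vectors `u h`, placed at the vertices `r h` and completed by zero, form a Gale dual of some
configuration. Every stress matrix of that configuration is `g S gᵀ` for a symmetric `k × k`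
matrix `S`, and the non-edges of `G` give linear conditions on `S`. By hypothesis these conditions
force `S = 0`; that the `u h` contain the standard basis makes `g` of full rank. -/
theorem isIndepGraph_of_rep {G : SimpleGraph V} {d k M : ℕ} (hcard : Fintype.card V = d + 1 + k)
    (r : Fin M → V) (hr : Function.Injective r) (u : Fin M → Fin k → ℝ)
    (hsum : ∑ h, u h = 0) (s : Fin k → Fin M) (hs : ∀ t, u (s t) = Pi.single t 1)
    (hS : ∀ S : Matrix (Fin k) (Fin k) ℝ, S.IsSymm →
      (∀ h h', Gᶜ.Adj (r h) (r h') → u h ⬝ᵥ S *ᵥ u h' = 0) → S = 0) : IsIndepGraph d G := by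
  obtain ⟨g, hgr, hg0⟩ := exists_of_rep r hr u hsum
  have hgs : ∀ t t', g (r (s t)) t' = if t' = t then 1 else 0 := by
    intro t t'
    rw [hgr, hs, Pi.single_apply]
  obtain ⟨p, hdep, hcen, horth⟩ := exists_config_of_dependency hcard g hg0
  refine isIndepGraph_of_config p fun ω hω => ?_
  have gsum : ∀ e : Fin k → ℝ, ∑ v, ∑ t, e t * g v t = 0 := by
    intro e
    rw [Finset.sum_comm]
    simp only [← Finset.mul_sum, hg0, mul_zero, Finset.sum_const_zero]
  have gp : ∀ (e : Fin k → ℝ) x, ∑ v, p v x * ∑ t, e t * g v t = 0 := by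
    intro e x
    simp only [Finset.mul_sum]
    rw [Finset.sum_comm]
    refine Finset.sum_eq_zero fun t _ => ?_
    rw [← mul_zero (e t), ← hdep.2 t x, Finset.mul_sum]
    exact Finset.sum_congr rfl fun _ _ => by ring
  have psum : ∀ b : Fin d → ℝ, ∑ v, ∑ x, b x * p v x = 0 := by
    intro b
    rw [Finset.sum_comm]
    simp only [← Finset.mul_sum, hcen, mul_zero, Finset.sum_const_zero]
  have pp : ∀ (b : Fin d → ℝ) x, ∑ v, p v x * ∑ x', b x' * p v x' = b x := by
    intro b x
    simp only [Finset.mul_sum]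
    rw [Finset.sum_comm]
    have e1 : ∀ x', ∑ v, p v x * (b x' * p v x') = b x' * if x = x' then 1 else 0 := by
      intro x'
      rw [← horth, Finset.mul_sum]
      exact Finset.sum_congr rfl fun _ _ => by ring
    simp [e1]
  have hn : (Fintype.card V : ℝ) ≠ 0 := by
    rw [hcard]; positivity
  -- evaluation at the vertices `r (s t)` determines an affine dependency of `p`
  let π : V → (V → ℝ) →ₗ[ℝ] ℝ := fun i => LinearMap.proj i
  let f : (V → ℝ) →ₗ[ℝ] ℝ × (Fin d → ℝ) × (Fin k → ℝ) :=
    (∑ i, π i).prod ((LinearMap.pi fun c => ∑ i, (p i c) • π i).prod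
      (LinearMap.pi fun t => π (r (s t))))
  have hf : ∀ y, f y = (∑ i, y i, fun c => ∑ i, p i c * y i, fun t => y (r (s t))) := by
    intro y
    ext <;> simp [f, π]
  have hsurj : Function.Surjective f := by
    rintro ⟨a, b, c⟩
    let y₁ : V → ℝ := fun v => a / Fintype.card V + ∑ x, b x * p v x
    refine ⟨fun v => y₁ v + ∑ t, (c t - y₁ (r (s t))) * g v t, ?_⟩
    rw [hf]
    refine Prod.ext ?_ (Prod.ext (funext fun x => ?_) (funext fun t => ?_))
    · change ∑ v, (a / Fintype.card V + ∑ x, b x * p v x + _) = a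
      rw [Finset.sum_add_distrib, gsum, Finset.sum_add_distrib, psum]
      simp
      field_simp
    · change ∑ v, p v x * (a / Fintype.card V + ∑ x, b x * p v x + _) = b x
      simp only [mul_add (p _ x)]
      rw [Finset.sum_add_distrib, gp, Finset.sum_add_distrib, pp, ← Finset.sum_mul, hcen]
      simp
    · simp [hgs]
  have hinj : Function.Injective f := by
    rw [LinearMap.injective_iff_surjective_of_finrank_eq_finrank]
    · exact hsurj
    · simp; omega
  have hexp : ∀ y : V → ℝ, ∑ i, y i = 0 → (∀ c, ∑ i, p i c * y i = 0) →
      ∀ v, y v = ∑ t, y (r (s t)) * g v t := by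
    intro y h1 h2
    have : f y = f (fun v => ∑ t, y (r (s t)) * g v t) := by
      rw [hf, hf]
      refine Prod.ext ?_ (Prod.ext (funext fun x => ?_) (funext fun t => ?_))
      · exact h1.trans (gsum _).symm
      · exact (h2 x).trans (gp _ x).symm
      · simp [hgs]
    exact congrFun (hinj this)
  let Ω := stressMatrix ω
  have hsymm : ∀ i j, Ω i j = Ω j i := by
    intro i j
    by_cases h : i = j
    · rw [h]
    · simp [Ω, stressMatrix, h, Ne.symm h, hω.1 i j]
  have hrow : ∀ i v, Ω i v = ∑ t, Ω i (r (s t)) * g v t := by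
    intro i
    refine hexp (Ω i) ?_ fun c => ?_
    · simpa using stressMatrix_row hω (fun _ => 1) (by simp) i
    · simpa [mul_comm] using
        stressMatrix_row hω (fun j => p j c) (fun i => (isEqStress_balance_iff p ω i).1
          (hω.2.2 i) c) i
  let S : Matrix (Fin k) (Fin k) ℝ := Matrix.of fun t t' => Ω (r (s t)) (r (s t'))
  have hΩ : ∀ i j, Ω i j = g i ⬝ᵥ S *ᵥ g j := by
    intro i j
    rw [hrow, dotProduct_comm]
    simp only [dotProduct, mulVec, S, Matrix.of_apply, Finset.sum_mul]
    rw [Finset.sum_comm]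
    refine Finset.sum_congr rfl fun t _ => ?_
    rw [hsymm, hrow, Finset.sum_mul]
    refine Finset.sum_congr rfl fun t' _ => ?_
    rw [hsymm]
    ring
  have hS0 : S = 0 := by
    refine hS S (by ext t t'; exact hsymm _ _) fun h h' hadj => ?_
    rw [← hgr, ← hgr, ← hΩ]
    have hne := hadj.ne
    have : ¬ G.Adj (r h) (r h') := by
      rw [SimpleGraph.compl_adj] at hadj
      exact hadj.2
    simp [Ω, stressMatrix, hne, hω.2.1 _ _ this]
  funext i j
  by_cases hij : i = j
  · subst hij
    simpa using hω.2.1 i i (by simp)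
  · have := hΩ i j
    simpa [Ω, stressMatrix, hij, hS0] using this

end

/-! ### Complements forcing independence -/

section
variable {V : Type*} [Fintype V] [DecidableEq V] {G : SimpleGraph V} {d : ℕ}

theorem isIndepGraph_of_card (hcard : Fintype.card V = d + 1) : IsIndepGraph d G :=
  isIndepGraph_of_rep (k := 0) (M := 0) hcard Fin.elim0 (fun x => x.elim0) (fun x => x.elim0) rfl
    Fin.elim0 (fun x => x.elim0) (fun S _ _ => Subsingleton.elim S 0)

theorem isIndepGraph_of_adj (hcard : Fintype.card V = d + 1 + 1) {a b : V} (hab : Gᶜ.Adj a b) :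
    IsIndepGraph d G := by
  refine isIndepGraph_of_rep (k := 1) (M := 2) hcard ![a, b] ?_ ![![1], ![-1]] ?_ ![0] ?_ ?_
  · intro i j h
    have := hab.ne
    fin_cases i <;> fin_cases j <;> simp_all
  · ext t
    fin_cases t
    simp
  · intro t
    fin_cases t
    ext t
    fin_cases t
    simp
  · intro S hS h
    have := h 0 1 hab
    ext i j
    fin_cases i
    fin_cases j
    simpa [dotProduct, mulVec] using this

/-- The bilinear form of a symmetric two by two matrix. -/
theorem dotProduct_mulVec_two {S : Matrix (Fin 2) (Fin 2) ℝ} (hS : S.IsSymm) (x y : Fin 2 → ℝ) :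
    x ⬝ᵥ S *ᵥ y = S 0 0 * (x 0 * y 0) + S 0 1 * (x 0 * y 1 + x 1 * y 0) + S 1 1 * (x 1 * y 1) := by
  have h : S 1 0 = S 0 1 := hS.apply 0 1
  simp only [dotProduct, mulVec, Fin.sum_univ_two, h]
  ring

theorem eq_zero_of_symm_two {S : Matrix (Fin 2) (Fin 2) ℝ} (hS : S.IsSymm) (h0 : S 0 0 = 0)
    (h1 : S 0 1 = 0) (h2 : S 1 1 = 0) : S = 0 := by
  have h : S 1 0 = S 0 1 := hS.apply 0 1
  ext i j
  fin_cases i <;> fin_cases j <;> simp [h0, h1, h2, h]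

/-- On a Gale dual in `ℝ²` whose pairs at the three non-edges are multiples of `(e₁, e₁)`,
`(e₂, e₂)` and `(e₁, e₂)`, the three conditions are that the entries of `S` vanish. The same choice
is made for a path with three edges and for a path with two edges and a disjoint edge. -/
theorem isIndepGraph_of_three_disjoint (hcard : Fintype.card V = d + 1 + 2) {a b a' b' a'' b'' : V}
    (hd : [a, b, a', b', a'', b''].Nodup) (h₁ : Gᶜ.Adj a b) (h₂ : Gᶜ.Adj a' b')
    (h₃ : Gᶜ.Adj a'' b'') : IsIndepGraph d G := by
  refine isIndepGraph_of_rep (k := 2) (M := 6) hcard [a, b, a', b', a'', b''].get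
    (List.nodup_iff_injective_get.1 hd)
    ![![-2, 0], ![1, 0], ![0, -2], ![0, 1], ![1, 0], ![0, 1]] ?_ ![1, 3] ?_ ?_
  · ext t
    fin_cases t <;> simp [Fin.sum_univ_succ] <;> norm_num
  · intro t
    fin_cases t <;> ext t <;> fin_cases t <;> simp
  · intro S hS h
    have e₁ := h 0 1 h₁
    have e₂ := h 2 3 h₂
    have e₃ := h 4 5 h₃
    rw [dotProduct_mulVec_two hS] at e₁ e₂ e₃
    simp at e₁ e₂ e₃
    exact eq_zero_of_symm_two hS e₁ (by linarith) e₂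

theorem isIndepGraph_of_path (hcard : Fintype.card V = d + 1 + 2) {a b c e : V}
    (hd : [a, b, c, e].Nodup) (h₁ : Gᶜ.Adj a b) (h₂ : Gᶜ.Adj b c)
    (h₃ : Gᶜ.Adj c e) : IsIndepGraph d G := by
  refine isIndepGraph_of_rep (k := 2) (M := 4) hcard [a, b, c, e].get
    (List.nodup_iff_injective_get.1 hd)
    ![![-1, 0], ![1, 0], ![0, 1], ![0, -1]] ?_ ![1, 2] ?_ ?_
  · ext t
    fin_cases t <;> simp [Fin.sum_univ_succ]
  · intro t
    fin_cases t <;> ext t <;> fin_cases t <;> simp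
  · intro S hS h
    have e₁ := h 0 1 h₁
    have e₂ := h 1 2 h₂
    have e₃ := h 2 3 h₃
    rw [dotProduct_mulVec_two hS] at e₁ e₂ e₃
    simp at e₁ e₂ e₃
    exact eq_zero_of_symm_two hS e₁ e₂ e₃

/-- The vectors at the three vertices are `e₁`, `e₂` and `-(e₁ + e₂)`, the last being forced by the
sum condition. -/
theorem isIndepGraph_of_triangle (hcard : Fintype.card V = d + 1 + 2) {a b c : V}
    (h₁ : Gᶜ.Adj a b) (h₂ : Gᶜ.Adj a c) (h₃ : Gᶜ.Adj b c) : IsIndepGraph d G := by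
  have hd : [a, b, c].Nodup := by simp [h₁.ne, h₂.ne, h₃.ne]
  refine isIndepGraph_of_rep (k := 2) (M := 3) hcard [a, b, c].get
    (List.nodup_iff_injective_get.1 hd)
    ![![1, 0], ![0, 1], ![-1, -1]] ?_ ![0, 1] ?_ ?_
  · ext t
    fin_cases t <;> simp [Fin.sum_univ_succ]
  · intro t
    fin_cases t <;> ext t <;> fin_cases t <;> simp
  · intro S hS h
    have e₁ := h 0 1 h₁
    have e₂ := h 0 2 h₂
    have e₃ := h 1 2 h₃
    rw [dotProduct_mulVec_two hS] at e₁ e₂ e₃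
    simp at e₁ e₂ e₃
    exact eq_zero_of_symm_two hS (by linarith) e₁ (by linarith)

theorem isIndepGraph_of_cherry_edge (hcard : Fintype.card V = d + 1 + 2) {c a b x y : V}
    (hd : [c, a, b, x, y].Nodup) (h₁ : Gᶜ.Adj c a) (h₂ : Gᶜ.Adj c b)
    (h₃ : Gᶜ.Adj x y) : IsIndepGraph d G := by
  refine isIndepGraph_of_rep (k := 2) (M := 5) hcard [c, a, b, x, y].get
    (List.nodup_iff_injective_get.1 hd)
    ![![1, 0], ![-1, 0], ![0, -2], ![0, 1], ![0, 1]] ?_ ![0, 3] ?_ ?_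
  · ext t
    fin_cases t <;> simp [Fin.sum_univ_succ]
    norm_num
  · intro t
    fin_cases t <;> ext t <;> fin_cases t <;> simp
  · intro S hS h
    have e₁ := h 0 1 h₁
    have e₂ := h 0 2 h₂
    have e₃ := h 3 4 h₃
    rw [dotProduct_mulVec_two hS] at e₁ e₂ e₃
    simp at e₁ e₂ e₃
    exact eq_zero_of_symm_two hS e₁ e₂ e₃

end

/-! ### PSD stresses near orthogonal representations -/

/-- A symmetric matrix close enough to a scalar matrix `c` with `c ≥ 0` is positive semidefinite. -/
theorem posSemidef_of_near {k : ℕ} {S : Matrix (Fin k) (Fin k) ℝ} {c ε : ℝ} (hS : S.IsSymm)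
    (hε : ε * k ≤ c) (h : ∀ i j, |S i j - (c • (1 : Matrix (Fin k) (Fin k) ℝ)) i j| ≤ ε) :
    S.PosSemidef := by
  refine PosSemidef.of_dotProduct_mulVec_nonneg ?_ fun x => ?_
  · ext i j
    simpa using hS.apply i j
  let E := S - c • (1 : Matrix (Fin k) (Fin k) ℝ)
  have hE : S = c • 1 + E := by simp [E]
  have h1 : -(ε * k * ∑ i, x i ^ 2) ≤ x ⬝ᵥ E *ᵥ x := by
    have h2 : ∀ i j, -(ε * ((x i ^ 2 + x j ^ 2) / 2)) ≤ x i * (E i j * x j) := by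
      intro i j
      have h3 : |E i j| ≤ ε := h i j
      have h4 : |x i * (E i j * x j)| ≤ ε * ((x i ^ 2 + x j ^ 2) / 2) := by
        rw [abs_mul, abs_mul, ← sq_abs (x i), ← sq_abs (x j)]
        have h5 : |x i| * |x j| ≤ (|x i| ^ 2 + |x j| ^ 2) / 2 := by
          nlinarith [sq_nonneg (|x i| - |x j|)]
        calc |x i| * (|E i j| * |x j|) = |E i j| * (|x i| * |x j|) := by ring
          _ ≤ ε * ((|x i| ^ 2 + |x j| ^ 2) / 2) :=
            mul_le_mul h3 h5 (by positivity) ((abs_nonneg _).trans h3)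
      exact (abs_le.1 h4).1
    calc -(ε * k * ∑ i, x i ^ 2) = ∑ i, ∑ j, -(ε * ((x i ^ 2 + x j ^ 2) / 2)) := by
          simp only [Finset.sum_neg_distrib, ← Finset.mul_sum, ← Finset.sum_div,
            Finset.sum_add_distrib, Finset.sum_const, Finset.card_univ, Fintype.card_fin,
            nsmul_eq_mul]
          ring
      _ ≤ ∑ i, ∑ j, x i * (E i j * x j) :=
          Finset.sum_le_sum fun i _ => Finset.sum_le_sum fun j _ => h2 i j
      _ = x ⬝ᵥ E *ᵥ x := by simp only [dotProduct, mulVec, Finset.mul_sum]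
  have h0 : 0 ≤ ∑ i, x i ^ 2 := Finset.sum_nonneg fun i _ => sq_nonneg _
  have h6 : x ⬝ᵥ x = ∑ i, x i ^ 2 := by simp [dotProduct, sq]
  rw [star_trivial, hE, Matrix.add_mulVec, dotProduct_add, Matrix.smul_mulVec, Matrix.one_mulVec,
    dotProduct_smul, h6, smul_eq_mul]
  nlinarith [mul_le_mul_of_nonneg_right hε h0]

theorem dotProduct_mulVec_comm_of_isSymm {k : ℕ} {S : Matrix (Fin k) (Fin k) ℝ} (hS : S.IsSymm)
    (x y : Fin k → ℝ) : x ⬝ᵥ S *ᵥ y = y ⬝ᵥ S *ᵥ x := by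
  rw [dotProduct_comm, dotProduct_mulVec, ← mulVec_transpose, hS.eq]

section
variable {V : Type*} [Fintype V] [DecidableEq V]

/-- A PSD stress near an orthogonal representation of the complement: the vectors `u h`,
summed over the vertices `r h`, form a Gale dual `g₀` in which non-adjacent vertices of `G` carry
orthogonal vectors, so that `S = 1` gives a stress. As the orthogonality conditions are
transversal (the symmetric matrices `T f` are dual to them up to nonzero factors), for
`g` near `g₀` they can be restored by a small change of `S`. Cramer's rule makes the corrected
`S` continuous in `g`, hence positive definite. -/
theorem hasPSDStress_of_rep {G : SimpleGraph V} {d k : ℕ} {ι κ : Type*} [Fintype ι]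
    [Fintype κ] [DecidableEq κ]
    (hcard : Fintype.card V = d + 1 + k) (r : ι → V) (u : ι → Fin k → ℝ)
    (hr : ∀ h h', r h = r h' → u h = u h') (hsum : ∑ h, u h = 0) (h₀ : ι) (hh₀ : u h₀ ≠ 0)
    (α β : κ → ι)
    (hH : ∀ i j, Gᶜ.Adj i j → ∃ e, (r (α e) = i ∧ r (β e) = j) ∨ (r (α e) = j ∧ r (β e) = i))
    (horth : ∀ e, u (α e) ⬝ᵥ u (β e) = 0) (T : κ → Matrix (Fin k) (Fin k) ℝ)
    (hT : ∀ f, (T f).IsSymm)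
    (hT' : ∀ e f, u (α e) ⬝ᵥ T f *ᵥ u (β e) = 0 ↔ e ≠ f) : HasPSDStress G d := by
  let g₀ : V → Fin k → ℝ := fun v => ∑ h, if r h = v then u h else 0
  have hg₀ : ∀ h, ∃ ν : ℝ, 0 < ν ∧ g₀ (r h) = ν • u h := by
    intro h
    refine ⟨(Finset.univ.filter fun h' => r h' = r h).card, ?_, ?_⟩
    · exact_mod_cast Finset.card_pos.2 ⟨h, by simp⟩
    · simp only [g₀]
      rw [← Finset.sum_filter, Finset.sum_congr rfl (g := fun _ => u h)]
      · rw [Finset.sum_const, Nat.cast_smul_eq_nsmul]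
      · intro h' hh'
        exact hr _ _ (Finset.mem_filter.1 hh').2
  choose ν hν hg₀ using hg₀
  have hg0 : ∀ a, ∑ v, g₀ v a = 0 := by
    intro a
    rw [← Finset.sum_apply]
    simp only [g₀]
    rw [Finset.sum_comm]
    simp only [Finset.sum_ite_eq, Finset.mem_univ, if_true]
    rw [hsum]
    rfl
  let A : (V → Fin k → ℝ) → κ → ℝ := fun g e => g (r (α e)) ⬝ᵥ g (r (β e))
  let N : (V → Fin k → ℝ) → Matrix (κ) (κ) ℝ := fun g =>
    Matrix.of fun e f => g (r (α e)) ⬝ᵥ T f *ᵥ g (r (β e))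
  have hev : ∀ v, Continuous fun g : V → Fin k → ℝ => g v := fun v => continuous_apply v
  have hA : Continuous A := continuous_pi fun e => (hev _).dotProduct (hev _)
  have hN : Continuous N := continuous_matrix fun e f =>
    (hev _).dotProduct (continuous_const.matrix_mulVec (hev _))
  -- `S g` solves the orthogonality conditions for `g` as a perturbation of `1` in the span of the
  -- `T f`, scaled by `det (N g)` to avoid division and by `δ` to make it positive at `g₀`.
  let δ := (N g₀).det
  let S : (V → Fin k → ℝ) → Matrix (Fin k) (Fin k) ℝ := fun g =>
    δ • ((N g).det • 1 - ∑ f, ((N g).adjugate *ᵥ A g) f • T f)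
  have hScont : Continuous S := by
    have h1 : Continuous fun g => (N g).det • (1 : Matrix (Fin k) (Fin k) ℝ) :=
      hN.matrix_det.smul continuous_const
    have h2 : ∀ f, Continuous fun g => ((N g).adjugate *ᵥ A g) f • T f := fun f =>
      ((continuous_apply f).comp (hN.matrix_adjugate.matrix_mulVec hA)).smul continuous_const
    have h3 : Continuous fun g => ∑ f, ((N g).adjugate *ᵥ A g) f • T f :=
      continuous_finsetSum _ fun f _ => h2 f
    exact (h1.sub h3).const_smul δ
  have hSsymm : ∀ g, (S g).IsSymm := by
    intro g
    simp only [S, Matrix.IsSymm, Matrix.transpose_smul, Matrix.transpose_sub,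
      Matrix.transpose_one, Matrix.transpose_sum, (hT _).eq]
  have hSz : ∀ g e, g (r (α e)) ⬝ᵥ S g *ᵥ g (r (β e)) = 0 := by
    intro g e
    have h1 : ∑ f, ((N g).adjugate *ᵥ A g) f * N g e f = (N g).det * A g e := by
      have := congrFun (Matrix.mulVec_mulVec (A g) (N g) (N g).adjugate) e
      rw [Matrix.mul_adjugate, Matrix.smul_mulVec, Matrix.one_mulVec] at this
      rw [← smul_eq_mul, ← Pi.smul_apply, ← this, mulVec, dotProduct]
      exact Finset.sum_congr rfl fun f _ => mul_comm _ _
    simp only [S, Matrix.smul_mulVec, Matrix.sub_mulVec, Matrix.one_mulVec, Matrix.sum_mulVec,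
      dotProduct_smul, dotProduct_sub, dotProduct_sum, smul_eq_mul]
    have h2 : (N g).det * (g (r (α e)) ⬝ᵥ g (r (β e))) -
        ∑ f, ((N g).adjugate *ᵥ A g) f * (g (r (α e)) ⬝ᵥ T f *ᵥ g (r (β e))) = 0 :=
      sub_eq_zero.2 h1.symm
    rw [h2, mul_zero]
  have hA0 : A g₀ = 0 := by
    funext e
    simp only [A, hg₀, smul_dotProduct, dotProduct_smul, horth]
    simp
  have hN0 : N g₀ = Matrix.diagonal fun e =>
      ν (α e) * (ν (β e) * (u (α e) ⬝ᵥ T e *ᵥ u (β e))) := by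
    ext e f
    simp only [N, Matrix.of_apply, hg₀, Matrix.mulVec_smul, smul_dotProduct, dotProduct_smul,
      smul_eq_mul, Matrix.diagonal_apply]
    split_ifs with hef
    · rw [hef]
      ring
    · rw [(hT' e f).2 hef]
      simp
  have hδ : δ ≠ 0 := by
    simp only [δ, hN0, Matrix.det_diagonal]
    refine Finset.prod_ne_zero_iff.2 fun e _ => ?_
    have h1 : u (α e) ⬝ᵥ T e *ᵥ u (β e) ≠ 0 := fun h => (hT' e e).1 h rfl
    exact mul_ne_zero (hν _).ne' (mul_ne_zero (hν _).ne' h1)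
  have hS0 : S g₀ = (δ * δ) • 1 := by
    simp only [S, hA0, Matrix.mulVec_zero, Pi.zero_apply, zero_smul, Finset.sum_const_zero,
      sub_zero, smul_smul]
    rfl
  have hδ2 : 0 < δ * δ := mul_self_pos.2 hδ
  let ε := δ * δ / (k + 1)
  have hε : 0 < ε := by positivity
  have ev1 : ∀ᶠ g in nhds g₀, ∀ i j,
      |S g i j - ((δ * δ) • (1 : Matrix (Fin k) (Fin k) ℝ)) i j| < ε := by
    refine Filter.eventually_all.2 fun i => Filter.eventually_all.2 fun j => ?_
    have hc : Continuous fun g =>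
        |S g i j - ((δ * δ) • (1 : Matrix (Fin k) (Fin k) ℝ)) i j| :=
      ((hScont.matrix_elem i j).sub continuous_const).abs
    refine hc.continuousAt.eventually_lt continuousAt_const ?_
    simpa [hS0] using hε
  have ev2 : ∀ᶠ g in nhds g₀, g (r h₀) ⬝ᵥ S g *ᵥ g (r h₀) ≠ 0 := by
    have hc : Continuous fun g : V → Fin k → ℝ => g (r h₀) ⬝ᵥ S g *ᵥ g (r h₀) :=
      (hev _).dotProduct (hScont.matrix_mulVec (hev _))
    refine hc.continuousAt.eventually_ne ?_
    rw [hS0, Matrix.smul_mulVec, Matrix.one_mulVec, dotProduct_smul, smul_eq_mul, hg₀]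
    refine mul_ne_zero hδ2.ne' ?_
    rw [Ne, dotProduct_self_eq_zero]
    exact smul_ne_zero (hν h₀).ne' hh₀
  obtain ⟨p, g, hp, hdep, h1, h2⟩ := exists_generic_dependency hcard g₀ hg0 (ev1.and ev2)
  refine ⟨p, hp, exists_stress_of_dependency hdep (S := S g) ?_ ?_ ⟨_, h2⟩⟩
  · refine posSemidef_of_near (hSsymm g) (ε := ε) ?_ fun i j => (h1 i j).le
    rw [div_mul_eq_mul_div, div_le_iff₀ (by positivity)]
    nlinarith
  · intro i j hij
    obtain ⟨e, ⟨rfl, rfl⟩ | ⟨rfl, rfl⟩⟩ := hH i j hij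
    · exact hSz g e
    · rw [dotProduct_mulVec_comm_of_isSymm (hSsymm g)]
      exact hSz g e

end

/-! ### PSD stresses from explicit orthogonal representations -/

section
variable {V : Type*} [Fintype V] [DecidableEq V] {G : SimpleGraph V} {d : ℕ}

/-- The vectors at `a` and `b`, as well as those at `a'` and `b'`, are orthogonal, and the sum of
all four is zero. -/
theorem hasPSDStress_of_two_disjoint (hcard : Fintype.card V = d + 1 + 2) {a b a' b' : V}
    (hd : [a, b, a', b'].Nodup)
    (hH : ∀ i j, Gᶜ.Adj i j → s(a, b) = s(i, j) ∨ s(a', b') = s(i, j)) : HasPSDStress G d := by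
  refine hasPSDStress_of_rep hcard [a, b, a', b'].get
    ![![-3, 0], ![0, -1], ![2, 2], ![1, -1]]
    (fun h h' hh => congrArg _ (List.nodup_iff_injective_get.1 hd hh)) ?_ 0 ?_
    (![0, 2] : Fin 2 → Fin 4) ![1, 3] ?_ ?_ ![!![0, 1; 1, 0], !![1, 0; 0, 0]] ?_ ?_
  · ext t
    fin_cases t <;> simp [Fin.sum_univ_succ] <;> norm_num
  · intro h
    simpa using congrFun h 0
  · intro i j hij
    rcases hH i j hij with h | h
    · exact ⟨0, Sym2.eq_iff.1 h⟩
    · exact ⟨1, Sym2.eq_iff.1 h⟩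
  · intro e
    fin_cases e <;> simp [dotProduct]
  · intro f
    fin_cases f <;> simp [Matrix.IsSymm, ← Matrix.ext_iff, Fin.forall_fin_succ]
  · intro e f
    fin_cases e <;> fin_cases f <;> simp [dotProduct, mulVec]

/-- All non-edges are among five edges obtained from a five-cycle by splitting some of its
vertices: the only possible coincidences between the ends `x e`, `y e` are `y e = x (e + 1)`. The
vectors `w` form an orthogonal representation of the five-cycle with `∑ e, w e = 0`; in the Gale
dual a split vertex has `w e` at both halves and an unsplit one has `2 • w e`. -/
theorem hasPSDStress_of_split_cycle (hcard : Fintype.card V = d + 1 + 3) {x y : Fin 5 → V}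
    (hx : Function.Injective x) (hy : Function.Injective y) (hxy : ∀ i j, x i = y j → i = j + 1)
    (hH : ∀ i j, Gᶜ.Adj i j → ∃ e, s(x e, y e) = s(i, j)) : HasPSDStress G d := by
  let w : Fin 5 → Fin 3 → ℝ := ![![-3, 0, 0], ![0, -3, 0], ![1, 0, 1], ![2, 2, -2], ![0, 1, 1]]
  have hw : ∑ i, w i = 0 := by
    ext t
    fin_cases t <;> simp [Fin.sum_univ_succ, w] <;> norm_num
  have hsum : ∑ i, w (i + 1) = 0 := by
    rw [← hw]
    exact Equiv.sum_comp (Equiv.addRight (1 : Fin 5)) w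
  refine hasPSDStress_of_rep hcard (Sum.elim x y) (Sum.elim w fun i => w (i + 1)) ?_ ?_
    (Sum.inl 0) ?_ Sum.inl Sum.inr ?_ ?_
    ![!![0, 1, -1; 1, 0, -1; -1, -1, 0], !![-1, 0, 0; 0, 0, 1; 0, 1, 0],
      !![-1, 0, 0; 0, 0, 0; 0, 0, 0], !![0, 0, 0; 0, -1, 0; 0, 0, 0],
      !![0, 0, 1; 0, -1, 0; 1, 0, 0]] ?_ ?_
  · rintro (i | i) (j | j) h
    · exact congrArg w (hx h)
    · exact congrArg w (hxy _ _ h)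
    · exact congrArg w (hxy _ _ h.symm).symm
    · exact congrArg (fun i => w (i + 1)) (hy h)
  · rw [Fintype.sum_sum_type]
    simp only [Sum.elim_inl, Sum.elim_inr]
    rw [hw, hsum, add_zero]
  · intro h
    simpa [w] using congrFun h 0
  · intro i j hij
    obtain ⟨e, he⟩ := hH i j hij
    exact ⟨e, Sym2.eq_iff.1 he⟩
  · intro e
    fin_cases e <;> simp [dotProduct, w, Fin.sum_univ_succ]
  · intro f
    fin_cases f <;> simp [Matrix.IsSymm, ← Matrix.ext_iff, Fin.forall_fin_succ]
  · intro e f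
    fin_cases e <;> fin_cases f <;> simp [dotProduct, mulVec, w, Fin.sum_univ_succ]

/-- All non-edges are among a triangle and two further edges disjoint from it, which may share the
vertex `y = z`. The triangle carries an orthogonal basis. The vector `v 4` is used at both `y` and
`z`, so it is counted twice in the sum. -/
theorem hasPSDStress_of_triangle (hcard : Fintype.card V = d + 1 + 3) {a b c x y z w : V}
    (hy : [a, b, c, x, y, w].Nodup) (hz : [a, b, c, x, z, w].Nodup)
    (hH : ∀ i j, Gᶜ.Adj i j → s(a, b) = s(i, j) ∨ s(a, c) = s(i, j) ∨ s(b, c) = s(i, j) ∨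
      s(x, y) = s(i, j) ∨ s(z, w) = s(i, j)) : HasPSDStress G d := by
  let v : Fin 6 → Fin 3 → ℝ :=
    ![![-3, 0, 0], ![0, -2, 0], ![0, 0, -1], ![1, -1, 0], ![1, 1, 1], ![0, 1, -1]]
  have hy' := List.nodup_iff_injective_get.1 hy
  have hz' := List.nodup_iff_injective_get.1 hz
  have hyz : ∀ i : Fin 6, [a, b, c, x, y, w].get i = z → v i = v 4 := by
    intro i hi
    by_cases h4 : i = 4
    · rw [h4]
    · have h1 : [a, b, c, x, y, w].get i = [a, b, c, x, z, w].get i := by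
        fin_cases i <;> first | rfl | exact absurd rfl h4
      exact absurd (hz' (h1.symm.trans hi : _ = [a, b, c, x, z, w].get 4)) h4
  refine hasPSDStress_of_rep hcard (Sum.elim [a, b, c, x, y, w].get fun _ : Unit => z)
    (Sum.elim v fun _ => v 4) ?_ ?_ (Sum.inl 0) ?_
    (![.inl 0, .inl 0, .inl 1, .inl 3, .inr ()] : Fin 5 → Fin 6 ⊕ Unit)
    ![.inl 1, .inl 2, .inl 2, .inl 4, .inl 5] ?_ ?_
    ![!![0, 1, 0; 1, 0, 0; 0, 0, 1], !![-1, 0, 1; 0, 0, 0; 1, 0, -1],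
      !![1, 0, 0; 0, 0, 1; 0, 1, 0], !![1, 0, 0; 0, 0, 0; 0, 0, 0],
      !![0, 0, 0; 0, 0, 0; 0, 0, -1]] ?_ ?_
  · rintro (i | i) (j | j) h
    · exact congrArg v (hy' h)
    · exact hyz i h
    · exact (hyz j h.symm).symm
    · rfl
  · ext t
    fin_cases t <;> simp [Fin.sum_univ_succ, v] <;> norm_num
  · intro h
    simpa [v] using congrFun h 0
  · intro i j hij
    rcases hH i j hij with h | h | h | h | h
    · exact ⟨0, Sym2.eq_iff.1 h⟩
    · exact ⟨1, Sym2.eq_iff.1 h⟩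
    · exact ⟨2, Sym2.eq_iff.1 h⟩
    · exact ⟨3, Sym2.eq_iff.1 h⟩
    · exact ⟨4, Sym2.eq_iff.1 h⟩
  · intro e
    fin_cases e <;> simp [dotProduct, v, Fin.sum_univ_succ]
  · intro f
    fin_cases f <;> simp [Matrix.IsSymm, ← Matrix.ext_iff, Fin.forall_fin_succ]
  · intro e f
    fin_cases e <;> fin_cases f <;> simp [dotProduct, v, mulVec, Fin.sum_univ_succ]

end

/-! ### PSD stresses of rank two -/

/-- The triple product `det (p, q, r)` in `ℝ³`. -/
def tripleProd (p q r : Fin 3 → ℝ) : ℝ :=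
  (p 1 * q 2 - p 2 * q 1) * r 0 + (p 2 * q 0 - p 0 * q 2) * r 1 + (p 0 * q 1 - p 1 * q 0) * r 2

theorem tripleProd_left (p q : Fin 3 → ℝ) : tripleProd p q p = 0 := by
  unfold tripleProd; ring

theorem tripleProd_right (p q : Fin 3 → ℝ) : tripleProd p q q = 0 := by
  unfold tripleProd; ring

/-- Any fixed linear functional of the vectors `g v` is an affine dependency, in particular the
triple product with two fixed vectors. -/
theorem IsDependency.tripleProd {V : Type*} [Fintype V] {d : ℕ}
    {p : V → EuclideanSpace ℝ (Fin d)} {g : V → Fin 3 → ℝ} (hg : IsDependency p g)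
    (q r q' r' : Fin 3 → ℝ) :
    IsDependency p fun v => ![tripleProd q r (g v), tripleProd q' r' (g v)] := by
  have h1 : ∀ q r : Fin 3 → ℝ, ∑ v, _root_.tripleProd q r (g v) = 0 := by
    intro q r
    simp only [_root_.tripleProd, Finset.sum_add_distrib, ← Finset.mul_sum, hg.1]
    ring
  have h2 : ∀ (q r : Fin 3 → ℝ) c, ∑ v, _root_.tripleProd q r (g v) * p v c = 0 := by
    intro q r c
    simp only [_root_.tripleProd, add_mul, mul_assoc, Finset.sum_add_distrib, ← Finset.mul_sum,
      hg.2]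
    ring
  refine ⟨fun a => ?_, fun a c => ?_⟩
  · fin_cases a
    · exact h1 q r
    · exact h1 q' r'
  · fin_cases a
    · exact h2 q r c
    · exact h2 q' r' c

section
variable {V : Type*} [Fintype V] [DecidableEq V] {G : SimpleGraph V} {d : ℕ}

/-- Every non-edge other than `xy` meets both `{s, t}` and `{s', t'}`. With `A` and `B` the
dependencies vanishing at `s, t` and at `s', t'`, the form `c A² + B²` gives a stress, where
`c` is chosen to kill the entry at `xy`; the sign conditions say that `c > 0`. -/
theorem hasPSDStress_of_two_covers (hcard : Fintype.card V = d + 1 + 3) {s t s' t' x y : V}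
    (hH : ∀ i j, Gᶜ.Adj i j → s(x, y) = s(i, j) ∨
      ((i = s ∨ i = t ∨ j = s ∨ j = t) ∧ (i = s' ∨ i = t' ∨ j = s' ∨ j = t')))
    (g₀ : V → Fin 3 → ℝ) (hg₀ : ∀ a, ∑ v, g₀ v a = 0)
    (hA : 0 < tripleProd (g₀ s) (g₀ t) (g₀ x) * tripleProd (g₀ s) (g₀ t) (g₀ y))
    (hB : tripleProd (g₀ s') (g₀ t') (g₀ x) * tripleProd (g₀ s') (g₀ t') (g₀ y) < 0) :
    HasPSDStress G d := by
  have hc : ∀ s t x : V, Continuous fun g : V → Fin 3 → ℝ => tripleProd (g s) (g t) (g x) := by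
    intro s t x
    unfold tripleProd
    fun_prop
  have ev1 := continuousAt_const.eventually_lt ((hc s t x).mul (hc s t y)).continuousAt hA
  have ev2 := ((hc s' t' x).mul (hc s' t' y)).continuousAt.eventually_lt continuousAt_const hB
  obtain ⟨p, g, hp, hdep, h1, h2⟩ := exists_generic_dependency hcard g₀ hg₀ (ev1.and ev2)
  let A : V → ℝ := fun v => tripleProd (g s) (g t) (g v)
  let B : V → ℝ := fun v => tripleProd (g s') (g t') (g v)
  replace h1 : 0 < A x * A y := h1
  replace h2 : B x * B y < 0 := h2
  let c := -(B x * B y) / (A x * A y)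
  have hc0 : 0 < c := div_pos (neg_pos.2 h2) h1
  have hcxy : c * (A x * A y) + B x * B y = 0 := by
    simp only [c]
    rw [div_mul_cancel₀ _ h1.ne']
    ring
  have hform : ∀ i j, ![A i, B i] ⬝ᵥ Matrix.diagonal ![c, 1] *ᵥ ![A j, B j] =
      c * (A i * A j) + B i * B j := by
    intro i j
    simp [dotProduct, mulVec_diagonal]
    ring
  refine ⟨p, hp, exists_stress_of_dependency (hdep.tripleProd (g s) (g t) (g s') (g t'))
    (S := Matrix.diagonal ![c, 1]) ?_ ?_ ⟨x, ?_⟩⟩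
  · refine PosSemidef.diagonal fun i => ?_
    fin_cases i
    · exact hc0.le
    · exact zero_le_one
  · intro i j hij
    refine (hform i j).trans ?_
    rcases hH i j hij with h | ⟨h, h'⟩
    · rcases Sym2.eq_iff.1 h with ⟨rfl, rfl⟩ | ⟨rfl, rfl⟩
      · exact hcxy
      · rw [← hcxy]; ring
    · have hAs : A s = 0 := tripleProd_left _ _
      have hAt : A t = 0 := tripleProd_right _ _
      have hBs : B s' = 0 := tripleProd_left _ _
      have hBt : B t' = 0 := tripleProd_right _ _
      have e1 : A i * A j = 0 := by
        rcases h with rfl | rfl | rfl | rfl <;> simp [hAs, hAt]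
      have e2 : B i * B j = 0 := by
        rcases h' with rfl | rfl | rfl | rfl <;> simp [hBs, hBt]
      rw [e1, e2]
      ring
  · refine fun h => ?_
    have h3 := (hform x x).symm.trans h
    have h4 : A x ≠ 0 := left_ne_zero_of_mul h1.ne'
    have h5 : 0 < A x * A x := mul_self_pos.2 h4
    have := mul_pos hc0 h5
    nlinarith [mul_self_nonneg (B x)]

/-- The two covers are `{v, b}` and `{v, a}`: each meets all non-edges other than `xy`. -/
theorem hasPSDStress_of_star_two_edges (hcard : Fintype.card V = d + 1 + 3) {v a b x y : V}
    (hd : [v, a, b, x, y].Nodup)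
    (hH : ∀ i j, Gᶜ.Adj i j → i = v ∨ j = v ∨ s(a, b) = s(i, j) ∨ s(x, y) = s(i, j)) :
    HasPSDStress G d := by
  obtain ⟨g₀, hg, hg₀⟩ := exists_of_rep _ (List.nodup_iff_injective_get.1 hd)
    (![![0, 0, -2], ![-3, 0, 0], ![0, -1, 0], ![2, 2, 1], ![1, -1, 1]] : Fin 5 → Fin 3 → ℝ) (by
      ext t
      fin_cases t <;> simp [Fin.sum_univ_succ] <;> norm_num)
  have gv := hg 0
  have ga := hg 1
  have gb := hg 2
  have gx := hg 3
  have gy := hg 4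
  simp at gv ga gb gx gy
  refine hasPSDStress_of_two_covers hcard (s := v) (t := b) (s' := v) (t' := a) (x := x) (y := y)
    ?_ g₀ hg₀ ?_ ?_
  · intro i j hij
    rcases hH i j hij with h | h | h | h
    · simp [h]
    · simp [h]
    · rcases Sym2.eq_iff.1 h with ⟨rfl, rfl⟩ | ⟨rfl, rfl⟩ <;> simp
    · exact Or.inl h
  · simp [gv, gb, gx, gy, tripleProd]
  · simp [gv, ga, gx, gy, tripleProd]

/-- The two covers are the two pairs of opposite vertices of the four-cycle. -/
theorem hasPSDStress_of_four_cycle (hcard : Fintype.card V = d + 1 + 3) {a b a' b' x y : V}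
    (hd : [a, b, a', b', x, y].Nodup)
    (hH : ∀ i j, Gᶜ.Adj i j → s(a, b) = s(i, j) ∨ s(b, a') = s(i, j) ∨ s(a', b') = s(i, j) ∨
      s(b', a) = s(i, j) ∨ s(x, y) = s(i, j)) :
    HasPSDStress G d := by
  obtain ⟨g₀, hg, hg₀⟩ := exists_of_rep _ (List.nodup_iff_injective_get.1 hd)
    (![![0, -1/2, -1/2], ![-3/2, 0, -3/2], ![0, -1/2, 1/2], ![-3/2, 0, 3/2], ![2, 2, 0],
      ![1, -1, 0]] : Fin 6 → Fin 3 → ℝ) (by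
      ext t
      fin_cases t <;> simp [Fin.sum_univ_succ] <;> norm_num)
  have ga := hg 0
  have gb := hg 1
  have ga' := hg 2
  have gb' := hg 3
  have gx := hg 4
  have gy := hg 5
  simp at ga gb ga' gb' gx gy
  refine hasPSDStress_of_two_covers hcard (s := a) (t := a') (s' := b) (t' := b') (x := x) (y := y)
    ?_ g₀ hg₀ ?_ ?_
  · intro i j hij
    rcases hH i j hij with h | h | h | h | h
    · rcases Sym2.eq_iff.1 h with ⟨rfl, rfl⟩ | ⟨rfl, rfl⟩ <;> simp
    · rcases Sym2.eq_iff.1 h with ⟨rfl, rfl⟩ | ⟨rfl, rfl⟩ <;> simp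
    · rcases Sym2.eq_iff.1 h with ⟨rfl, rfl⟩ | ⟨rfl, rfl⟩ <;> simp
    · rcases Sym2.eq_iff.1 h with ⟨rfl, rfl⟩ | ⟨rfl, rfl⟩ <;> simp
    · exact Or.inl h
  · simp [ga, ga', gx, gy, tripleProd]
    norm_num
  · simp [gb, gb', gx, gy, tripleProd]
    norm_num

end

/-! ### Five edges with all degrees at most two -/

section
variable {V : Type*}

theorem Sym2.eq_of_mem_mem {e e' : Sym2 V} (hne : e ≠ e') {v w : V} (hv : v ∈ e) (hv' : v ∈ e')
    (hw : w ∈ e) (hw' : w ∈ e') : v = w := by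
  by_contra h
  exact hne (((Sym2.mem_and_mem_iff h).1 ⟨hv, hw⟩).trans
    ((Sym2.mem_and_mem_iff h).1 ⟨hv', hw'⟩).symm)

theorem Sym2.exists_mk_eq {e : Sym2 V} (h : ¬ e.IsDiag) : ∃ x y, x ≠ y ∧ e = s(x, y) := by
  induction e with | _ x y => exact ⟨x, y, h, rfl⟩

theorem exists_fin_five_of_three : ∀ i j k : Fin 5, i ≠ j → i ≠ k → j ≠ k →
    ∃ l m, [i, j, k, l, m].Nodup ∧ ∀ n, n = i ∨ n = j ∨ n = k ∨ n = l ∨ n = m := by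
  decide

theorem exists_fin_five_of_four : ∀ i j k l : Fin 5, [i, j, k, l].Nodup →
    ∃ m, [i, j, k, l, m].Nodup ∧ ∀ n, n = i ∨ n = j ∨ n = k ∨ n = l ∨ n = m := by
  decide

/-- Five edges, no three of which have a common vertex, in a graph without loops or multiple
edges. -/
structure FiveEdges (e : Fin 5 → Sym2 V) : Prop where
  inj : Function.Injective e
  not_isDiag : ∀ i, ¬ (e i).IsDiag
  not_mem : ∀ {i j k}, i ≠ j → i ≠ k → j ≠ k → ∀ v, v ∈ e i → v ∈ e j → v ∉ e k

/-- The edges with indices `i` and `j` meet. -/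
def EdgesMeet (e : Fin 5 → Sym2 V) (i j : Fin 5) : Prop := ∃ v, v ∈ e i ∧ v ∈ e j

theorem EdgesMeet.symm {e : Fin 5 → Sym2 V} {i j : Fin 5} (h : EdgesMeet e i j) :
    EdgesMeet e j i :=
  let ⟨v, h₁, h₂⟩ := h
  ⟨v, h₂, h₁⟩

namespace FiveEdges
variable {e : Fin 5 → Sym2 V} (he : FiveEdges e)
include he

theorem eq_of_mem {i j : Fin 5} (hij : i ≠ j) {v w : V} (hv : v ∈ e i) (hv' : v ∈ e j)
    (hw : w ∈ e i) (hw' : w ∈ e j) : v = w :=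
  Sym2.eq_of_mem_mem (he.inj.ne hij) hv hv' hw hw'

theorem comp {σ : Fin 5 → Fin 5} (hσ : Function.Injective σ) : FiveEdges (e ∘ σ) :=
  ⟨he.inj.comp hσ, fun _ => he.not_isDiag _,
    fun h₁ h₂ h₃ => he.not_mem (hσ.ne h₁) (hσ.ne h₂) (hσ.ne h₃)⟩

/-- An edge meets at most two others. -/
theorem not_meet {i j k l : Fin 5} (h : [i, j, k, l].Nodup) (hj : EdgesMeet e i j)
    (hk : EdgesMeet e i k) : ¬ EdgesMeet e i l := by
  rintro ⟨c, hc, hc'⟩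
  obtain ⟨a, ha, ha'⟩ := hj
  obtain ⟨b, hb, hb'⟩ := hk
  simp at h
  have hab : a ≠ b := by
    rintro rfl
    exact he.not_mem (by tauto) (by tauto) (by tauto) a ha ha' hb'
  have hac : a ≠ c := by
    rintro rfl
    exact he.not_mem (i := i) (j := j) (k := l) (by tauto) (by tauto) (by tauto) a ha ha' hc'
  have hbc : b ≠ c := by
    rintro rfl
    exact he.not_mem (i := i) (j := k) (k := l) (by tauto) (by tauto) (by tauto) b hb hb' hc'
  have h₁ := (Sym2.mem_and_mem_iff hab).1 ⟨ha, hb⟩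
  rw [h₁] at hc
  rcases Sym2.mem_iff.1 hc with rfl | rfl
  · exact hac rfl
  · exact hbc rfl

/-- If only cyclically consecutive edges meet, then the edges form a split five-cycle: each edge
`e i` can be oriented from an end `x i` not on `e (i + 1)` to an end `y i` not on `e (i - 1)`. -/
theorem exists_split_cycle (h : ∀ i, ¬ EdgesMeet e i (i + 2)) :
    ∃ x y : Fin 5 → V, Function.Injective x ∧ Function.Injective y ∧
      (∀ i j, x i = y j → i = j + 1) ∧ ∀ i, e i = s(x i, y i) := by
  have h₁ : ∀ i, ∃ x y, x ∉ e (i + 1) ∧ y ∉ e (i - 1) ∧ x ≠ y ∧ e i = s(x, y) := by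
    intro i
    have n₁ : i ≠ i + 1 := by revert i; decide
    have n₂ : i ≠ i - 1 := by revert i; decide
    have n₃ : i + 1 ≠ i - 1 := by revert i; decide
    obtain ⟨p, q, hpq, hi⟩ := Sym2.exists_mk_eq (he.not_isDiag i)
    have hp : p ∈ e i := by rw [hi]; exact Sym2.mem_mk_left _ _
    have hq : q ∈ e i := by rw [hi]; exact Sym2.mem_mk_right _ _
    by_cases h₁ : p ∈ e (i + 1)
    · refine ⟨q, p, fun h₂ => hpq (he.eq_of_mem n₁ hp h₁ hq h₂), ?_, hpq.symm,
        hi.trans Sym2.eq_swap⟩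
      exact he.not_mem n₁ n₂ n₃ p hp h₁
    · by_cases h₂ : q ∈ e (i - 1)
      · refine ⟨q, p, ?_, fun h₃ => hpq (he.eq_of_mem n₂ hp h₃ hq h₂), hpq.symm,
          hi.trans Sym2.eq_swap⟩
        exact he.not_mem n₂ n₁ n₃.symm q hq h₂
      · exact ⟨p, q, h₁, h₂, hpq, hi⟩
  choose x y hx hy hne hxy using h₁
  have mx : ∀ i, x i ∈ e i := fun i => by rw [hxy]; exact Sym2.mem_mk_left _ _
  have my : ∀ i, y i ∈ e i := fun i => by rw [hxy]; exact Sym2.mem_mk_right _ _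
  have hcases : ∀ i j : Fin 5, i = j ∨ j = i + 1 ∨ i = j + 1 ∨ j = i + 2 ∨ i = j + 2 := by
    decide
  refine ⟨x, y, fun i j hij => ?_, fun i j hij => ?_, fun i j hij => ?_, hxy⟩
  · rcases hcases i j with rfl | rfl | rfl | rfl | rfl
    · rfl
    · exact absurd (hij ▸ mx _) (hx i)
    · exact absurd (hij ▸ mx _) (hx j)
    · exact absurd ⟨x i, mx i, hij ▸ mx _⟩ (h i)
    · exact absurd ⟨x j, mx j, hij ▸ mx _⟩ (h j)
  · rcases hcases i j with rfl | rfl | rfl | rfl | rfl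
    · rfl
    · exact absurd (by simpa [hij] using my i) (hy (i + 1))
    · exact absurd (by simpa [← hij] using my j) (hy (j + 1))
    · exact absurd ⟨y i, my i, hij ▸ my _⟩ (h i)
    · exact absurd ⟨y j, my j, hij ▸ my _⟩ (h j)
  · rcases hcases i j with rfl | rfl | rfl | rfl | rfl
    · exact absurd hij (hne i)
    · exact absurd (hij ▸ my _) (hx i)
    · rfl
    · exact absurd ⟨x i, mx i, hij ▸ my _⟩ (h i)
    · exact absurd ⟨y j, my j, hij ▸ mx _⟩ (h j)

theorem exists_split_cycle_of_order {p : Fin 5 → Fin 5} (hp : Function.Injective p)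
    (h : ∀ i, ¬ EdgesMeet e (p i) (p (i + 2))) :
    ∃ x y : Fin 5 → V, Function.Injective x ∧ Function.Injective y ∧
      (∀ i j, x i = y j → i = j + 1) ∧ ∀ i, ∃ j, e i = s(x j, y j) := by
  obtain ⟨x, y, hx, hy, hxy, h'⟩ := (he.comp hp).exists_split_cycle h
  refine ⟨x, y, hx, hy, hxy, fun i => ?_⟩
  obtain ⟨j, rfl⟩ := (Finite.injective_iff_surjective.1 hp) i
  exact ⟨j, h' j⟩

theorem exists_triangle {i j k : Fin 5} (hij : i ≠ j) (hik : i ≠ k) (hjk : j ≠ k)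
    (h₁ : EdgesMeet e i j) (h₂ : EdgesMeet e i k) (h₃ : EdgesMeet e j k) :
    ∃ a b c x y z w : V, [a, b, c, x, y, w].Nodup ∧ [a, b, c, x, z, w].Nodup ∧
      ∀ n, e n = s(a, b) ∨ e n = s(a, c) ∨ e n = s(b, c) ∨ e n = s(x, y) ∨ e n = s(z, w) := by
  obtain ⟨l, m, hd, hall⟩ := exists_fin_five_of_three i j k hij hik hjk
  simp at hd
  obtain ⟨⟨-, -, hil, him⟩, ⟨-, hjl, hjm⟩, ⟨hkl, hkm⟩, hlm⟩ := hd
  obtain ⟨a, ai, aj⟩ := h₁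
  obtain ⟨b, bi, bk⟩ := h₂
  obtain ⟨c, cj, ck⟩ := h₃
  have ak := he.not_mem hij hik hjk a ai aj
  have al := he.not_mem hij hil hjl a ai aj
  have am := he.not_mem hij him hjm a ai aj
  have bj := he.not_mem hik hij hjk.symm b bi bk
  have bl := he.not_mem hik hil hkl b bi bk
  have bm := he.not_mem hik him hkm b bi bk
  have cl := he.not_mem hjk hjl hkl c cj ck
  have cm := he.not_mem hjk hjm hkm c cj ck
  have hab : a ≠ b := by rintro rfl; exact ak bk
  have hac : a ≠ c := by rintro rfl; exact ak ck
  have hbc : b ≠ c := by rintro rfl; exact bj cj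
  have ei := (Sym2.mem_and_mem_iff hab).1 ⟨ai, bi⟩
  have ej := (Sym2.mem_and_mem_iff hac).1 ⟨aj, cj⟩
  have ek := (Sym2.mem_and_mem_iff hbc).1 ⟨bk, ck⟩
  have key : ∀ {l m : Fin 5}, l ≠ m → ∃ x y, x ∉ e m ∧ x ≠ y ∧ e l = s(x, y) := by
    intro l m hlm
    obtain ⟨p, q, hpq, hl⟩ := Sym2.exists_mk_eq (he.not_isDiag l)
    have hp : p ∈ e l := by rw [hl]; exact Sym2.mem_mk_left _ _
    have hq : q ∈ e l := by rw [hl]; exact Sym2.mem_mk_right _ _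
    by_cases h : p ∈ e m
    · exact ⟨q, p, fun h' => hpq (he.eq_of_mem hlm hp h hq h'), hpq.symm, hl.trans Sym2.eq_swap⟩
    · exact ⟨p, q, h, hpq, hl⟩
  obtain ⟨x, y, hx, hxy, el⟩ := key hlm
  obtain ⟨w, z, hw, hwz, em⟩ := key (Ne.symm hlm)
  refine ⟨a, b, c, x, y, z, w, ?_, ?_, fun n => ?_⟩
  · simp [el, em] at *
    tauto
  · simp [el, em] at *
    tauto
  · rcases hall n with rfl | rfl | rfl | rfl | rfl
    · exact Or.inl ei
    · exact Or.inr (Or.inl ej)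
    · exact Or.inr (Or.inr (Or.inl ek))
    · exact Or.inr (Or.inr (Or.inr (Or.inl el)))
    · exact Or.inr (Or.inr (Or.inr (Or.inr (em.trans Sym2.eq_swap))))

theorem exists_four_cycle {i j k l : Fin 5} (hd : [i, j, k, l].Nodup)
    (h₁ : EdgesMeet e i j) (h₂ : EdgesMeet e j k) (h₃ : EdgesMeet e k l) (h₄ : EdgesMeet e l i) :
    ∃ a b a' b' x y : V, [a, b, a', b', x, y].Nodup ∧
      ∀ n, e n = s(a, b) ∨ e n = s(b, a') ∨ e n = s(a', b') ∨ e n = s(b', a) ∨ e n = s(x, y) := by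
  obtain ⟨m, hd, hall⟩ := exists_fin_five_of_four i j k l hd
  simp at hd
  obtain ⟨⟨hij, hik, hil, him⟩, ⟨hjk, hjl, hjm⟩, ⟨hkl, hkm⟩, hlm⟩ := hd
  obtain ⟨a, ai, aj⟩ := h₁
  obtain ⟨b, bj, bk⟩ := h₂
  obtain ⟨c, ck, cl⟩ := h₃
  obtain ⟨d, dl, di⟩ := h₄
  have ak := he.not_mem hij hik hjk a ai aj
  have al := he.not_mem hij hil hjl a ai aj
  have am := he.not_mem hij him hjm a ai aj
  have bl := he.not_mem hjk hjl hkl b bj bk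
  have bm := he.not_mem hjk hjm hkm b bj bk
  have cm := he.not_mem hkl hkm hlm c ck cl
  have dk := he.not_mem hil hik (Ne.symm hkl) d di dl
  have dm := he.not_mem hil him hlm d di dl
  have hab : a ≠ b := by rintro rfl; exact ak bk
  have hac : a ≠ c := by rintro rfl; exact ak ck
  have had : a ≠ d := by rintro rfl; exact al dl
  have hbc : b ≠ c := by rintro rfl; exact bl cl
  have hbd : b ≠ d := by rintro rfl; exact bl dl
  have hcd : c ≠ d := by rintro rfl; exact dk ck
  obtain ⟨x, y, hxy, em⟩ := Sym2.exists_mk_eq (he.not_isDiag m)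
  refine ⟨a, b, c, d, x, y, ?_, fun n => ?_⟩
  · rw [em, Sym2.mem_iff] at am bm cm dm
    simp
    tauto
  · rcases hall n with rfl | rfl | rfl | rfl | rfl
    · exact Or.inr (Or.inr (Or.inr (Or.inl ((Sym2.mem_and_mem_iff had.symm).1 ⟨di, ai⟩))))
    · exact Or.inl ((Sym2.mem_and_mem_iff hab).1 ⟨aj, bj⟩)
    · exact Or.inr (Or.inl ((Sym2.mem_and_mem_iff hbc).1 ⟨bk, ck⟩))
    · exact Or.inr (Or.inr (Or.inl ((Sym2.mem_and_mem_iff hcd).1 ⟨cl, dl⟩)))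
    · exact Or.inr (Or.inr (Or.inr (Or.inr em)))

/-- Five edges with all degrees at most two form a split five-cycle, or a triangle and two further
edges, or a four-cycle and a further edge. Every edge meets at most two others. If `i` meets both
`j` and `k`, then in one of the cyclic orders `j, i, k, l, m` and `j, i, k, m, l` only consecutive
edges meet, unless there is a triangle or a four-cycle. If no edge meets two others, the pairs of
meeting edges can be made consecutive. -/
theorem classification :
    (∃ x y : Fin 5 → V, Function.Injective x ∧ Function.Injective y ∧
      (∀ i j, x i = y j → i = j + 1) ∧ ∀ i, ∃ j, e i = s(x j, y j)) ∨
    (∃ a b c x y z w : V, [a, b, c, x, y, w].Nodup ∧ [a, b, c, x, z, w].Nodup ∧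
      ∀ n, e n = s(a, b) ∨ e n = s(a, c) ∨ e n = s(b, c) ∨ e n = s(x, y) ∨ e n = s(z, w)) ∨
    (∃ a b a' b' x y : V, [a, b, a', b', x, y].Nodup ∧
      ∀ n, e n = s(a, b) ∨ e n = s(b, a') ∨ e n = s(a', b') ∨ e n = s(b', a) ∨
        e n = s(x, y)) := by
  have order : ∀ p₀ p₁ p₂ p₃ p₄ : Fin 5, [p₀, p₁, p₂, p₃, p₄].Nodup → ¬ EdgesMeet e p₀ p₂ →
      ¬ EdgesMeet e p₁ p₃ → ¬ EdgesMeet e p₂ p₄ → ¬ EdgesMeet e p₃ p₀ → ¬ EdgesMeet e p₄ p₁ →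
      ∃ x y : Fin 5 → V, Function.Injective x ∧ Function.Injective y ∧
        (∀ i j, x i = y j → i = j + 1) ∧ ∀ i, ∃ j, e i = s(x j, y j) := by
    intro p₀ p₁ p₂ p₃ p₄ hd h₀ h₁ h₂ h₃ h₄
    refine he.exists_split_cycle_of_order (p := [p₀, p₁, p₂, p₃, p₄].get)
      (List.nodup_iff_injective_get.1 hd) fun i => ?_
    fin_cases i
    exacts [h₀, h₁, h₂, h₃, h₄]
  by_cases hpath : ∃ i j k, [i, j, k].Nodup ∧ EdgesMeet e i j ∧ EdgesMeet e i k
  · obtain ⟨i, j, k, hd, mij, mik⟩ := hpath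
    simp at hd
    obtain ⟨⟨hij, hik⟩, hjk⟩ := hd
    obtain ⟨l, m, hd, -⟩ := exists_fin_five_of_three i j k hij hik hjk
    simp at hd
    obtain ⟨⟨-, -, hil, him⟩, ⟨-, hjl, hjm⟩, ⟨hkl, hkm⟩, hlm⟩ := hd
    by_cases mjk : EdgesMeet e j k
    · exact Or.inr (Or.inl (he.exists_triangle hij hik hjk mij mik mjk))
    have nil : ¬ EdgesMeet e i l := he.not_meet (by simp; tauto) mij mik
    have nim : ¬ EdgesMeet e i m := he.not_meet (by simp; tauto) mij mik
    by_cases mjl : EdgesMeet e j l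
    · have njm : ¬ EdgesMeet e j m := he.not_meet (by simp; tauto) mij.symm mjl
      by_cases mkl : EdgesMeet e k l
      · exact Or.inr (Or.inr (he.exists_four_cycle (i := i) (j := j) (k := l) (l := k)
          (by simp; tauto) mij mjl mkl.symm mik.symm))
      · exact Or.inl (order j i k m l (by simp; tauto) mjk nim mkl (fun h => njm h.symm)
          fun h => nil h.symm)
    · by_cases mkm : EdgesMeet e k m
      · have nkl : ¬ EdgesMeet e k l := he.not_meet (by simp; tauto) mik.symm mkm
        by_cases mjm : EdgesMeet e j m
        · exact Or.inr (Or.inr (he.exists_four_cycle (i := i) (j := j) (k := m) (l := k)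
            (by simp; tauto) mij mjm mkm.symm mik.symm))
        · exact Or.inl (order j i k m l (by simp; tauto) mjk nim nkl (fun h => mjm h.symm)
            fun h => nil h.symm)
      · exact Or.inl (order j i k l m (by simp; tauto) mjk nil mkm (fun h => mjl h.symm)
          fun h => nim h.symm)
  · left
    have hno : ∀ {i j k}, [i, j, k].Nodup → EdgesMeet e i j → ¬ EdgesMeet e i k :=
      fun hd h₁ h₂ => hpath ⟨_, _, _, hd, h₁, h₂⟩
    by_cases hedge : ∃ i j, i ≠ j ∧ EdgesMeet e i j
    · obtain ⟨i, j, hij, mij⟩ := hedge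
      have hk : ∀ i j : Fin 5, ∃ k, i ≠ k ∧ j ≠ k := by decide
      obtain ⟨k, hik, hjk⟩ := hk i j
      obtain ⟨l, m, hd, -⟩ := exists_fin_five_of_three i j k hij hik hjk
      simp at hd
      obtain ⟨⟨-, -, hil, him⟩, ⟨-, hjl, hjm⟩, ⟨hkl, hkm⟩, hlm⟩ := hd
      have nik : ¬ EdgesMeet e i k := hno (by simp; tauto) mij
      have nil : ¬ EdgesMeet e i l := hno (by simp; tauto) mij
      have nim : ¬ EdgesMeet e i m := hno (by simp; tauto) mij
      have njl : ¬ EdgesMeet e j l := hno (by simp; tauto) mij.symm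
      have njm : ¬ EdgesMeet e j m := hno (by simp; tauto) mij.symm
      by_cases mkm : EdgesMeet e k m
      · have nkl : ¬ EdgesMeet e k l := hno (by simp; tauto) mkm
        exact order i j k m l (by simp; tauto) nik njm nkl (fun h => nim h.symm)
          fun h => njl h.symm
      · exact order i j k l m (by simp; tauto) nik njl mkm (fun h => nil h.symm)
          fun h => njm h.symm
    · refine he.exists_split_cycle_of_order Function.injective_id fun i h => hedge ⟨_, _, ?_, h⟩
      have hi : ∀ i : Fin 5, i ≠ i + 2 := by decide
      exact hi i

end FiveEdges
end

/-! ### Graphs with at most five edges -/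

section
variable {V : Type*}

open scoped Classical in
/-- When at most two edges avoid `v`, either one further vertex covers them or they are
disjoint. -/
theorem two_vertex_cover_or_star_two_edges {E : Finset (Sym2 V)} (hE : ∀ e ∈ E, ¬ e.IsDiag) {v : V}
    (h : (E.filter (v ∉ ·)).card ≤ 2) :
    (∃ u w, ∀ e ∈ E, u ∈ e ∨ w ∈ e) ∨
      ∃ v a b x y, [v, a, b, x, y].Nodup ∧ ∀ e ∈ E, v ∈ e ∨ e = s(a, b) ∨ e = s(x, y) := by
  have hmem : ∀ e, e ∈ E.filter (v ∉ ·) ↔ e ∈ E ∧ v ∉ e := fun e => Finset.mem_filter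
  generalize E.filter (v ∉ ·) = F at h hmem
  have hcases : F.card = 0 ∨ F.card = 1 ∨ F.card = 2 := by omega
  rcases hcases with h0 | h1 | h2
  · obtain rfl := Finset.card_eq_zero.1 h0
    refine Or.inl ⟨v, v, fun e he => ?_⟩
    have := hmem e
    simp at this
    exact Or.inl (this he)
  · obtain ⟨e₀, rfl⟩ := Finset.card_eq_one.1 h1
    obtain ⟨a, b, hab, rfl⟩ := Sym2.exists_mk_eq (hE e₀ ((hmem e₀).1 (by simp)).1)
    refine Or.inl ⟨v, a, fun e he => ?_⟩
    by_cases hv : v ∈ e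
    · exact Or.inl hv
    · have := (hmem e).2 ⟨he, hv⟩
      simp at this
      simp [this]
  · obtain ⟨e₁, e₂, hne, rfl⟩ := Finset.card_eq_two.1 h2
    have m₁ := (hmem e₁).1 (by simp)
    have m₂ := (hmem e₂).1 (by simp)
    have hall : ∀ e ∈ E, v ∈ e ∨ e = e₁ ∨ e = e₂ := by
      intro e he
      by_cases hv : v ∈ e
      · exact Or.inl hv
      · have := (hmem e).2 ⟨he, hv⟩
        simp at this
        exact Or.inr this
    by_cases hw : ∃ w, w ∈ e₁ ∧ w ∈ e₂
    · obtain ⟨w, hw₁, hw₂⟩ := hw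
      refine Or.inl ⟨v, w, fun e he => ?_⟩
      rcases hall e he with h | rfl | rfl
      · exact Or.inl h
      · exact Or.inr hw₁
      · exact Or.inr hw₂
    · obtain ⟨a, b, hab, rfl⟩ := Sym2.exists_mk_eq (hE e₁ m₁.1)
      obtain ⟨x, y, hxy, rfl⟩ := Sym2.exists_mk_eq (hE e₂ m₂.1)
      refine Or.inr ⟨v, a, b, x, y, ?_, hall⟩
      have n₁ := m₁.2
      have n₂ := m₂.2
      simp at hw n₁ n₂ ⊢
      tauto

open scoped Classical in
theorem exists_fiveEdges_of_card {E : Finset (Sym2 V)} (hE : ∀ e ∈ E, ¬ e.IsDiag)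
    (hcard : E.card = 5)
    (h : ∀ v, (E.filter (v ∈ ·)).card ≤ 2) : ∃ e, FiveEdges e ∧ ∀ x ∈ E, ∃ i, e i = x := by
  let f := E.equivFinOfCardEq hcard
  have hinj : Function.Injective fun i => (f.symm i : Sym2 V) :=
    Subtype.val_injective.comp f.symm.injective
  refine ⟨fun i => f.symm i, ⟨hinj, fun i => hE _ (f.symm i).2, ?_⟩, fun x hx => ⟨f ⟨x, hx⟩, by simp⟩⟩
  intro i j k hij hik hjk v hi hj hk
  refine absurd (h v) (not_le.2 (Finset.two_lt_card.2 ?_))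
  exact ⟨_, Finset.mem_filter.2 ⟨(f.symm i).2, hi⟩, _, Finset.mem_filter.2 ⟨(f.symm j).2, hj⟩, _,
    Finset.mem_filter.2 ⟨(f.symm k).2, hk⟩, hinj.ne hij, hinj.ne hik, hinj.ne hjk⟩

open scoped Classical in
/-- If every vertex is avoided by at least three of at most five edges, then either there are
five edges and all degrees are at most two, or there are four pairwise disjoint edges, to which a
fifth edge joining two of them may be added. -/
theorem cases_of_card_le_five [Nonempty V] {E : Finset (Sym2 V)} (hE : ∀ e ∈ E, ¬ e.IsDiag)
    (hcard : E.card ≤ 5) :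
    (∃ u w, ∀ e ∈ E, u ∈ e ∨ w ∈ e) ∨
      (∃ v a b x y, [v, a, b, x, y].Nodup ∧ ∀ e ∈ E, v ∈ e ∨ e = s(a, b) ∨ e = s(x, y)) ∨
      ∃ e, FiveEdges e ∧ ∀ x ∈ E, ∃ i, e i = x := by
  by_cases h : ∃ v, (E.filter (v ∉ ·)).card ≤ 2
  · obtain ⟨v, hv⟩ := h
    exact (two_vertex_cover_or_star_two_edges hE hv).imp_right Or.inl
  push Not at h
  have hdeg : ∀ v, (E.filter (v ∈ ·)).card + 3 ≤ E.card := by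
    intro v
    have h₁ := h v
    have h₂ := Finset.card_filter_add_card_filter_not (s := E) (v ∈ ·)
    omega
  have hpos : ∀ {v e}, e ∈ E → v ∈ e → 0 < (E.filter (v ∈ ·)).card := fun he hv =>
    Finset.card_pos.2 ⟨_, Finset.mem_filter.2 ⟨he, hv⟩⟩
  have hE0 : 0 < E.card := by
    have := hdeg (Classical.arbitrary V)
    omega
  obtain ⟨e₀, he₀⟩ := Finset.card_pos.1 hE0
  obtain ⟨x₀, y₀, -, rfl⟩ := Sym2.exists_mk_eq (hE e₀ he₀)
  have h4 := hdeg x₀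
  have h4' := hpos he₀ (Sym2.mem_mk_left x₀ y₀)
  right; right
  obtain h5 | h4 : E.card = 5 ∨ E.card = 4 := by omega
  · refine exists_fiveEdges_of_card hE h5 fun v => ?_
    have := hdeg v
    omega
  have hdis : ∀ {v e e'}, e ∈ E → e' ∈ E → v ∈ e → v ∈ e' → e = e' := by
    intro v e e' he he' hv hv'
    have h₁ := hdeg v
    exact Finset.card_le_one.1 (by omega : (E.filter (v ∈ ·)).card ≤ 1) _
      (Finset.mem_filter.2 ⟨he, hv⟩) _ (Finset.mem_filter.2 ⟨he', hv'⟩)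
  obtain ⟨e₁, m₁, e₂, m₂, hne⟩ := Finset.one_lt_card.1 (by omega : 1 < E.card)
  obtain ⟨x, y, -, rfl⟩ := Sym2.exists_mk_eq (hE e₁ m₁)
  obtain ⟨z, w, -, rfl⟩ := Sym2.exists_mk_eq (hE e₂ m₂)
  have hxz : x ≠ z := by
    rintro rfl
    exact hne (hdis m₁ m₂ (Sym2.mem_mk_left _ _) (Sym2.mem_mk_left _ _))
  have hnot : s(x, z) ∉ E := by
    intro hm
    exact hne ((hdis m₁ hm (Sym2.mem_mk_left _ _) (Sym2.mem_mk_left _ _)).trans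
      (hdis hm m₂ (Sym2.mem_mk_right _ _) (Sym2.mem_mk_left _ _)))
  obtain ⟨e, he, hall⟩ := exists_fiveEdges_of_card (E := insert s(x, z) E)
    (by simpa [hxz] using hE) (by rw [Finset.card_insert_of_notMem hnot, h4]) fun v => by
      have h₁ := hdeg v
      have h₂ := Finset.card_le_card (Finset.filter_subset_filter (v ∈ ·)
        (Finset.insert_subset_insert s(x, z) (Finset.Subset.refl E)))
      rw [Finset.filter_insert] at *
      split_ifs
      · have := Finset.card_insert_le s(x, z) (E.filter (v ∈ ·))
        omega
      · omega
  exact ⟨e, he, fun x hx => hall x (Finset.mem_insert_of_mem hx)⟩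

/-- A graph with an edge has all its edges through one vertex, or consists of two disjoint edges,
or contains three disjoint edges, a path with two edges and a disjoint edge, a path with three
edges, or a triangle. -/
theorem SimpleGraph.star_or_two_edges_or_three_edges (H : SimpleGraph V)
    (hne : ∃ a b, H.Adj a b) :
    (∃ v, ∀ i j, H.Adj i j → i = v ∨ j = v) ∨
    (∃ a b a' b', [a, b, a', b'].Nodup ∧ H.Adj a b ∧ H.Adj a' b' ∧
      ∀ i j, H.Adj i j → s(a, b) = s(i, j) ∨ s(a', b') = s(i, j)) ∨
    (∃ a b a' b' a'' b'', [a, b, a', b', a'', b''].Nodup ∧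
      H.Adj a b ∧ H.Adj a' b' ∧ H.Adj a'' b'') ∨
    (∃ c a b x y, [c, a, b, x, y].Nodup ∧ H.Adj c a ∧ H.Adj c b ∧ H.Adj x y) ∨
    (∃ a b c e, [a, b, c, e].Nodup ∧ H.Adj a b ∧ H.Adj b c ∧ H.Adj c e) ∨
    (∃ a b c, H.Adj a b ∧ H.Adj a c ∧ H.Adj b c) := by
  by_cases hdis : ∃ a b c d, [a, b, c, d].Nodup ∧ H.Adj a b ∧ H.Adj c d
  · obtain ⟨a, b, c, d, hd, hab, hcd⟩ := hdis
    by_cases hall : ∀ i j, H.Adj i j → s(a, b) = s(i, j) ∨ s(c, d) = s(i, j)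
    · exact Or.inr (Or.inl ⟨a, b, c, d, hd, hab, hcd, hall⟩)
    -- A third edge at an endpoint `a` of one of two disjoint edges.
    have key : ∀ a b c d f, [a, b, c, d].Nodup → H.Adj a b → H.Adj c d → H.Adj a f → f ≠ b →
        (∃ c a b x y, [c, a, b, x, y].Nodup ∧ H.Adj c a ∧ H.Adj c b ∧ H.Adj x y) ∨
        (∃ a b c e, [a, b, c, e].Nodup ∧ H.Adj a b ∧ H.Adj b c ∧ H.Adj c e) := by
      intro a b c d f hd hab hcd haf hfb
      have hne := haf.ne
      by_cases hfc : f = c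
      · subst hfc
        refine Or.inr ⟨b, a, f, d, ?_, hab.symm, haf, hcd⟩
        simp at hd ⊢
        tauto
      by_cases hfd : f = d
      · subst hfd
        refine Or.inr ⟨b, a, f, c, ?_, hab.symm, haf, hcd.symm⟩
        simp at hd ⊢
        tauto
      refine Or.inl ⟨a, b, f, c, d, ?_, hab, haf, hcd⟩
      simp at hd ⊢
      tauto
    push Not at hall
    obtain ⟨e, f, hef, h₁, h₂⟩ := hall
    have hef' := hef.ne
    right; right
    by_cases hmeet : e = a ∨ e = b ∨ e = c ∨ e = d ∨ f = a ∨ f = b ∨ f = c ∨ f = d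
    · right
      have : (∃ c a b x y, [c, a, b, x, y].Nodup ∧ H.Adj c a ∧ H.Adj c b ∧ H.Adj x y) ∨
          (∃ a b c e, [a, b, c, e].Nodup ∧ H.Adj a b ∧ H.Adj b c ∧ H.Adj c e) := by
        have p₁ : [b, a, c, d].Nodup := by simp at hd ⊢; tauto
        have p₂ : [c, d, a, b].Nodup := by simp at hd ⊢; tauto
        have p₃ : [d, c, a, b].Nodup := by simp at hd ⊢; tauto
        rcases hmeet with rfl | rfl | rfl | rfl | rfl | rfl | rfl | rfl
        · exact key e b c d f hd hab hcd hef (by rintro rfl; exact h₁ rfl)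
        · exact key e a c d f p₁ hab.symm hcd hef (by rintro rfl; exact h₁ Sym2.eq_swap)
        · exact key e d a b f p₂ hcd hab hef (by rintro rfl; exact h₂ rfl)
        · exact key e c a b f p₃ hcd.symm hab hef (by rintro rfl; exact h₂ Sym2.eq_swap)
        · exact key f b c d e hd hab hcd hef.symm (by rintro rfl; exact h₁ Sym2.eq_swap)
        · exact key f a c d e p₁ hab.symm hcd hef.symm (by rintro rfl; exact h₁ rfl)
        · exact key f d a b e p₂ hcd hab hef.symm (by rintro rfl; exact h₂ Sym2.eq_swap)
        · exact key f c a b e p₃ hcd.symm hab hef.symm (by rintro rfl; exact h₂ rfl)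
      exact this.imp_right Or.inl
    · left
      refine ⟨a, b, c, d, e, f, ?_, hab, hcd, hef⟩
      simp at hd ⊢
      tauto
  · by_cases hstar : ∃ v, ∀ i j, H.Adj i j → i = v ∨ j = v
    · exact Or.inl hstar
    have hpair : ∀ {a b c d}, H.Adj a b → H.Adj c d → a = c ∨ a = d ∨ b = c ∨ b = d := by
      intro a b c d hab hcd
      by_contra hcon
      refine hdis ⟨a, b, c, d, ?_, hab, hcd⟩
      have := hab.ne
      have := hcd.ne
      simp
      tauto
    push Not at hstar
    have hedge : ∀ v, ∃ i j, H.Adj i j ∧ i ≠ v ∧ j ≠ v := hstar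
    have hone : ∀ {a b}, H.Adj a b → ∃ d, H.Adj b d ∧ d ≠ a := by
      intro a b hab
      obtain ⟨i, j, hij, hi, hj⟩ := hedge a
      rcases hpair hab hij with h | h | rfl | rfl
      · exact absurd h.symm hi
      · exact absurd h.symm hj
      · exact ⟨j, hij, hj⟩
      · exact ⟨i, hij.symm, hi⟩
    obtain ⟨a, b, hab⟩ := hne
    obtain ⟨d, hbd, hda⟩ := hone hab
    obtain ⟨f, haf, hfb⟩ := hone hab.symm
    obtain rfl : d = f := by
      have := hab.ne
      rcases hpair hbd haf with h | h | h | h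
      · exact absurd h.symm this
      · exact absurd h.symm hfb
      · exact absurd h hda
      · exact h
    exact Or.inr (Or.inr (Or.inr (Or.inr (Or.inr ⟨a, b, d, hab, haf, hbd⟩))))

end

/-! ### The thresholds -/

section
variable {V : Type*} [Fintype V] [DecidableEq V] {G : SimpleGraph V} {d : ℕ}

/-- If `G` has `d + 4` vertices and its complement at most five edges, then `G` has a PSD stress
in dimension `d`: each configuration of five edges is covered by two vertices or is one of four
special ones. -/
theorem hasPSDStress_of_complement_ncard_le_five (hcard : Fintype.card V = d + 1 + 3)
    (h : Gᶜ.edgeSet.ncard ≤ 5) : HasPSDStress G d := by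
  have : Nonempty V := Fintype.card_pos_iff.1 (by omega)
  have hfin : Gᶜ.edgeSet.Finite := Set.toFinite _
  have hE : ∀ e ∈ hfin.toFinset, ¬ e.IsDiag := fun e he =>
    Gᶜ.not_isDiag_of_mem_edgeSet (hfin.mem_toFinset.1 he)
  have hmem : ∀ {i j}, Gᶜ.Adj i j → s(i, j) ∈ hfin.toFinset := fun hij =>
    hfin.mem_toFinset.2 hij
  rw [Set.ncard_eq_toFinset_card _ hfin] at h
  rcases cases_of_card_le_five hE h with ⟨u, w, huw⟩ | ⟨v, a, b, x, y, hd, hall⟩ | ⟨e, he, hall⟩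
  · refine hasPSDStress_of_cover {u, w} (fun i j hij => ?_) ?_
    · have := huw _ (hmem hij)
      simp at this ⊢
      tauto
    · have := Finset.card_le_two (a := u) (b := w)
      omega
  · refine hasPSDStress_of_star_two_edges hcard hd fun i j hij => ?_
    have := hall _ (hmem hij)
    rw [Sym2.mem_iff] at this
    rcases this with (h | h) | h | h
    · exact Or.inl h.symm
    · exact Or.inr (Or.inl h.symm)
    · exact Or.inr (Or.inr (Or.inl h.symm))
    · exact Or.inr (Or.inr (Or.inr h.symm))
  · have hall : ∀ {i j}, Gᶜ.Adj i j → ∃ n, e n = s(i, j) := fun hij => hall _ (hmem hij)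
    rcases he.classification with ⟨x, y, hx, hy, hxy, h⟩ | ⟨a, b, c, x, y, z, w, hy, hz, h⟩ |
      ⟨a, b, a', b', x, y, hd, h⟩
    · refine hasPSDStress_of_split_cycle hcard hx hy hxy fun i j hij => ?_
      obtain ⟨n, hn⟩ := hall hij
      obtain ⟨m, hm⟩ := h n
      exact ⟨m, hm.symm.trans hn⟩
    · refine hasPSDStress_of_triangle hcard hy hz fun i j hij => ?_
      obtain ⟨n, hn⟩ := hall hij
      rw [← hn]
      simpa only [eq_comm] using h n
    · refine hasPSDStress_of_four_cycle hcard hd fun i j hij => ?_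
      obtain ⟨n, hn⟩ := hall hij
      rw [← hn]
      simpa only [eq_comm] using h n

/-- The common value of the two thresholds minus one: one of `n - 1`, `n - 2` and `n - 3`. -/
theorem exists_isIndepGraph_and_hasPSDStress (h : Gᶜ.edgeSet.ncard ≤ 5) :
    ∃ D, Fintype.card V ≤ D + 3 ∧ IsIndepGraph D G ∧ ∀ d, D = d + 1 → HasPSDStress G d := by
  by_cases hne : ∃ a b, Gᶜ.Adj a b
  swap
  · push Not at hne
    rcases isEmpty_or_nonempty V with hV | hV
    · exact ⟨0, by simp, fun _ _ _ _ => Subsingleton.elim _ _, by simp⟩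
    · have hpos : 0 < Fintype.card V := Fintype.card_pos
      refine ⟨Fintype.card V - 1, by omega, isIndepGraph_of_card (by omega), fun d hd => ?_⟩
      exact hasPSDStress_of_cover ∅ (fun i j hij => absurd hij (hne i j))
        (by rw [Finset.card_empty]; omega)
  have htwo : ∀ {a b}, Gᶜ.Adj a b → 2 ≤ Fintype.card V := fun {a b} hab => by
    have := Finset.card_le_univ {a, b}
    rwa [Finset.card_pair hab.ne] at this
  have hthree : ∀ {a b c : V}, [a, b, c].Nodup → 3 ≤ Fintype.card V := fun {a b c} hd =>
    hd.length_le_card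
  have small : 3 ≤ Fintype.card V → (∀ d, Fintype.card V = d + 1 + 2 → IsIndepGraph d G) →
      ∃ D, Fintype.card V ≤ D + 3 ∧ IsIndepGraph D G ∧ ∀ d, D = d + 1 → HasPSDStress G d :=
    fun h3 hind => ⟨Fintype.card V - 3, by omega, hind _ (by omega), fun d hd =>
      hasPSDStress_of_complement_ncard_le_five (by omega) h⟩
  rcases Gᶜ.star_or_two_edges_or_three_edges hne with ⟨v, hv⟩ | ⟨a, b, a', b', hd, hab, hab', hall⟩ |
    ⟨a, b, a', b', a'', b'', hd, h₁, h₂, h₃⟩ | ⟨c, a, b, x, y, hd, h₁, h₂, h₃⟩ |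
    ⟨a, b, c, e, hd, h₁, h₂, h₃⟩ | ⟨a, b, c, h₁, h₂, h₃⟩
  · obtain ⟨a, b, hab⟩ := hne
    have := htwo hab
    refine ⟨Fintype.card V - 2, by omega, isIndepGraph_of_adj (by omega) hab, fun d hd => ?_⟩
    refine hasPSDStress_of_cover {v} (fun i j hij => ?_) (by rw [Finset.card_singleton]; omega)
    simpa using hv i j hij
  · have := htwo hab
    exact ⟨Fintype.card V - 2, by omega, isIndepGraph_of_adj (by omega) hab, fun d hD =>
      hasPSDStress_of_two_disjoint (by omega) hd hall⟩
  · have : 6 ≤ Fintype.card V := hd.length_le_card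
    exact small (by omega) fun d hc => isIndepGraph_of_three_disjoint hc hd h₁ h₂ h₃
  · have : 5 ≤ Fintype.card V := hd.length_le_card
    exact small (by omega) fun d hc => isIndepGraph_of_cherry_edge hc hd h₁ h₂ h₃
  · have : 4 ≤ Fintype.card V := hd.length_le_card
    exact small (by omega) fun d hc => isIndepGraph_of_path hc hd h₁ h₂ h₃
  · refine small (hthree (a := a) (b := b) (c := c) ?_) fun d hc =>
      isIndepGraph_of_triangle hc h₁ h₂ h₃
    simp [h₁.ne, h₂.ne, h₃.ne]

end

/-- Let G be a finite simple graph on n vertices whose complement has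
at most 5 edges.  Then mlt(G) = gcr(G) and gcr(G) ≥ n - 2. -/
theorem mlt_eq_gcr_of_complement_small {V : Type*} [Fintype V] [DecidableEq V]
    (G : SimpleGraph V) (h : (Gᶜ).edgeSet.ncard ≤ 5) :
    mlt G = gcr G ∧ (Fintype.card V : ℤ) - 2 ≤ (gcr G : ℤ) := by
  obtain ⟨D, hD, hind, hpsd⟩ := exists_isIndepGraph_and_hasPSDStress h
  obtain ⟨hm, hg⟩ := mlt_eq_and_gcr_eq hind hpsd
  refine ⟨hm.trans hg.symm, ?_⟩
  rw [hg]
  push_cast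
  omega
end

section
/- Let G be a finite simple graph and let e be a non-edge of G, i.e., a pair of distinct non-adjacent vertices of G, and let G+e denote the graph obtained from G by adding the edge e. Then mlt(G) ≤ mlt(G+e) ≤ mlt(G) + 1. -/
/-!
Write `Good d G` for "no generic framework of `G` in `ℝ^d` carries a nonzero PSD stress", so that
`mlt G` is one more than the least `d` with `Good d G`.

* Such a `d` exists: for `d = |V|` the points of a generic framework are linearly independent, so
  there are no nonzero stresses at all (`stress_eq_zero_of_card`).
* A stress of `G` is a stress of `G + e`, so `Good d (G + e)` implies `Good d G`. This gives the
  lower bound.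
* For the upper bound, `Good d G` implies `Good (d + 1) (G + e)`, because `G + e` is a subgraph of
  the cone over `G - x`, where `x` is an endpoint of `e`. Concretely, let `ω` be a PSD stress of a
  generic `(G + e, p)` in `ℝ^(d+1)`. Put `h i = p i 0 - p x 0` and project centrally from `p x`
  onto the hyperplane at height one above `p x`, so that `i ≠ x` goes to
  `q i = (p i - p x)_{1..d} / h i`. The weights `ω i j * h i * h j` then form a stress of `q`
  (`isEqStress_slide`) whose matrix is `D Ω D` with `D = diag h`, hence PSD. As `h x = 0`, it does
  not use the edges at `x`, in particular not `e`, so it is a stress of `G`. The configuration `q`,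
  completed by a suitable `q x`, is generic (`generic_slide`). Hence `ω` vanishes away from `x`,
  and the equilibrium condition at the neighbours of `x` kills the remaining weights.
-/

/-!
Common rigidity-theoretic definitions, following the paper
"Computing maximum likelihood thresholds using graph rigidity".
-/

open scoped BigOperators

section MltAddEdge

variable {V : Type*}

/-- No generic framework of `G` in `ℝ^d` supports a nonzero PSD equilibrium stress. -/
def Good [Fintype V] [DecidableEq V] (d : ℕ) (G : SimpleGraph V) : Prop :=
  ∀ p : V → EuclideanSpace ℝ (Fin d), Generic p →
    ∀ ω : V → V → ℝ, IsEqStress G p ω → (stressMatrix ω).PosSemidef → ω = 0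

/-! ### Algebraic independence by counting -/

/-- If finitely many algebraically independent reals are polynomials in at most as many reals `y`,
then the `y` are algebraically independent, by comparing transcendence degrees. -/
lemma algebraicIndependent_of_mem_adjoin {ι : Type*} [Finite ι] {z y : ι → ℝ}
    (hz : AlgebraicIndependent ℚ z) (h : ∀ i, z i ∈ Algebra.adjoin ℚ (Set.range y)) :
    AlgebraicIndependent ℚ y := by
  let A := Algebra.adjoin ℚ (Set.range y)
  let y' : ι → A := fun i => ⟨y i, Algebra.subset_adjoin ⟨i, rfl⟩⟩
  let z' : ι → A := fun i => ⟨z i, h i⟩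
  have hz' : AlgebraicIndependent ℚ z' := AlgebraicIndependent.of_comp A.val hz
  have htop : Algebra.adjoin ℚ (Set.range y') = ⊤ := by
    have := Algebra.adjoin_adjoin_coe_preimage (R := ℚ) (s := Set.range y)
    convert this using 2
    ext a
    simp only [Set.mem_range, Set.mem_preimage, y', Subtype.ext_iff]
  have : Algebra.IsAlgebraic (Algebra.adjoin ℚ (Set.range y')) A := by
    rw [htop]
    exact ⟨fun a => isAlgebraic_algebraMap (⟨a, trivial⟩ : (⊤ : Subalgebra ℚ A))⟩
  have hy' : IsTranscendenceBasis ℚ y' :=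
    Algebra.IsAlgebraic.isTranscendenceBasis_of_lift_le_trdeg_of_finite ℚ y' hz'.lift_cardinalMk_le_trdeg
  exact hy'.1.map' (f := A.val) Subtype.val_injective

/-! ### Equilibrium and independence in dimension `|V|` -/

section Stress

variable [Fintype V]

lemma IsEqStress.sum_mul {G : SimpleGraph V} {d : ℕ} {p : V → EuclideanSpace ℝ (Fin d)}
    {ω : V → V → ℝ} (h : IsEqStress G p ω) (i : V) (k : Fin d) :
    ∑ j, ω i j * p j k = (∑ j, ω i j) * p i k := by
  have := congrArg (fun u : EuclideanSpace ℝ (Fin d) => u k) (h.2.2 i)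
  simp only [WithLp.ofLp_sum, Finset.sum_apply, PiLp.smul_apply, PiLp.sub_apply, smul_eq_mul,
    PiLp.zero_apply, mul_sub, Finset.sum_sub_distrib] at this
  rw [Finset.sum_mul]
  linarith

lemma stressMatrix_eq [DecidableEq V] {ω : V → V → ℝ} (h : ∀ i, ω i i = 0) :
    stressMatrix ω = Matrix.diagonal (fun i => ∑ k, ω i k) - Matrix.of ω := by
  ext i j
  by_cases hij : i = j
  · subst hij; simp [stressMatrix, h]
  · simp [stressMatrix, hij]

/-- A generic framework of `|V|` points in `ℝ^|V|` is linearly independent, so its only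
equilibrium stress is zero. -/
lemma stress_eq_zero_of_card [DecidableEq V] {G : SimpleGraph V}
    {p : V → EuclideanSpace ℝ (Fin (Fintype.card V))} (hp : Generic p)
    {ω : V → V → ℝ} (h : IsEqStress G p ω) : ω = 0 := by
  let e := Fintype.equivFin V
  let M : Matrix V V ℝ := fun v w => p v (e w)
  have hM : AlgebraicIndependent ℚ (fun vw : V × V => M vw.1 vw.2) :=
    hp.comp (fun vw : V × V => (vw.1, e vw.2)) (by
      rintro ⟨a, b⟩ ⟨c, d⟩ h
      simpa using h)
  have hdet : M.det ≠ 0 := by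
    have h1 : M.det = MvPolynomial.aeval (fun vw : V × V => M vw.1 vw.2)
        (Matrix.mvPolynomialX V V ℚ).det := by
      rw [AlgHom.map_det, Matrix.mvPolynomialX_mapMatrix_aeval]
    rw [h1]
    intro h0
    exact Matrix.det_mvPolynomialX_ne_zero V ℚ (hM (by rw [h0, map_zero]))
  have hloop : ∀ i, ω i i = 0 := fun i => h.2.1 i i (G.loopless.irrefl i)
  have hmul : stressMatrix ω * M = 0 := by
    rw [stressMatrix_eq hloop, sub_mul]
    ext i k
    simp only [Matrix.sub_apply, Matrix.diagonal_mul, Matrix.zero_apply]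
    rw [Matrix.mul_apply]
    have := h.sum_mul i (e k)
    simp only [Matrix.of_apply, M]
    linarith
  have h0 : stressMatrix ω = 0 := by
    have hu : IsUnit M.det := isUnit_iff_ne_zero.mpr hdet
    rw [← Matrix.mul_nonsing_inv_cancel_right M (stressMatrix ω) hu, hmul, zero_mul]
  funext i j
  by_cases hij : i = j
  · subst hij; exact hloop i
  · have := congrFun (congrFun h0 i) j
    simpa [stressMatrix, hij] using this

end Stress

/-! ### Central projection from a vertex -/

/-- The height of `p i` above `p x`, measured by the coordinate `0`. -/
def height {d : ℕ} (p : V → EuclideanSpace ℝ (Fin (d + 1))) (x i : V) : ℝ :=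
  p i 0 - p x 0

/-- The central projection from `p x` of a configuration in `ℝ^(d+1)` to the hyperplane at height
one above `p x`. The projection of `x` itself is undefined; as its position is
irrelevant for stresses avoiding `x`, it is set to the last `d` coordinates of `p x`, which keeps
the whole configuration generic. -/
noncomputable def slide [DecidableEq V] {d : ℕ} (p : V → EuclideanSpace ℝ (Fin (d + 1)))
    (x : V) (i : V) : EuclideanSpace ℝ (Fin d) :=
  WithLp.toLp 2 fun k =>
    if i = x then p x k.succ else (p i k.succ - p x k.succ) / height p x i

lemma height_ne_zero {d : ℕ} {p : V → EuclideanSpace ℝ (Fin (d + 1))} (hp : Generic p)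
    {x i : V} (hi : i ≠ x) : height p x i ≠ 0 := by
  intro h
  have := AlgebraicIndependent.injective hp (a₁ := (i, 0)) (a₂ := (x, 0)) (sub_eq_zero.mp h)
  exact hi (congrArg Prod.fst this)

/-- The coordinates of the projection, together with the `0`-th coordinates of `p`, generate all
coordinates of `p` polynomially, and there are as many of them. -/
lemma generic_slide [Finite V] [DecidableEq V] {d : ℕ}
    {p : V → EuclideanSpace ℝ (Fin (d + 1))} (hp : Generic p) (x : V) :
    Generic (slide p x) := by
  let y : V × Fin (d + 1) → ℝ := fun vi =>
    Fin.cases (motive := fun _ => ℝ) (p vi.1 0) (fun k => slide p x vi.1 k) vi.2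
  have hy : AlgebraicIndependent ℚ y := by
    refine algebraicIndependent_of_mem_adjoin hp ?_
    have mem : ∀ v k, y (v, k) ∈ Algebra.adjoin ℚ (Set.range y) :=
      fun v k => Algebra.subset_adjoin ⟨_, rfl⟩
    have mem0 : ∀ v, p v 0 ∈ Algebra.adjoin ℚ (Set.range y) := fun v => mem v 0
    have memx : ∀ k : Fin d, p x k.succ ∈ Algebra.adjoin ℚ (Set.range y) := fun k => by
      have := mem x k.succ
      simpa [y, slide] using this
    rintro ⟨v, k⟩
    refine Fin.cases (mem0 v) (fun k => ?_) k
    by_cases hv : v = x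
    · subst hv; exact memx k
    · have h1 := mem v k.succ
      have h2 := Subalgebra.add_mem _
        (Subalgebra.mul_mem _ h1 (Subalgebra.sub_mem _ (mem0 v) (mem0 x))) (memx k)
      have h3 : p v k.succ = y (v, k.succ) * (p v 0 - p x 0) + p x k.succ := by
        change p v k.succ = slide p x v k * height p x v + p x k.succ
        simp only [slide, if_neg hv]
        rw [div_mul_cancel₀ _ (height_ne_zero hp hv)]
        ring
      change p v k.succ ∈ _
      rw [h3]
      exact h2
  exact hy.comp (fun vi : V × Fin d => (vi.1, vi.2.succ)) (by
    rintro ⟨a, b⟩ ⟨c, e⟩ h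
    simpa using h)

variable [Fintype V]

lemma sum_mul_height {G : SimpleGraph V} {d : ℕ} {p : V → EuclideanSpace ℝ (Fin (d + 1))}
    {ω : V → V → ℝ} (h : IsEqStress G p ω) (x i : V) :
    ∑ j, ω i j * height p x j = (∑ j, ω i j) * height p x i := by
  simp only [height, mul_sub, Finset.sum_sub_distrib, h.sum_mul i 0, ← Finset.sum_mul]

/-- The rescaled weights are in equilibrium on the projected framework. They vanish at `x`, so only
the edges away from `x` have to belong to `G`. -/
lemma isEqStress_slide [DecidableEq V] {G G' : SimpleGraph V} {d : ℕ}
    {p : V → EuclideanSpace ℝ (Fin (d + 1))} (hp : Generic p) {x : V} {ω : V → V → ℝ}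
    (h : IsEqStress G' p ω) (hG : ∀ i j, i ≠ x → j ≠ x → G'.Adj i j → G.Adj i j) :
    IsEqStress G (slide p x) (fun i j => ω i j * height p x i * height p x j) := by
  have hx : height p x x = 0 := sub_self _
  refine ⟨fun i j => ?_, fun i j hij => ?_, fun i => ?_⟩
  · beta_reduce; rw [h.1 i j]; ring
  · by_cases hi : i = x
    · simp [hi, hx]
    by_cases hj : j = x
    · simp [hj, hx]
    beta_reduce; rw [h.2.1 i j fun h' => hij (hG i j hi hj h')]; ring
  · by_cases hi : i = x
    · simp [hi, hx]
    ext k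
    have hhi := height_ne_zero hp hi
    -- `height * slide` is the plain difference of coordinates, also at `j = x` where both vanish
    have key : ∀ j, height p x j * slide p x j k = p j k.succ - p x k.succ := fun j => by
      by_cases hj : j = x
      · simp [hj, hx]
      · simp only [slide, if_neg hj]
        rw [mul_div_cancel₀ _ (height_ne_zero hp hj)]
    simp only [WithLp.ofLp_sum, Finset.sum_apply, PiLp.smul_apply, PiLp.sub_apply, smul_eq_mul,
      PiLp.zero_apply]
    calc ∑ j, ω i j * height p x i * height p x j * (slide p x j k - slide p x i k)
        = ∑ j, (height p x i * (ω i j * p j k.succ) - height p x i * p x k.succ * ω i j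
            - height p x i * slide p x i k * (ω i j * height p x j)) := by
          refine Finset.sum_congr rfl fun j _ => ?_
          linear_combination ω i j * height p x i * key j
      _ = 0 := by
          rw [Finset.sum_sub_distrib, Finset.sum_sub_distrib, ← Finset.mul_sum, ← Finset.mul_sum,
            ← Finset.mul_sum, h.sum_mul, sum_mul_height h]
          linear_combination -(height p x i * ∑ j, ω i j) * key i

lemma posSemidef_slide [DecidableEq V] {G : SimpleGraph V} {d : ℕ}
    {p : V → EuclideanSpace ℝ (Fin (d + 1))} (x : V) {ω : V → V → ℝ}
    (h : IsEqStress G p ω) (hω : (stressMatrix ω).PosSemidef) :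
    (stressMatrix fun i j => ω i j * height p x i * height p x j).PosSemidef := by
  have := hω.conjTranspose_mul_mul_same (Matrix.diagonal (height p x))
  convert this using 1
  ext i j
  simp only [Matrix.diagonal_conjTranspose, Matrix.mul_diagonal, Matrix.diagonal_mul,
    stressMatrix, star_trivial]
  by_cases hij : i = j
  · subst hij
    simp only [if_true]
    rw [mul_assoc, ← sum_mul_height h x i, Finset.mul_sum]
    exact Finset.sum_congr rfl fun j _ => by ring
  · simp only [if_neg hij]; ring

/-! ### Comparing thresholds -/

/-- If `G` contains all edges of `G'` away from `x`, then raising the dimension by one suffices to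
pass from `G` to `G'`, whatever edges `G'` has at `x`. -/
lemma Good.succ [DecidableEq V] {G G' : SimpleGraph V} {d : ℕ} (hd : Good d G) (x : V)
    (hG : ∀ i j, i ≠ x → j ≠ x → G'.Adj i j → G.Adj i j) : Good (d + 1) G' := by
  intro p hp ω h hω
  have h0 := hd _ (generic_slide hp x) _ (isEqStress_slide hp h hG) (posSemidef_slide x h hω)
  have hoff : ∀ i j, i ≠ x → j ≠ x → ω i j = 0 := fun i j hi hj => by
    have := congrFun (congrFun h0 i) j
    simpa [height_ne_zero hp hi, height_ne_zero hp hj] using this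
  have hcone : ∀ i, i ≠ x → ω i x = 0 := fun i hi => by
    have hs : ∀ f : V → ℝ, ∑ j, ω i j * f j = ω i x * f x := fun f =>
      Finset.sum_eq_single x (fun j _ hj => by rw [hoff i j hi hj, zero_mul]) (by simp)
    have h1 := sum_mul_height h x i
    have h2 := hs fun _ => 1
    simp only [mul_one] at h2
    rw [hs, h2, show height p x x = 0 from sub_self _, mul_zero] at h1
    exact (mul_eq_zero.mp h1.symm).resolve_right (height_ne_zero hp hi)
  funext i j
  by_cases hi : i = x
  · by_cases hj : j = x
    · subst hi; subst hj; exact h.2.1 _ _ (G'.loopless.irrefl _)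
    · rw [h.1, hi]; exact hcone j hj
  · by_cases hj : j = x
    · rw [hj]; exact hcone i hi
    · exact hoff i j hi hj

lemma Good.mono [DecidableEq V] {G G' : SimpleGraph V} {d : ℕ} (hd : Good d G') (hG : G ≤ G') :
    Good d G := fun p hp ω h hω =>
  hd p hp ω ⟨h.1, fun i j hij => h.2.1 i j fun h' => hij (hG h'), h.2.2⟩ hω

lemma good_card [DecidableEq V] (G : SimpleGraph V) : Good (Fintype.card V) G :=
  fun _ hp _ h _ => stress_eq_zero_of_card hp h

lemma good_sInf [DecidableEq V] (G : SimpleGraph V) : Good (sInf {d | Good d G}) G :=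
  Nat.sInf_mem (s := {d | Good d G}) ⟨_, good_card G⟩

lemma mlt_eq [DecidableEq V] (G : SimpleGraph V) : mlt G = sInf {d | Good d G} + 1 := rfl

end MltAddEdge

/-- Let e = xy be a non-edge of G and G+e (here `G'`) the graph obtained by
adding the edge e.  Then mlt(G) ≤ mlt(G+e) ≤ mlt(G) + 1. -/
theorem mlt_add_edge {V : Type*} [Fintype V] [DecidableEq V]
    (G G' : SimpleGraph V) (x y : V) (hxy : x ≠ y) (hnadj : ¬ G.Adj x y)
    (hG' : ∀ u v, G'.Adj u v ↔ (G.Adj u v ∨ (u = x ∧ v = y) ∨ (u = y ∧ v = x))) :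
    mlt G ≤ mlt G' ∧ mlt G' ≤ mlt G + 1 := by
  rw [mlt_eq, mlt_eq]
  refine ⟨Nat.succ_le_succ (Nat.sInf_le ?_), Nat.succ_le_succ (Nat.sInf_le ?_)⟩
  · exact (good_sInf G').mono fun u v h => (hG' u v).mpr (Or.inl h)
  · refine (good_sInf G).succ x fun i j hi hj h => ?_
    rcases (hG' i j).mp h with h | h | h
    · exact h
    · exact absurd h.1 hi
    · exact absurd h.2 hj
end

section
/- Every 6-regular simple graph G on 9 vertices is globally 4-rigid; that is, every generic framework (G,p) in ℝ⁴ is globally rigid. -/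
/-!
The complement of `G` is 2-regular on nine vertices, so it is a disjoint union of cycles of type
`9`, `3 + 6`, `4 + 5` or `3 + 3 + 3`; up to relabelling there are only four graphs `G`, each with 27
edges.

The space of nine points in `ℝ⁴` modulo congruence has dimension `36 - 10 = 26`, so the 27 squared
edge lengths satisfy a polynomial relation `F`. At a generic `p`, a relation of minimal degree has
nonzero gradient, and by the chain rule this gradient is an equilibrium stress of *every* framework
equivalent to `p` (`exists_common_stress`). If its stress matrix has rank 4, its kernel is spanned
by the all-ones vector and the coordinates of `p`, so an equivalent `q` is an affine image `A p + b`
of `p`. If moreover the edge directions of `p` lie on no conic at infinity, then `Aᵀ A = 1` and `q`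
is congruent to `p`.

The rank and conic conditions hold generically once they hold at a single rational configuration
with a one-dimensional space of stresses; `exists_polynomial_kernel` makes this precise. It remains
to exhibit one such configuration (`Certificate`) for each of the four graphs and to check it by
rational arithmetic.
-/

/-!
Common rigidity-theoretic definitions, following the paper
"Computing maximum likelihood thresholds using graph rigidity".
-/

open scoped BigOperators

section Proof

open MvPolynomial Matrix

/-! ### Specialization of polynomial linear systems -/

/-- Suppose that, at the rational point `y₀`, the only `s` with `M s = 0` and `c · s = 0` is `s = 0`.
Then there are polynomials `δ` and `w`, with `δ` nonzero at `y₀`, such that at *every* point `y` of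
every `ℚ`-algebra each `s` in the kernel of `M` satisfies `δ(y) • s = (c · s) • w(y)`.

They come from Cramer's rule for `N = M(y₀)ᵀ M + c cᵀ`: every `s` in the kernel of `M` satisfies
`N s = (c · s) • c`, and `N` is positive definite at `y₀`, so `δ = det N` and `w = adj(N) c` work. -/
theorem exists_polynomial_kernel {σ m n : Type} [Fintype m] [Fintype n] [DecidableEq n]
    (M : Matrix m n (MvPolynomial σ ℚ)) (y₀ : σ → ℚ) (c : n → ℚ)
    (h₀ : ∀ s : n → ℚ, M.map (aeval y₀) *ᵥ s = 0 → c ⬝ᵥ s = 0 → s = 0) :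
    ∃ (δ : MvPolynomial σ ℚ) (w : n → MvPolynomial σ ℚ), aeval y₀ δ ≠ (0 : ℚ) ∧
      ∀ {R : Type} [CommRing R] [Algebra ℚ R] (y : σ → R) (s : n → R),
        M.map (aeval y) *ᵥ s = 0 →
        ∀ j, aeval y δ * s j = (∑ i, algebraMap ℚ R (c i) * s i) * aeval y (w j) := by
  let M₀ : Matrix m n (MvPolynomial σ ℚ) := M.map fun P => C (aeval y₀ P)
  let C' : n → MvPolynomial σ ℚ := fun j => C (c j)
  let N : Matrix n n (MvPolynomial σ ℚ) := M₀ᵀ * M + vecMulVec C' C'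
  have hN : ∀ {R : Type} [CommRing R] [Algebra ℚ R] (y : σ → R),
      N.map (aeval y) = (M₀.map (aeval y))ᵀ * M.map (aeval y) +
        vecMulVec (fun j => algebraMap ℚ R (c j)) (fun j => algebraMap ℚ R (c j)) := by
    intro R _ _ y
    ext i j
    simp [N, C', Matrix.mul_apply, vecMulVec_apply, Matrix.add_apply]
  refine ⟨N.det, N.adjugate *ᵥ C', ?_, ?_⟩
  · have hdet : aeval y₀ N.det = (N.map (aeval y₀) : Matrix n n ℚ).det := by
      rw [AlgHom.map_det]; rfl
    rw [hdet]
    intro h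
    obtain ⟨s, hs0, hs⟩ := exists_mulVec_eq_zero_iff.2 h
    apply hs0
    have hM₀ : M₀.map (aeval y₀) = M.map (aeval y₀ : MvPolynomial σ ℚ →ₐ[ℚ] ℚ) := by
      ext i j
      simp [M₀]
    -- At `y₀` the quadratic form of `N` is `‖M s‖² + (c · s)²`.
    have hq : (M.map (aeval y₀) *ᵥ s) ⬝ᵥ (M.map (aeval y₀) *ᵥ s) + (c ⬝ᵥ s) * (c ⬝ᵥ s) = 0 := by
      have h1 := congrArg (fun t => s ⬝ᵥ t) hs
      simp only [hN y₀, hM₀, add_mulVec, dotProduct_add, dotProduct_zero, ← mulVec_mulVec] at h1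
      rw [dotProduct_mulVec, vecMul_transpose, vecMulVec_mulVec] at h1
      simpa [dotProduct_smul, dotProduct_comm s] using h1
    have hA : 0 ≤ (M.map (aeval y₀) *ᵥ s) ⬝ᵥ (M.map (aeval y₀) *ᵥ s) :=
      Finset.sum_nonneg fun i _ => mul_self_nonneg _
    have hB := mul_self_nonneg (c ⬝ᵥ s)
    refine h₀ s (dotProduct_self_eq_zero.1 (by linarith)) ?_
    exact mul_self_eq_zero.1 (by linarith)
  · intro R _ _ y s hs j
    have h1 : N.map (aeval y) *ᵥ s =
        (∑ i, algebraMap ℚ R (c i) * s i) • fun j => algebraMap ℚ R (c j) := by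
      rw [hN, add_mulVec, ← mulVec_mulVec, hs, mulVec_zero, zero_add, vecMulVec_mulVec]
      ext i
      simp [dotProduct, mul_comm]
    have h2 := congrArg (fun t => ((N.map (aeval y)).adjugate *ᵥ t) j) h1
    simp only [mulVec_mulVec, adjugate_mul, smul_mulVec, one_mulVec, mulVec_smul] at h2
    have hdet : aeval y N.det = (N.map (aeval y) : Matrix n n R).det := by
      rw [AlgHom.map_det]; rfl
    have hadj : (N.map (aeval y) : Matrix n n R).adjugate = N.adjugate.map (aeval y) :=
      ((aeval y : MvPolynomial σ ℚ →ₐ[ℚ] R).map_adjugate N).symm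
    rw [hdet]
    simp only [hadj, Pi.smul_apply, smul_eq_mul] at h2
    rw [h2]
    congr 1
    simp [mulVec, dotProduct, C', map_sum]

theorem aeval_ne_zero_of_generic {σ : Type} {y : σ → ℝ} (hy : AlgebraicIndependent ℚ y)
    (y₀ : σ → ℚ) {P : MvPolynomial σ ℚ} (hP : aeval y₀ P ≠ (0 : ℚ)) : aeval y P ≠ 0 := by
  intro h
  exact hP (by rw [hy.eq_zero_of_aeval_eq_zero P h, map_zero])

/-- A polynomial matrix that is injective at one rational point is injective at every generic real
point. -/
theorem generic_injective {σ m n : Type} [Fintype m] [Fintype n] [DecidableEq n]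
    (M : Matrix m n (MvPolynomial σ ℚ)) (y₀ : σ → ℚ)
    (h₀ : ∀ s : n → ℚ, M.map (aeval y₀) *ᵥ s = 0 → s = 0)
    {y : σ → ℝ} (hy : AlgebraicIndependent ℚ y) (s : n → ℝ)
    (hs : M.map (aeval y) *ᵥ s = 0) : s = 0 := by
  obtain ⟨δ, w, hδ, h⟩ := exists_polynomial_kernel M y₀ 0 (fun s hs _ => h₀ s hs)
  funext j
  have := h y s hs j
  simpa [aeval_ne_zero_of_generic hy y₀ hδ] using this

/-! ### A stress common to all equivalent frameworks -/

theorem totalDegree_pderiv_lt {ι : Type} (F : MvPolynomial ι ℚ) (e : ι) (h : pderiv e F ≠ 0) :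
    (pderiv e F).totalDegree < F.totalDegree := by
  have key : ∀ m ∈ (pderiv e F).support, (m.sum fun _ k => k) + 1 ≤ F.totalDegree := by
    intro m hm
    rw [mem_support_iff, coeff_pderiv] at hm
    have h1 := le_totalDegree (mem_support_iff.2 (left_ne_zero_of_mul hm))
    rwa [Finsupp.sum_add_index' (by simp) (by simp), Finsupp.sum_single_index rfl] at h1
  obtain ⟨m, hm⟩ := support_nonempty.2 h
  have h0 := key m hm
  rw [totalDegree, Finset.sup_lt_iff (by rw [Nat.bot_eq_zero]; omega)]
  exact fun m hm => key m hm

theorem eq_C_of_pderiv_eq_zero {ι : Type} (F : MvPolynomial ι ℚ) (h : ∀ e, pderiv e F = 0) :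
    F = C (coeff 0 F) := by
  classical
  ext m
  rw [coeff_C]
  split_ifs with hm
  · rw [hm]
  · obtain ⟨e, he⟩ : ∃ e, m e ≠ 0 := by
      by_contra! h'
      exact hm (Finsupp.ext fun e => (h' e).symm)
    have h1 := congrArg (coeff (m - Finsupp.single e 1)) (h e)
    have h2 : m - Finsupp.single e 1 + Finsupp.single e 1 = m :=
      tsub_add_cancel_of_le (Finsupp.single_le_iff.2 (Nat.one_le_iff_ne_zero.2 he))
    rw [coeff_pderiv, h2, coeff_zero] at h1
    refine (mul_eq_zero.1 h1).resolve_right ?_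
    positivity

/-- Algebraically dependent numbers satisfy a relation at which some partial derivative does not
vanish: take a nonzero relation of minimal total degree. -/
theorem exists_relation_pderiv_ne_zero {ι : Type} {x : ι → ℝ} (hx : ¬ AlgebraicIndependent ℚ x) :
    ∃ F : MvPolynomial ι ℚ, aeval x F = 0 ∧ ∃ e, aeval x (pderiv e F) ≠ 0 := by
  have hne : {F : MvPolynomial ι ℚ | F ≠ 0 ∧ aeval x F = 0}.Nonempty := by
    rw [algebraicIndependent_iff] at hx
    push Not at hx
    obtain ⟨F, h1, h2⟩ := hx
    exact ⟨F, h2, h1⟩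
  obtain ⟨F, ⟨hF, hF0⟩, hmin⟩ :=
    WellFounded.has_min (measure (totalDegree : MvPolynomial ι ℚ → ℕ)).wf _ hne
  refine ⟨F, hF0, ?_⟩
  by_contra! hall
  have hz : ∀ e, pderiv e F = 0 := fun e => by
    by_contra hne
    exact hmin _ ⟨hne, hall e⟩ (totalDegree_pderiv_lt F e hne)
  have hC := eq_C_of_pderiv_eq_zero F hz
  rw [hC, aeval_C] at hF0
  rw [(map_eq_zero _).1 hF0, C_0] at hC
  exact hF hC

theorem pderiv_aeval {ι σ : Type} [Fintype ι] (f : ι → MvPolynomial σ ℚ) (F : MvPolynomial ι ℚ)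
    (i : σ) : pderiv i (aeval f F) = ∑ e, aeval f (pderiv e F) * pderiv i (f e) := by
  classical
  induction F using MvPolynomial.induction_on with
  | C a => simp [← algebraMap_eq]
  | add p q hp hq => simp only [map_add, hp, hq, add_mul, Finset.sum_add_distrib]
  | mul_X p n hp =>
    simp only [map_mul, aeval_X, pderiv_mul, hp, map_add, add_mul, Finset.sum_add_distrib,
      pderiv_X, Finset.sum_mul]
    congr 1
    · exact Finset.sum_congr rfl fun e _ => by ring
    · rw [Finset.sum_eq_single n] <;> simp +contextual [eq_comm]

/-- The squared length of the pair `{src e, dst e}`, as a polynomial in the coordinates of the nine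
points; the variable `(v, k)` is coordinate `k` of vertex `v`. -/
noncomputable def sqLength (src dst : Fin 27 → Fin 9) (e : Fin 27) :
    MvPolynomial (Fin 9 × Fin 4) ℚ :=
  ∑ k, (X (src e, k) - X (dst e, k)) ^ 2

/-- Indices of the coordinates that remain once vertex `0` is moved to the origin and vertices
`1, …, 4` into a flag of coordinate subspaces. -/
abbrev Free : Type := {vi : Fin 9 × Fin 4 // vi.2.val < vi.1.val}

theorem card_free : Fintype.card Free = 26 := by decide

/-- The 27 squared lengths are polynomials in the 26 coordinates of a congruent configuration in
pinned position, which Gram-Schmidt provides, so they are algebraically dependent. -/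
theorem not_algebraicIndependent_sqLength (src dst : Fin 27 → Fin 9) (y : Fin 9 × Fin 4 → ℝ) :
    ¬ AlgebraicIndependent ℚ fun e => aeval y (sqLength src dst e) := by
  intro hy
  let P : Fin 9 → EuclideanSpace ℝ (Fin 4) := fun v => WithLp.toLp 2 fun k => y (v, k)
  let b := InnerProductSpace.gramSchmidtOrthonormalBasis (𝕜 := ℝ) (by simp)
    (fun j : Fin 4 => P ⟨j + 1, by omega⟩ - P 0)
  let z : Fin 9 × Fin 4 → ℝ := fun vi => b.repr (P vi.1 - P 0) vi.2
  have hz : ∀ vi : Fin 9 × Fin 4, ¬ vi.2.val < vi.1.val → z vi = 0 := by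
    rintro ⟨v, i⟩ h
    simp only [not_lt] at h
    rcases Nat.eq_zero_or_pos v.val with h0 | h0
    · have : v = 0 := Fin.ext h0
      simp [z, this]
    · have h1 := InnerProductSpace.gramSchmidtOrthonormalBasis_inv_triangular' (𝕜 := ℝ) (by simp)
        (fun j : Fin 4 => P ⟨j + 1, by omega⟩ - P 0) (i := ⟨v - 1, by omega⟩) (j := i)
        (Fin.lt_def.2 (by simp only; omega))
      have h2 : (⟨v.val - 1 + 1, by omega⟩ : Fin 9) = v := Fin.ext (by simp only; omega)
      simp only [h2] at h1
      exact h1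
  let Y : Fin 9 × Fin 4 → MvPolynomial Free ℚ := fun vi =>
    if h : vi.2.val < vi.1.val then X ⟨vi, h⟩ else 0
  let x : Free → ℝ := fun vi => z vi.1
  have hY : ∀ vi, aeval x (Y vi) = z vi := by
    intro vi
    by_cases h : vi.2.val < vi.1.val
    · simp [Y, h, x]
    · simp [Y, h, hz vi h]
  let f : Fin 27 → MvPolynomial Free ℚ := fun e => ∑ k, (Y (src e, k) - Y (dst e, k)) ^ 2
  have hf : (aeval x) ∘ f = fun e => aeval y (sqLength src dst e) := by
    funext e
    have h1 : ‖b.repr (P (src e) - P (dst e))‖ ^ 2 = ‖P (src e) - P (dst e)‖ ^ 2 := by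
      rw [LinearIsometryEquiv.norm_map]
    have h2 : P (src e) - P (dst e) = (P (src e) - P 0) - (P (dst e) - P 0) := by abel
    rw [EuclideanSpace.norm_sq_eq, EuclideanSpace.norm_sq_eq] at h1
    conv_lhs at h1 => rw [h2, map_sub]
    simp only [Real.norm_eq_abs, sq_abs, PiLp.sub_apply] at h1
    simp only [Function.comp, f, sqLength, map_sum, map_pow, map_sub, hY, aeval_X]
    exact h1
  have hind : AlgebraicIndependent ℚ f := AlgebraicIndependent.of_comp (aeval x) (by rwa [hf])
  have h := hind.cardinalMk_le_trdeg
  rw [MvPolynomial.trdeg_of_isDomain] at h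
  simp only [Cardinal.mk_fintype, card_free, Cardinal.lift_natCast] at h
  norm_cast at h

/-- Let `F` be a relation among the squared lengths at a generic `y`, with `∇F ≠ 0` there. As `y` is
generic, `F ∘ sqLength` is the zero polynomial, and by the chain rule `∇F`, which only depends on
the squared lengths, is an equilibrium stress of every configuration `z` equivalent to `y`. -/
theorem exists_common_stress (src dst : Fin 27 → Fin 9) {y : Fin 9 × Fin 4 → ℝ}
    (hy : AlgebraicIndependent ℚ y) :
    ∃ g : Fin 27 → ℝ, g ≠ 0 ∧ ∀ z : Fin 9 × Fin 4 → ℝ,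
      (∀ e, aeval z (sqLength src dst e) = aeval y (sqLength src dst e)) →
      ∀ v k, ∑ e, ((if v = src e then 1 else 0) - (if v = dst e then 1 else 0)) *
        (z (src e, k) - z (dst e, k)) * g e = 0 := by
  obtain ⟨F, hF, e₀, he₀⟩ :=
    exists_relation_pderiv_ne_zero (not_algebraicIndependent_sqLength src dst y)
  let g : Fin 27 → ℝ := fun e => aeval (fun e => aeval y (sqLength src dst e)) (pderiv e F)
  refine ⟨g, fun h => he₀ (congrFun h e₀), fun z hz v k => ?_⟩
  have h0 : aeval (sqLength src dst) F = 0 := by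
    refine hy.eq_zero_of_aeval_eq_zero _ ?_
    rw [← hF, ← comp_aeval_apply]
  -- Differentiate `F ∘ sqLength = 0` at `z`; each `∂ sqLength / ∂ (v, k)` contributes a factor `2`.
  have h1 := congrArg (fun P => aeval z (pderiv (v, k) P)) h0
  simp only [pderiv_aeval, map_sum, map_mul, map_zero] at h1
  refine mul_left_cancel₀ (two_ne_zero' ℝ) (Eq.trans ?_ (h1.trans (mul_zero 2).symm))
  rw [Finset.mul_sum]
  refine Finset.sum_congr rfl fun e _ => ?_
  have h2 : aeval z (pderiv (v, k) (sqLength src dst e)) =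
      2 * (((if v = src e then 1 else 0) - (if v = dst e then 1 else 0)) *
        (z (src e, k) - z (dst e, k))) := by
    have h3 : ∀ u : Fin 9, ∀ l : Fin 4, aeval z (pderiv (v, k)
        (X (u, l) : MvPolynomial (Fin 9 × Fin 4) ℚ)) =
        if l = k then (if v = u then (1 : ℝ) else 0) else 0 := by
      intro u l
      by_cases hu : v = u <;> by_cases hl : l = k
      · subst hu hl; simp
      all_goals
        rw [pderiv_X_of_ne (by simp only [ne_eq, Prod.mk.injEq]; tauto)]
        simp [hu, hl]
    simp only [sqLength, map_sum, pderiv_pow, map_mul, map_sub, map_pow, aeval_X, map_natCast, h3]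
    rw [Finset.sum_eq_single k]
    · simp; ring
    · intro l _ hl
      simp [hl]
    · simp
  have h4 : aeval z (aeval (sqLength src dst) (pderiv e F)) = g e := by
    rw [comp_aeval_apply]
    simp only [hz, g]
  rw [h2, h4]
  ring

/-! ### Certificates of generic global rigidity -/

section Certificate

variable {R : Type} [CommRing R]

/-- The signed vertex-edge incidence `[v = src e] - [v = dst e]`. -/
def inc (src dst : Fin 27 → Fin 9) (e : Fin 27) (v : Fin 9) : R :=
  (if v = src e then 1 else 0) - (if v = dst e then 1 else 0)

theorem sum_inc_mul (src dst : Fin 27 → Fin 9) (e : Fin 27) (x : Fin 9 → R) :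
    ∑ v, inc src dst e v * x v = x (src e) - x (dst e) := by
  simp [inc, sub_mul, Finset.sum_sub_distrib]

theorem map_inc {S : Type} [CommRing S] [Algebra ℚ R] [Algebra ℚ S] (f : R →ₐ[ℚ] S)
    (src dst : Fin 27 → Fin 9) (e : Fin 27) (v : Fin 9) : f (inc src dst e v) = inc src dst e v := by
  simp [inc, apply_ite f]

/-- The weighted Laplacian of the 27 pairs with weights `g`; for an equilibrium stress `g` this is the
stress matrix. -/
def lap (src dst : Fin 27 → Fin 9) (g : Fin 27 → R) : Matrix (Fin 9) (Fin 9) R :=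
  fun i j => ∑ e, inc src dst e i * inc src dst e j * g e

theorem lap_smul (src dst : Fin 27 → Fin 9) (t : R) (g : Fin 27 → R) :
    lap src dst (t • g) = t • lap src dst g := by
  ext i j
  simp only [lap, Pi.smul_apply, Matrix.smul_apply, smul_eq_mul, Finset.mul_sum]
  exact Finset.sum_congr rfl fun e _ => by ring

theorem map_lap {S : Type} [CommRing S] [Algebra ℚ R] [Algebra ℚ S] (f : R →ₐ[ℚ] S)
    (src dst : Fin 27 → Fin 9) (g : Fin 27 → R) : (lap src dst g).map f = lap src dst fun e => f (g e) := by
  ext i j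
  simp [lap, map_inc]

theorem lap_mulVec (src dst : Fin 27 → Fin 9) (g : Fin 27 → R) (x : Fin 9 → R) (v : Fin 9) :
    (lap src dst g *ᵥ x) v = ∑ e, inc src dst e v * (x (src e) - x (dst e)) * g e := by
  simp only [mulVec, dotProduct, lap, Finset.sum_mul]
  rw [Finset.sum_comm]
  refine Finset.sum_congr rfl fun e _ => ?_
  rw [← sum_inc_mul, Finset.mul_sum, Finset.sum_mul]
  exact Finset.sum_congr rfl fun v _ => by ring

/-- Rational data witnessing generic global rigidity in `ℝ⁴` of the graph with edges
`{src e, dst e}`: a configuration with a one-dimensional stress space, a stress matrix of rank at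
least 4, not contained in a hyperplane, and with edge directions not on a conic at infinity. -/
structure Certificate (src dst : Fin 27 → Fin 9) where
  /-- The configuration; `pos (v, k)` is coordinate `k` of vertex `v`. -/
  pos : Fin 9 × Fin 4 → ℚ
  /-- An edge on which nonzero stresses do not vanish. -/
  base : Fin 27
  /-- The equilibrium stress. -/
  stress : Fin 27 → ℚ
  /-- Row indices of a nonzero minor of the stress matrix. -/
  rows : Fin 4 → Fin 9
  /-- Column indices of a nonzero minor of the stress matrix. -/
  cols : Fin 4 → Fin 9
  unique : ∀ g : Fin 27 → ℚ,
    (∀ v k, ∑ e, inc src dst e v * (pos (src e, k) - pos (dst e, k)) * g e = 0) →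
    g base = 0 → g = 0
  equilibrium : ∀ v k,
    ∑ e, inc src dst e v * (pos (src e, k) - pos (dst e, k)) * stress e = 0
  minor : ((lap src dst stress).submatrix rows cols).det ≠ 0
  affine : ∀ a : Option (Fin 4) → ℚ, (∀ v, a none + ∑ k, a (some k) * pos (v, k) = 0) → a = 0
  conic : ∀ Q : Fin 4 × Fin 4 → ℚ, (∀ k l, Q (k, l) = Q (l, k)) →
    (∀ e, ∑ kl, (pos (src e, kl.1) - pos (dst e, kl.1)) * (pos (src e, kl.2) - pos (dst e, kl.2)) *
      Q kl = 0) → Q = 0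

namespace Certificate

variable {src dst : Fin 27 → Fin 9} (c : Certificate src dst) {y : Fin 9 × Fin 4 → ℝ}
  (hy : AlgebraicIndependent ℚ y)
include c hy

/-- The minor that is nonzero for the certificate is nonzero for every nonzero stress `g` of a generic
configuration `y`: after clearing the denominator `δ(y)`, the stress `g` is `g base` times the
polynomial vector `w(y)`, whose minor is a polynomial not vanishing at the certificate. -/
theorem minor_ne_zero {g : Fin 27 → ℝ} (hg : g ≠ 0)
    (hs : ∀ v k, ∑ e, inc src dst e v * (y (src e, k) - y (dst e, k)) * g e = 0) :
    ((lap src dst g).submatrix c.rows c.cols).det ≠ 0 := by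
  let M : Matrix (Fin 9 × Fin 4) (Fin 27) (MvPolynomial (Fin 9 × Fin 4) ℚ) := fun vk e =>
    inc src dst e vk.1 * (X (src e, vk.2) - X (dst e, vk.2))
  have hM : ∀ {R : Type} [CommRing R] [Algebra ℚ R] (x : Fin 9 × Fin 4 → R) (g : Fin 27 → R),
      M.map (aeval x) *ᵥ g = fun vk => ∑ e, inc src dst e vk.1 *
        (x (src e, vk.2) - x (dst e, vk.2)) * g e := by
    intro R _ _ x g
    ext vk
    have h : ∀ e v, aeval x (inc src dst e v : MvPolynomial (Fin 9 × Fin 4) ℚ) =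
      inc src dst e v := fun e v => map_inc (aeval x) src dst e v
    change ∑ e, aeval x (M vk e) * g e = _
    simp [M, h]
  obtain ⟨δ, w, hδ, hw⟩ := exists_polynomial_kernel M c.pos (Pi.single c.base 1) (by
    intro s h1 h2
    rw [hM] at h1
    exact c.unique s (fun v k => congrFun h1 (v, k)) (by simpa using h2))
  have hsum : ∀ {R : Type} [CommRing R] [Algebra ℚ R] (s : Fin 27 → R),
      ∑ i, algebraMap ℚ R ((Pi.single c.base 1 : Fin 27 → ℚ) i) * s i = s c.base := by
    intro R _ _ s
    rw [Finset.sum_eq_single c.base] <;> simp +contextual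
  let D : MvPolynomial (Fin 9 × Fin 4) ℚ := ((lap src dst w).submatrix c.rows c.cols).det
  have hD : ∀ {R : Type} [CommRing R] [Algebra ℚ R] (x : Fin 9 × Fin 4 → R) (s : Fin 27 → R),
      (∀ v k, ∑ e, inc src dst e v * (x (src e, k) - x (dst e, k)) * s e = 0) →
      aeval x δ ^ 4 * ((lap src dst s).submatrix c.rows c.cols).det =
        s c.base ^ 4 * aeval x D := by
    intro R _ _ x s hs
    have h1 : aeval x δ • s = s c.base • fun j => aeval x (w j) := by
      ext j
      have := hw x s (by rw [hM]; ext vk; exact hs vk.1 vk.2) j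
      rwa [hsum] at this
    have h2 : aeval x D = ((lap src dst fun j => aeval x (w j)).submatrix c.rows c.cols).det := by
      rw [← map_lap (aeval x)]
      exact AlgHom.map_det (aeval x) _
    have h3 := congrArg (fun t => ((lap src dst t).submatrix c.rows c.cols).det) h1
    simp only [lap_smul, submatrix_smul, Pi.smul_apply, det_smul, Fintype.card_fin] at h3
    rw [h3, h2]
  have hD0 : aeval c.pos D ≠ (0 : ℚ) := fun h => by
    have := hD c.pos c.stress c.equilibrium
    rw [h, mul_zero] at this
    exact mul_ne_zero (pow_ne_zero 4 hδ) c.minor this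
  intro h
  have h1 := hD y g hs
  rw [h, mul_zero, eq_comm, mul_eq_zero] at h1
  have h2 : g c.base = 0 := by
    rcases h1 with h1 | h1
    · exact pow_eq_zero_iff (by norm_num) |>.1 h1
    · exact absurd h1 (aeval_ne_zero_of_generic hy _ hD0)
  apply hg
  ext j
  have h3 := hw y g (by rw [hM]; ext vk; exact hs vk.1 vk.2) j
  rw [hsum, h2, zero_mul, mul_eq_zero] at h3
  exact h3.resolve_left (aeval_ne_zero_of_generic hy _ hδ)

theorem affine_generic (a : Option (Fin 4) → ℝ)
    (h : ∀ v, a none + ∑ k, a (some k) * y (v, k) = 0) : a = 0 := by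
  let M : Matrix (Fin 9) (Option (Fin 4)) (MvPolynomial (Fin 9 × Fin 4) ℚ) := fun v k =>
    k.elim 1 fun k => X (v, k)
  have hM : ∀ {R : Type} [CommRing R] [Algebra ℚ R] (x : Fin 9 × Fin 4 → R)
      (a : Option (Fin 4) → R),
      M.map (aeval x) *ᵥ a = fun v => a none + ∑ k, a (some k) * x (v, k) := by
    intro R _ _ x a
    ext v
    change ∑ k, aeval x (M v k) * a k = _
    simp [M, Fintype.sum_option, mul_comm]
  refine generic_injective M c.pos (fun s hs => ?_) hy a ?_
  · rw [hM] at hs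
    exact c.affine s (congrFun hs)
  · rw [hM]
    exact funext h

theorem conic_generic (Q : Fin 4 × Fin 4 → ℝ) (hQ : ∀ k l, Q (k, l) = Q (l, k))
    (h : ∀ e, ∑ kl, (y (src e, kl.1) - y (dst e, kl.1)) * (y (src e, kl.2) - y (dst e, kl.2)) *
      Q kl = 0) : Q = 0 := by
  let M : Matrix (Fin 27 ⊕ Fin 4 × Fin 4) (Fin 4 × Fin 4) (MvPolynomial (Fin 9 × Fin 4) ℚ) :=
    Sum.elim
      (fun e kl => (X (src e, kl.1) - X (dst e, kl.1)) * (X (src e, kl.2) - X (dst e, kl.2)))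
      (fun kl kl' => (if kl' = kl then 1 else 0) - (if kl' = kl.swap then 1 else 0))
  have hM : ∀ {R : Type} [CommRing R] [Algebra ℚ R] (x : Fin 9 × Fin 4 → R)
      (Q : Fin 4 × Fin 4 → R),
      M.map (aeval x) *ᵥ Q = Sum.elim
        (fun e => ∑ kl, (x (src e, kl.1) - x (dst e, kl.1)) *
          (x (src e, kl.2) - x (dst e, kl.2)) * Q kl)
        (fun kl => Q kl - Q kl.swap) := by
    intro R _ _ x Q
    ext i
    rcases i with e | kl
    · change ∑ kl, aeval x (M (Sum.inl e) kl) * Q kl = _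
      simp [M]
    · change ∑ kl', aeval x (M (Sum.inr kl) kl') * Q kl' = _
      simp [M, apply_ite (aeval x), sub_mul, Finset.sum_sub_distrib]
  refine generic_injective M c.pos (fun s hs => ?_) hy Q ?_
  · rw [hM] at hs
    refine c.conic s (fun k l => sub_eq_zero.1 (congrFun hs (Sum.inr (k, l)))) fun e =>
      congrFun hs (Sum.inl e)
  · rw [hM]
    ext i
    rcases i with e | kl
    · exact h e
    · exact sub_eq_zero.2 (hQ _ _)

/-- The common stress of `y` and `z` has a stress matrix of rank at least 4. Its kernel contains the
all-ones vector and the coordinate vectors of `y`, which are independent, hence is spanned by them;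
as it also contains the coordinate vectors of `z`, `z` is an affine image of `y`. -/
theorem exists_affine {z : Fin 9 × Fin 4 → ℝ}
    (hz : ∀ e, aeval z (sqLength src dst e) = aeval y (sqLength src dst e)) :
    ∃ (A : Matrix (Fin 4) (Fin 4) ℝ) (b : Fin 4 → ℝ),
      ∀ v k, z (v, k) = b k + ∑ l, A k l * y (v, l) := by
  obtain ⟨g, hg, hst⟩ := exists_common_stress src dst hy
  have hmin := c.minor_ne_zero hy hg (hst y fun _ => rfl)
  let K := LinearMap.ker (lap src dst g).mulVecLin
  have hker : ∀ x : Fin 9 × Fin 4 → ℝ,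
      (∀ e, aeval x (sqLength src dst e) = aeval y (sqLength src dst e)) → ∀ k,
      (fun v => x (v, k)) ∈ K := by
    intro x hx k
    rw [LinearMap.mem_ker, mulVecLin_apply]
    ext v
    rw [lap_mulVec]
    exact hst x hx v k
  have hK : Module.finrank ℝ K ≤ 5 := by
    have h1 := LinearMap.finrank_range_add_finrank_ker (lap src dst g).mulVecLin
    have h2 : 4 ≤ (lap src dst g).rank := by
      refine le_trans ?_ (rank_submatrix_le (lap src dst g) c.rows c.cols)
      rw [rank_of_isUnit _ ((isUnit_iff_isUnit_det _).2 hmin.isUnit), Fintype.card_fin]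
    rw [rank] at h2
    simp only [Module.finrank_fin_fun] at h1
    change _ + Module.finrank ℝ K = 9 at h1
    omega
  let b : Option (Fin 4) → Fin 9 → ℝ := fun k => k.elim (fun _ => 1) fun k v => y (v, k)
  have hb : LinearIndependent ℝ b := by
    rw [Fintype.linearIndependent_iff]
    intro a ha
    refine congrFun (c.affine_generic hy a fun v => ?_)
    have := congrFun ha v
    simpa [b, Fintype.sum_option] using this
  have hle : Submodule.span ℝ (Set.range b) ≤ K := by
    rw [Submodule.span_le]
    rintro _ ⟨k, rfl⟩
    rcases k with _ | k
    · change _ ∈ K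
      rw [LinearMap.mem_ker, mulVecLin_apply]
      ext v
      rw [lap_mulVec]
      simp [b]
    · exact hker y (fun _ => rfl) k
  have heq : Submodule.span ℝ (Set.range b) = K := by
    refine Submodule.eq_of_le_of_finrank_le hle ?_
    rw [finrank_span_eq_card hb]
    simpa using hK
  have hmem : ∀ k, ∃ a : Option (Fin 4) → ℝ, ∑ i, a i • b i = fun v => z (v, k) := fun k =>
    (Submodule.mem_span_range_iff_exists_fun ℝ).1 (heq ▸ hker z hz k)
  choose a ha using hmem
  refine ⟨fun k l => a k (some l), fun k => a k none, fun v k => ?_⟩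
  have := congrFun (ha k) v
  simp only [← this, b, Fintype.sum_option]
  simp

/-- An affine map between equivalent configurations preserves edge lengths, so the quadratic form of
`Aᵀ A - 1` vanishes on all edge directions, which do not lie on a conic. -/
theorem orthogonal {z : Fin 9 × Fin 4 → ℝ}
    (hz : ∀ e, aeval z (sqLength src dst e) = aeval y (sqLength src dst e))
    {A : Matrix (Fin 4) (Fin 4) ℝ} {b : Fin 4 → ℝ}
    (h : ∀ v k, z (v, k) = b k + ∑ l, A k l * y (v, l)) : Aᵀ * A = 1 := by
  have hsym : ∀ k l, (Aᵀ * A - 1) k l = (Aᵀ * A - 1) l k := by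
    intro k l
    have : (Aᵀ * A - 1)ᵀ = Aᵀ * A - 1 := by simp
    exact congrFun (congrFun this.symm k) l
  have h0 := c.conic_generic hy (fun kl => (Aᵀ * A - 1) kl.1 kl.2) hsym (fun e => by
    set d : Fin 4 → ℝ := fun k => y (src e, k) - y (dst e, k) with hd
    have h1 : ∀ k, z (src e, k) - z (dst e, k) = (A *ᵥ d) k := by
      intro k
      simp [h, mulVec, dotProduct, hd, mul_sub, Finset.sum_sub_distrib]
    have h2 := hz e
    simp only [sqLength, map_sum, map_pow, map_sub, aeval_X, h1] at h2
    have h3 : (A *ᵥ d) ⬝ᵥ (A *ᵥ d) = d ⬝ᵥ d := by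
      simpa [dotProduct, pow_two] using h2
    have h4 : d ⬝ᵥ ((Aᵀ * A - 1) *ᵥ d) = 0 := by
      rw [sub_mulVec, dotProduct_sub, ← mulVec_mulVec, dotProduct_mulVec, vecMul_transpose, h3]
      simp
    rw [← h4, Fintype.sum_prod_type]
    simp only [dotProduct, mulVec, Finset.mul_sum]
    exact Finset.sum_congr rfl fun k _ => Finset.sum_congr rfl fun l _ => by ring)
  ext k l
  have := congrFun h0 (k, l)
  simpa [sub_eq_zero] using this

omit hy in
theorem congruent {p q : Fin 9 → EuclideanSpace ℝ (Fin 4)}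
    (hp : AlgebraicIndependent ℚ fun vi : Fin 9 × Fin 4 => p vi.1 vi.2)
    (h : ∀ e, dist (p (src e)) (p (dst e)) = dist (q (src e)) (q (dst e))) :
    ∃ T : EuclideanSpace ℝ (Fin 4) → EuclideanSpace ℝ (Fin 4),
      Isometry T ∧ ∀ v, q v = T (p v) := by
  have hsq : ∀ (x : Fin 9 → EuclideanSpace ℝ (Fin 4)) (e : Fin 27),
      aeval (fun vi : Fin 9 × Fin 4 => x vi.1 vi.2) (sqLength src dst e) =
        dist (x (src e)) (x (dst e)) ^ 2 := by
    intro x e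
    simp [sqLength, EuclideanSpace.dist_sq_eq, Real.dist_eq, sq_abs]
  have hz : ∀ e, aeval (fun vi : Fin 9 × Fin 4 => q vi.1 vi.2) (sqLength src dst e) =
      aeval (fun vi : Fin 9 × Fin 4 => p vi.1 vi.2) (sqLength src dst e) := fun e => by
    rw [hsq, hsq, h]
  obtain ⟨A, b, hAb⟩ := c.exists_affine hp hz
  have hA := c.orthogonal hp hz hAb
  refine ⟨fun x => WithLp.toLp 2 fun k => b k + ∑ l, A k l * x l, ?_, fun v => ?_⟩
  · refine Isometry.of_dist_eq fun x x' => ?_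
    let d : Fin 4 → ℝ := fun l => x l - x' l
    have h1 : (A *ᵥ d) ⬝ᵥ (A *ᵥ d) = d ⬝ᵥ d := by
      rw [dotProduct_mulVec, vecMul_mulVec, hA, vecMul_one]
    have h2 : ∀ k, b k + ∑ l, A k l * x l - (b k + ∑ l, A k l * x' l) = (A *ᵥ d) k := by
      intro k
      simp [mulVec, dotProduct, d, mul_sub, Finset.sum_sub_distrib]
    rw [EuclideanSpace.dist_eq, EuclideanSpace.dist_eq]
    congr 1
    simp only [Real.dist_eq, sq_abs, h2]
    simpa [dotProduct, pow_two, d] using h1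
  · ext k
    exact hAb v k

end Certificate

end Certificate

/-! ### Two-regular graphs on nine vertices -/

section TwoRegular

variable {V : Type*}

/-- The vertices `f i` are distinct, and every `H`-neighbour of `f i` is of the form `f j` with
`j = r i` or `i = r j`. Here `r` is the rotation along a family of cycles. In particular the range of
`f` is a union of connected components of `H`. -/
def Describes (H : SimpleGraph V) {ι : Type} (f : ι → V) (r : ι → ι) : Prop :=
  Function.Injective f ∧ ∀ i x, H.Adj (f i) x → ∃ j, f j = x ∧ (j = r i ∨ i = r j)

theorem Describes.sum {H : SimpleGraph V} {ι κ : Type} {f : ι → V} {g : κ → V} {r : ι → ι}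
    {r' : κ → κ} (hf : Describes H f r) (hg : Describes H g r') (h : ∀ i j, f i ≠ g j) :
    Describes H (Sum.elim f g) (Sum.map r r') := by
  refine ⟨hf.1.sumElim hg.1 h, ?_⟩
  rintro (i | i) x hx
  · obtain ⟨j, rfl, hj⟩ := hf.2 i x hx
    exact ⟨Sum.inl j, rfl, by simpa using hj⟩
  · obtain ⟨j, rfl, hj⟩ := hg.2 i x hx
    exact ⟨Sum.inr j, rfl, by simpa using hj⟩

/-- Every vertex of a finite 2-regular graph lies on a cycle that is a connected component. Walk from
`v`, leaving each vertex by the edge not used to enter it, until a vertex is repeated; the first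
repeated vertex is `v`, since both neighbours of any other visited vertex are already used. -/
theorem exists_cycle [Finite V] {H : SimpleGraph V} (h : ∀ v, (H.neighborSet v).ncard = 2)
    (v : V) : ∃ (n : ℕ) (s : Fin (n + 3) → V), s 0 = v ∧ (∀ i, H.Adj (s i) (s (i + 1))) ∧
      Describes H s (· + 1) := by
  have hother : ∀ a b, ∃ c, H.Adj b a → c ≠ a ∧ ∀ x, H.Adj b x ↔ x = a ∨ x = c := by
    intro a b
    by_cases hab : H.Adj b a
    · obtain ⟨x, y, hxy, hN⟩ := Set.ncard_eq_two.1 (h b)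
      have hN' : ∀ z, H.Adj b z ↔ z = x ∨ z = y := fun z => by
        rw [← SimpleGraph.mem_neighborSet, hN]; simp
      rcases (hN' a).1 hab with rfl | rfl
      · exact ⟨y, fun _ => ⟨hxy.symm, hN'⟩⟩
      · exact ⟨x, fun _ => ⟨hxy, fun z => (hN' z).trans or_comm⟩⟩
    · exact ⟨a, fun h => absurd h hab⟩
  -- `other a b` is the neighbour of `b` different from `a`.
  choose other hother using hother
  obtain ⟨w, hw⟩ : ∃ w, H.Adj v w := by
    obtain ⟨x, y, -, hN⟩ := Set.ncard_eq_two.1 (h v)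
    exact ⟨x, by rw [← SimpleGraph.mem_neighborSet, hN]; simp⟩
  let d : ℕ → V × V := fun n => (fun ab => (ab.2, other ab.1 ab.2))^[n] (v, w)
  let s : ℕ → V := fun n => (d n).1
  have hd : ∀ n, d (n + 1) = ((d n).2, other (d n).1 (d n).2) := fun n =>
    Function.iterate_succ_apply' _ _ _
  have hs1 : ∀ n, (d n).2 = s (n + 1) := fun n => by simp only [s, hd]
  have hs2 : ∀ n, s (n + 2) = other (s n) (s (n + 1)) := fun n => by
    simp only [s, hd]
  have hadj : ∀ n, H.Adj (s n) (s (n + 1)) := by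
    intro n
    induction n with
    | zero => exact hw
    | succ n ih =>
      rw [hs2]
      exact ((hother _ _ ih.symm).2 _).2 (Or.inr rfl)
  have hne2 : ∀ n, s (n + 2) ≠ s n := fun n => by
    rw [hs2]; exact (hother _ _ (hadj n).symm).1
  have hN : ∀ n x, H.Adj (s (n + 1)) x ↔ x = s n ∨ x = s (n + 2) := fun n x => by
    rw [hs2]; exact (hother _ _ (hadj n).symm).2 x
  have hne1 : ∀ n, s (n + 1) ≠ s n := fun n => (hadj n).ne'
  have hex : ∃ j, ∃ i < j, s i = s j := by
    obtain ⟨i, j, hij, he⟩ := Finite.exists_ne_map_eq_of_infinite s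
    rcases hij.lt_or_gt with hlt | hlt
    · exact ⟨j, i, hlt, he⟩
    · exact ⟨i, j, hlt, he.symm⟩
  classical
  obtain ⟨i, hi, he⟩ := Nat.find_spec hex
  have hmin := fun {m : ℕ} => Nat.find_min hex (m := m)
  generalize Nat.find hex = j at *
  have hinj : ∀ a b, a < j → b < j → s a = s b → a = b := by
    intro a b ha hb hab
    by_contra hne
    rcases Ne.lt_or_gt hne with hlt | hlt
    · exact hmin hb ⟨a, hlt, hab⟩
    · exact hmin ha ⟨b, hlt, hab.symm⟩
  have hij1 : j ≠ i + 1 := by rintro rfl; exact hne1 i he.symm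
  have hij2 : j ≠ i + 2 := by rintro rfl; exact hne2 i he.symm
  obtain rfl : i = 0 := by
    by_contra h0
    obtain ⟨i, rfl⟩ := Nat.exists_eq_succ_of_ne_zero h0
    obtain ⟨j, rfl⟩ : ∃ k, j = k + 1 := ⟨j - 1, by omega⟩
    have h1 : H.Adj (s (i + 1)) (s j) := by
      rw [Nat.succ_eq_add_one] at he
      rw [he]; exact (hadj j).symm
    rcases (hN i _).1 h1 with h2 | h2
    · have := hinj _ _ (by omega) (by omega) h2
      omega
    · have := hinj _ _ (by omega) (by omega) h2
      omega
  obtain ⟨n, rfl⟩ : ∃ n, j = n + 3 := ⟨j - 3, by omega⟩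
  have hval : ∀ i : Fin (n + 3), s (i + 1 : Fin (n + 3)).val = s (i.val + 1) := by
    intro i
    rw [Fin.val_add_one]
    split_ifs with hl
    · subst hl; simpa using he
    · rfl
  refine ⟨n, fun i => s i, rfl, fun i => ?_, fun a b hab => Fin.ext (hinj _ _ a.2 b.2 hab), ?_⟩
  · simp only [hval]; exact hadj i
  · intro i x hx
    have hprev : ∃ k : Fin (n + 3), k + 1 = i := ⟨i - 1, by simp⟩
    obtain ⟨k, rfl⟩ := hprev
    simp only [hval] at hx
    rcases (hN k x).1 hx with rfl | rfl
    · exact ⟨k, rfl, Or.inr rfl⟩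
    · refine ⟨k + 1 + 1, ?_, Or.inl rfl⟩
      change s (k + 1 + 1 : Fin (n + 3)).val = _
      rw [hval]
      by_cases hl : k = Fin.last (n + 2)
      · subst hl
        have h1 : (Fin.last (n + 2) + 1 : Fin (n + 3)) = 0 := by simp
        rw [h1]
        -- Both `s 1` and `s (n + 4)` are the neighbour of `s (n + 3) = s 0` other than `s (n + 2)`.
        have h2 : H.Adj (s (n + 2 + 1)) (s 1) := he ▸ hadj 0
        rcases (hN _ _).1 h2 with h3 | h3
        · have := hinj _ _ (by omega) (by omega) h3
          omega
        · exact h3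
      · rw [Fin.val_add_one, if_neg hl]


/-- A cycle that starts outside a union of components stays outside. -/
theorem Describes.disjoint {H : SimpleGraph V} {ι : Type} {f : ι → V} {r : ι → ι}
    (hf : Describes H f r) {n : ℕ} {s : Fin (n + 3) → V} (hs : ∀ i, H.Adj (s i) (s (i + 1)))
    (h0 : ∀ i, f i ≠ s 0) (i : ι) (j : Fin (n + 3)) : f i ≠ s j := by
  induction j using Fin.induction generalizing i with
  | zero => exact h0 i
  | succ j ih =>
    intro h
    have h1 := hs j.castSucc
    rw [Fin.coeSucc_eq_succ, ← h] at h1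
    obtain ⟨k, hk, -⟩ := hf.2 i _ h1.symm
    exact ih k hk

/-- A 2-regular graph on nine vertices has cycle type `9`, `3 + 6`, `4 + 5` or `3 + 3 + 3`. -/
theorem exists_describes [Fintype V] {H : SimpleGraph V} (h : ∀ v, (H.neighborSet v).ncard = 2)
    (hV : Fintype.card V = 9) :
    (∃ f : Fin 9 → V, Describes H f (· + 1)) ∨
    (∃ f : Fin 3 ⊕ Fin 6 → V, Describes H f (Sum.map (· + 1) (· + 1))) ∨
    (∃ f : Fin 4 ⊕ Fin 5 → V, Describes H f (Sum.map (· + 1) (· + 1))) ∨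
    (∃ f : (Fin 3 ⊕ Fin 3) ⊕ Fin 3 → V,
      Describes H f (Sum.map (Sum.map (· + 1) (· + 1)) (· + 1))) := by
  have hcard : ∀ {ι : Type} [Fintype ι] {f : ι → V}, Function.Injective f →
      Fintype.card ι ≤ 9 := fun hf => hV ▸ Fintype.card_le_of_injective _ hf
  have hout : ∀ {ι : Type} [Fintype ι] (f : ι → V), Fintype.card ι < 9 → ∃ v, ∀ i, f i ≠ v := by
    intro ι _ f hι
    by_contra! hsurj
    have := Fintype.card_le_of_surjective f hsurj
    omega
  obtain ⟨v₁⟩ : Nonempty V := Fintype.card_pos_iff.1 (by omega)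
  obtain ⟨a, s, -, -, hs⟩ := exists_cycle h v₁
  have h1 := hcard hs.1
  rw [Fintype.card_fin] at h1
  rcases h1.eq_or_lt with h1 | h1
  · obtain rfl : a = 6 := by omega
    exact Or.inl ⟨s, hs⟩
  obtain ⟨v₂, hv₂⟩ := hout s (by simpa using h1)
  obtain ⟨b, t, rfl, htadj, ht⟩ := exists_cycle h v₂
  have hst := hs.sum ht (hs.disjoint htadj hv₂)
  have hts := ht.sum hs fun i j => (hs.disjoint htadj hv₂ j i).symm
  have h2 := hcard hst.1
  rw [Fintype.card_sum, Fintype.card_fin, Fintype.card_fin] at h2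
  rcases h2.eq_or_lt with h2 | h2
  · obtain ⟨rfl, rfl⟩ | ⟨rfl, rfl⟩ | ⟨rfl, rfl⟩ | ⟨rfl, rfl⟩ : (a = 0 ∧ b = 3) ∨ (a = 1 ∧ b = 2) ∨
        (a = 2 ∧ b = 1) ∨ (a = 3 ∧ b = 0) := by omega
    · exact Or.inr (Or.inl ⟨_, hst⟩)
    · exact Or.inr (Or.inr (Or.inl ⟨_, hst⟩))
    · exact Or.inr (Or.inr (Or.inl ⟨_, hts⟩))
    · exact Or.inr (Or.inl ⟨_, hts⟩)
  obtain ⟨v₃, hv₃⟩ := hout (Sum.elim s t) (by simpa using h2)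
  obtain ⟨c, u, rfl, huadj, hu⟩ := exists_cycle h v₃
  have hstu := hst.sum hu (hst.disjoint huadj hv₃)
  have h3 := hcard hstu.1
  simp only [Fintype.card_sum, Fintype.card_fin] at h3
  obtain ⟨rfl, rfl, rfl⟩ : a = 0 ∧ b = 0 ∧ c = 0 := by omega
  exact Or.inr (Or.inr (Or.inr ⟨_, hstu⟩))

end TwoRegular

/-! ### The four certificates -/

section Certificates

/-- First endpoints of the 27 pairs that are not consecutive on
a single 9-cycle `0, …, 8`. -/
def nineSrc : Fin 27 → Fin 9 :=
  ![0, 0, 0, 0, 0, 0, 1, 1, 1, 1, 1, 1, 2, 2, 2, 2, 2, 3, 3, 3, 3, 4, 4, 4, 5, 5, 6]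

/-- Second endpoints of the pairs whose first endpoints are listed by `nineSrc`. -/
def nineDst : Fin 27 → Fin 9 :=
  ![2, 3, 4, 5, 6, 7, 3, 4, 5, 6, 7, 8, 4, 5, 6, 7, 8, 5, 6, 7, 8, 6, 7, 8, 7, 8, 8]

/-- A rational configuration of the 9 vertices, given row by row. -/
def ninePos : Fin 9 × Fin 4 → ℚ := fun vk =>
  (![![1, 1, 1, 1], ![0, 1, 0, 0], ![1, -1, 0, 0], ![0, 0, 0, 0], ![0, 0, 1, 1],
    ![1, 0, 1, 0], ![1, 0, 0, 0], ![0, 0, 1, 0], ![0, 0, 0, 1]] : Fin 9 → Fin 4 → ℚ)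
    vk.1 vk.2

/-- The equilibrium stress at `ninePos`, unique up to scaling. -/
def nineStress : Fin 27 → ℚ :=
  ![0, -1, 0, -1, 1, 1, 1, 1, 0, 0, -1, -1, 1, -1, 1, 0, -1, 0, 1, 1, 1, -1, -1, -1, -1, 1, 0]

set_option maxHeartbeats 4000000 in
/-- The equilibrium equations at `ninePos` have no nonzero solution vanishing on pair 1. -/
theorem nine_unique (g : Fin 27 → ℚ)
    (h : ∀ v k, ∑ e, inc nineSrc nineDst e v *
      (ninePos (nineSrc e, k) - ninePos (nineDst e, k)) * g e = 0)
    (h0 : g 1 = 0) : g = 0 := by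
  simp [Fin.forall_fin_succ, Fin.sum_univ_succ, inc, nineSrc, nineDst, ninePos] at h
  ext e
  fin_cases e <;> simp <;> grind

set_option maxHeartbeats 4000000 in
/-- No nonzero quadratic form vanishes on all edge directions of `ninePos`. -/
theorem nine_conic (Q : Fin 4 × Fin 4 → ℚ) (hQ : ∀ k l, Q (k, l) = Q (l, k))
    (h : ∀ e, ∑ kl, (ninePos (nineSrc e, kl.1) - ninePos (nineDst e, kl.1)) *
      (ninePos (nineSrc e, kl.2) - ninePos (nineDst e, kl.2)) * Q kl = 0) :
    Q = 0 := by
  simp [Fin.forall_fin_succ, Fintype.sum_prod_type, Fin.sum_univ_succ,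
      nineSrc, nineDst, ninePos] at h hQ
  ext ⟨k, l⟩
  fin_cases k <;> fin_cases l <;> simp <;> grind

/-- The certificate for the complement of
a single 9-cycle `0, …, 8`. -/
def nineCertificate : Certificate nineSrc nineDst where
  pos := ninePos
  base := 1
  stress := nineStress
  rows := ![0, 1, 3, 4]
  cols := ![0, 2, 4, 5]
  unique := nine_unique
  equilibrium := by decide +kernel
  minor := by
    -- the second factor is the inverse of the minor
    have h : (lap nineSrc nineDst nineStress).submatrix ![0, 1, 3, 4] ![0, 2, 4, 5] *
        (!![0, 0, 1, 0; 0, 1, 0, -1; 0, -1, 0, 0; 1, 0, 0, 0] : Matrix (Fin 4) (Fin 4) ℚ) = 1 := by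
      decide +kernel
    exact det_ne_zero_of_right_inverse h
  affine := by
    intro a h
    simp [Fin.forall_fin_succ, Fin.sum_univ_succ, ninePos] at h
    ext k
    rcases k with _ | k
    · simp
      grind
    · fin_cases k <;> simp <;> grind
  conic := nine_conic

/-- First endpoints of the 27 pairs that are not consecutive on
the 3-cycle `0, 1, 2` and the 6-cycle `3, …, 8`. -/
def threeSixSrc : Fin 27 → Fin 9 :=
  ![0, 0, 0, 0, 0, 0, 1, 1, 1, 1, 1, 1, 2, 2, 2, 2, 2, 2, 3, 3, 3, 4, 4, 4, 5, 5, 6]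

/-- Second endpoints of the pairs whose first endpoints are listed by `threeSixSrc`. -/
def threeSixDst : Fin 27 → Fin 9 :=
  ![3, 4, 5, 6, 7, 8, 3, 4, 5, 6, 7, 8, 3, 4, 5, 6, 7, 8, 5, 6, 7, 6, 7, 8, 7, 8, 8]

/-- A rational configuration of the 9 vertices, given row by row. -/
def threeSixPos : Fin 9 × Fin 4 → ℚ := fun vk =>
  (![![0, 1, 0, 0], ![0, -1, 0, 1], ![1, 1, 1, 0], ![0, 0, 0, 0], ![1, 0, 1, 0],
    ![0, 0, 1, 0], ![1, 0, 0, 0], ![1, 0, 0, -1], ![0, 0, 0, 1]] : Fin 9 → Fin 4 → ℚ)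
    vk.1 vk.2

/-- The equilibrium stress at `threeSixPos`, unique up to scaling. -/
def threeSixStress : Fin 27 → ℚ :=
  ![2, 1, -1, 0, -1, -1, 1, 1, -1, -1, 0, 0, -1, 0, 0, -1, 1, 1, 1, 0, 1, 1, -1, -2, 0, 1, 1]

set_option maxHeartbeats 4000000 in
/-- The equilibrium equations at `threeSixPos` have no nonzero solution vanishing on pair 0. -/
theorem threeSix_unique (g : Fin 27 → ℚ)
    (h : ∀ v k, ∑ e, inc threeSixSrc threeSixDst e v *
      (threeSixPos (threeSixSrc e, k) - threeSixPos (threeSixDst e, k)) * g e = 0)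
    (h0 : g 0 = 0) : g = 0 := by
  simp [Fin.forall_fin_succ, Fin.sum_univ_succ, inc, threeSixSrc, threeSixDst, threeSixPos] at h
  ext e
  fin_cases e <;> simp <;> grind

set_option maxHeartbeats 4000000 in
/-- No nonzero quadratic form vanishes on all edge directions of `threeSixPos`. -/
theorem threeSix_conic (Q : Fin 4 × Fin 4 → ℚ) (hQ : ∀ k l, Q (k, l) = Q (l, k))
    (h : ∀ e, ∑ kl, (threeSixPos (threeSixSrc e, kl.1) - threeSixPos (threeSixDst e, kl.1)) *
      (threeSixPos (threeSixSrc e, kl.2) - threeSixPos (threeSixDst e, kl.2)) * Q kl = 0) :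
    Q = 0 := by
  simp [Fin.forall_fin_succ, Fintype.sum_prod_type, Fin.sum_univ_succ,
      threeSixSrc, threeSixDst, threeSixPos] at h hQ
  ext ⟨k, l⟩
  fin_cases k <;> fin_cases l <;> simp <;> grind

/-- The certificate for the complement of
the 3-cycle `0, 1, 2` and the 6-cycle `3, …, 8`. -/
def threeSixCertificate : Certificate threeSixSrc threeSixDst where
  pos := threeSixPos
  base := 0
  stress := threeSixStress
  rows := ![0, 1, 5, 6]
  cols := ![0, 2, 6, 7]
  unique := threeSix_unique
  equilibrium := by decide +kernel
  minor := by
    -- the second factor is the inverse of the minor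
    have h : (lap threeSixSrc threeSixDst threeSixStress).submatrix ![0, 1, 5, 6] ![0, 2, 6, 7] *
        (!![0, 0, 1, 0; 0, 0, 0, 1; 0, 1, 0, 0; 1, 0, 0, 0] : Matrix (Fin 4) (Fin 4) ℚ) = 1 := by
      decide +kernel
    exact det_ne_zero_of_right_inverse h
  affine := by
    intro a h
    simp [Fin.forall_fin_succ, Fin.sum_univ_succ, threeSixPos] at h
    ext k
    rcases k with _ | k
    · simp
      grind
    · fin_cases k <;> simp <;> grind
  conic := threeSix_conic

/-- First endpoints of the 27 pairs that are not consecutive on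
the 4-cycle `0, …, 3` and the 5-cycle `4, …, 8`. -/
def fourFiveSrc : Fin 27 → Fin 9 :=
  ![0, 0, 0, 0, 0, 0, 1, 1, 1, 1, 1, 1, 2, 2, 2, 2, 2, 3, 3, 3, 3, 3, 4, 4, 5, 5, 6]

/-- Second endpoints of the pairs whose first endpoints are listed by `fourFiveSrc`. -/
def fourFiveDst : Fin 27 → Fin 9 :=
  ![2, 4, 5, 6, 7, 8, 3, 4, 5, 6, 7, 8, 4, 5, 6, 7, 8, 4, 5, 6, 7, 8, 6, 7, 7, 8, 8]

/-- A rational configuration of the 9 vertices, given row by row. -/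
def fourFivePos : Fin 9 × Fin 4 → ℚ := fun vk =>
  (![![0, 1, 0, 0], ![1, 1, 0, 0], ![0, 0, 0, 1], ![0, 0, 1, 1], ![0, 0, 1, 0],
    ![1, 1, 1, 0], ![0, 0, 0, 0], ![1, 0, 0, 1], ![1, 0, 0, 0]] : Fin 9 → Fin 4 → ℚ)
    vk.1 vk.2

/-- The equilibrium stress at `fourFivePos`, unique up to scaling. -/
def fourFiveStress : Fin 27 → ℚ :=
  ![-1, 0, 0, 1, 1, -1, 1, 0, -1, -1, -1, 1, -1, 1, 1, -1, 0, 1, -1, -1, 0, 0, 1, 0, 0, 0, 1]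

set_option maxHeartbeats 4000000 in
/-- The equilibrium equations at `fourFivePos` have no nonzero solution vanishing on pair 0. -/
theorem fourFive_unique (g : Fin 27 → ℚ)
    (h : ∀ v k, ∑ e, inc fourFiveSrc fourFiveDst e v *
      (fourFivePos (fourFiveSrc e, k) - fourFivePos (fourFiveDst e, k)) * g e = 0)
    (h0 : g 0 = 0) : g = 0 := by
  simp [Fin.forall_fin_succ, Fin.sum_univ_succ, inc, fourFiveSrc, fourFiveDst, fourFivePos] at h
  ext e
  fin_cases e <;> simp <;> grind

set_option maxHeartbeats 4000000 in
/-- No nonzero quadratic form vanishes on all edge directions of `fourFivePos`. -/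
theorem fourFive_conic (Q : Fin 4 × Fin 4 → ℚ) (hQ : ∀ k l, Q (k, l) = Q (l, k))
    (h : ∀ e, ∑ kl, (fourFivePos (fourFiveSrc e, kl.1) - fourFivePos (fourFiveDst e, kl.1)) *
      (fourFivePos (fourFiveSrc e, kl.2) - fourFivePos (fourFiveDst e, kl.2)) * Q kl = 0) :
    Q = 0 := by
  simp [Fin.forall_fin_succ, Fintype.sum_prod_type, Fin.sum_univ_succ,
      fourFiveSrc, fourFiveDst, fourFivePos] at h hQ
  ext ⟨k, l⟩
  fin_cases k <;> fin_cases l <;> simp <;> grind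

/-- The certificate for the complement of
the 4-cycle `0, …, 3` and the 5-cycle `4, …, 8`. -/
def fourFiveCertificate : Certificate fourFiveSrc fourFiveDst where
  pos := fourFivePos
  base := 0
  stress := fourFiveStress
  rows := ![0, 1, 3, 8]
  cols := ![0, 2, 3, 4]
  unique := fourFive_unique
  equilibrium := by decide +kernel
  minor := by
    -- the second factor is the inverse of the minor
    have h : (lap fourFiveSrc fourFiveDst fourFiveStress).submatrix ![0, 1, 3, 8] ![0, 2, 3, 4] *
        (!![0, 0, 0, 1; 1, 0, 0, 0; 0, -1, 0, 0; 0, 0, -1, 0] : Matrix (Fin 4) (Fin 4) ℚ) = 1 := by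
      decide +kernel
    exact det_ne_zero_of_right_inverse h
  affine := by
    intro a h
    simp [Fin.forall_fin_succ, Fin.sum_univ_succ, fourFivePos] at h
    ext k
    rcases k with _ | k
    · simp
      grind
    · fin_cases k <;> simp <;> grind
  conic := fourFive_conic

/-- First endpoints of the 27 pairs that are not consecutive on
the 3-cycles `0, 1, 2`, `3, 4, 5` and `6, 7, 8`. -/
def trianglesSrc : Fin 27 → Fin 9 :=
  ![0, 0, 0, 0, 0, 0, 1, 1, 1, 1, 1, 1, 2, 2, 2, 2, 2, 2, 3, 3, 3, 4, 4, 4, 5, 5, 5]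

/-- Second endpoints of the pairs whose first endpoints are listed by `trianglesSrc`. -/
def trianglesDst : Fin 27 → Fin 9 :=
  ![3, 4, 5, 6, 7, 8, 3, 4, 5, 6, 7, 8, 3, 4, 5, 6, 7, 8, 6, 7, 8, 6, 7, 8, 6, 7, 8]

/-- A rational configuration of the 9 vertices, given row by row. -/
def trianglesPos : Fin 9 × Fin 4 → ℚ := fun vk =>
  (![![0, 0, 1, 0], ![0, 1, 0, 0], ![1, 0, 0, 0], ![0, 0, 0, 1], ![0, 0, 0, -1],
    ![1, 0, -1, 0], ![1, 1, 0, 0], ![0, 1, 1, -1], ![0, 0, 0, 0]] : Fin 9 → Fin 4 → ℚ)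
    vk.1 vk.2

/-- The equilibrium stress at `trianglesPos`, unique up to scaling. -/
def trianglesStress : Fin 27 → ℚ :=
  ![-1, 0, -1, 1, -1, 2, 0, 1, -1, 1, -1, 0, 1, 1, 0, 0, 0, -2, -1, 1, -1, -1, 0, -1, 1, 0, 2]

set_option maxHeartbeats 4000000 in
/-- The equilibrium equations at `trianglesPos` have no nonzero solution vanishing on pair 0. -/
theorem triangles_unique (g : Fin 27 → ℚ)
    (h : ∀ v k, ∑ e, inc trianglesSrc trianglesDst e v *
      (trianglesPos (trianglesSrc e, k) - trianglesPos (trianglesDst e, k)) * g e = 0)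
    (h0 : g 0 = 0) : g = 0 := by
  simp [Fin.forall_fin_succ, Fin.sum_univ_succ, inc, trianglesSrc, trianglesDst, trianglesPos] at h
  ext e
  fin_cases e <;> simp <;> grind

set_option maxHeartbeats 4000000 in
/-- No nonzero quadratic form vanishes on all edge directions of `trianglesPos`. -/
theorem triangles_conic (Q : Fin 4 × Fin 4 → ℚ) (hQ : ∀ k l, Q (k, l) = Q (l, k))
    (h : ∀ e, ∑ kl, (trianglesPos (trianglesSrc e, kl.1) - trianglesPos (trianglesDst e, kl.1)) *
      (trianglesPos (trianglesSrc e, kl.2) - trianglesPos (trianglesDst e, kl.2)) * Q kl = 0) :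
    Q = 0 := by
  simp [Fin.forall_fin_succ, Fintype.sum_prod_type, Fin.sum_univ_succ,
      trianglesSrc, trianglesDst, trianglesPos] at h hQ
  ext ⟨k, l⟩
  fin_cases k <;> fin_cases l <;> simp <;> grind

/-- The certificate for the complement of
the 3-cycles `0, 1, 2`, `3, 4, 5` and `6, 7, 8`. -/
def trianglesCertificate : Certificate trianglesSrc trianglesDst where
  pos := trianglesPos
  base := 0
  stress := trianglesStress
  rows := ![0, 1, 4, 5]
  cols := ![0, 2, 3, 4]
  unique := triangles_unique
  equilibrium := by decide +kernel
  minor := by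
    -- the second factor is the inverse of the minor
    have h : (lap trianglesSrc trianglesDst trianglesStress).submatrix ![0, 1, 4, 5] ![0, 2, 3, 4] *
        (!![0, 0, 0, 1; 0, 0, -1, 0; 1, 0, 0, 0; 0, -1, 0, 0] : Matrix (Fin 4) (Fin 4) ℚ) = 1 := by
      decide +kernel
    exact det_ne_zero_of_right_inverse h
  affine := by
    intro a h
    simp [Fin.forall_fin_succ, Fin.sum_univ_succ, trianglesPos] at h
    ext k
    rcases k with _ | k
    · simp
      grind
    · fin_cases k <;> simp <;> grind
  conic := triangles_conic

end Certificates

/-! ### Rigidity of the four graphs -/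

section Main

variable {V : Type*} [Fintype V] {G : SimpleGraph V}

/-- If `φ` labels the vertices described by `f` so that no pair `{src e, dst e}` is consecutive under
`r`, then these pairs are edges of `G`, and the certificate applies. -/
theorem rigid_of_certificate {src dst : Fin 27 → Fin 9} (c : Certificate src dst)
    (hV : Fintype.card V = 9) {ι : Type} {f : ι → V} {r : ι → ι} (hf : Describes Gᶜ f r)
    (φ : Fin 9 → ι) (hφ : Function.Injective φ)
    (he : ∀ e, φ (src e) ≠ φ (dst e) ∧ φ (dst e) ≠ r (φ (src e)) ∧ φ (src e) ≠ r (φ (dst e))) :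
    IsGloballyRigidGraph 4 G := by
  intro p hp q hpq
  have hinj : Function.Injective (f ∘ φ) := hf.1.comp hφ
  have hsurj : Function.Surjective (f ∘ φ) :=
    ((Fintype.bijective_iff_injective_and_card _).2 ⟨hinj, by simp [hV]⟩).2
  have hadj : ∀ e, G.Adj (f (φ (src e))) (f (φ (dst e))) := by
    intro e
    obtain ⟨h1, h2, h3⟩ := he e
    by_contra hG
    have h4 : Gᶜ.Adj (f (φ (src e))) (f (φ (dst e))) :=
      (SimpleGraph.compl_adj _ _ _).2 ⟨fun h => h1 (hf.1 h), hG⟩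
    obtain ⟨j, hj, h5⟩ := hf.2 _ _ h4
    rw [hf.1 hj] at h5
    exact h5.elim h2 h3
  have hgen : AlgebraicIndependent ℚ fun vi : Fin 9 × Fin 4 => (p ∘ f ∘ φ) vi.1 vi.2 :=
    hp.comp (fun vi : Fin 9 × Fin 4 => (f (φ vi.1), vi.2)) fun a b hab => by
      simp only [Prod.mk.injEq] at hab
      exact Prod.ext (hinj hab.1) hab.2
  obtain ⟨T, hT, hTq⟩ := c.congruent (q := q ∘ f ∘ φ) hgen fun e => hpq (hadj e)
  refine ⟨T, hT, funext fun v => ?_⟩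
  obtain ⟨i, rfl⟩ := hsurj v
  exact hTq i

theorem compl_ncard_neighborSet (hcard : Fintype.card V = 9)
    (hreg : ∀ v, (G.neighborSet v).ncard = 6) (v : V) : (Gᶜ.neighborSet v).ncard = 2 := by
  rw [SimpleGraph.neighborSet_compl, Set.ncard_sdiff_singleton_of_mem (by simp),
    Set.ncard_compl, hreg, Nat.card_eq_fintype_card, hcard]

end Main

end Proof

/-- Every 6-regular simple graph on 9 vertices is globally 4-rigid. -/
theorem globally_four_rigid_of_six_regular {V : Type*} [Fintype V]
    (G : SimpleGraph V) (hcard : Fintype.card V = 9)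
    (hreg : ∀ v, (G.neighborSet v).ncard = 6) :
    IsGloballyRigidGraph 4 G := by
  rcases exists_describes (compl_ncard_neighborSet hcard hreg) hcard with
    ⟨f, hf⟩ | ⟨f, hf⟩ | ⟨f, hf⟩ | ⟨f, hf⟩
  · exact rigid_of_certificate nineCertificate hcard hf id Function.injective_id (by decide)
  · exact rigid_of_certificate threeSixCertificate hcard hf
      ![.inl 0, .inl 1, .inl 2, .inr 0, .inr 1, .inr 2, .inr 3, .inr 4, .inr 5]
      (by decide) (by decide)
  · exact rigid_of_certificate fourFiveCertificate hcard hf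
      ![.inl 0, .inl 1, .inl 2, .inl 3, .inr 0, .inr 1, .inr 2, .inr 3, .inr 4]
      (by decide) (by decide)
  · exact rigid_of_certificate trianglesCertificate hcard hf
      ![.inl (.inl 0), .inl (.inl 1), .inl (.inl 2), .inl (.inr 0), .inl (.inr 1), .inl (.inr 2),
        .inr 0, .inr 1, .inr 2]
      (by decide) (by decide)
end
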